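/- Let ℳ be a bounded cyclic module over F₂, i.e., a cyclic module with HH_n(ℳ) = 0 for all but finitely many n. Then the following are equivalent: (1) the Hodge-to-de Rham spectral sequence for ℳ collapses at E¹; (2) there is a quasi-isomorphism ℳ ≅ ⊕_{j=0}^{k} 𝒩_j in the homotopy category of cyclic modules, where each 𝒩_j has HH_n(𝒩_j) = 0 for all but one value of n. -/

import Mathlib

noncomputable section
open TensorProduct

namespace LT

/-- A differential graded (dg) algebra over a commutative ring `k`: a chain complex with a
degree `-1` differential together with an associative unital multiplication satisfying the
(signed) Leibniz rule; over `𝔽₂` the signs are invisible. The grading is given by an internal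
direct sum decomposition into submodules. -/
structure DGA (k : Type) [CommRing k] : Type 1 where
  V : Type
  [acg : AddCommGroup V]
  [mod : Module k V]
  gr : ℤ → Submodule k V
  internal : DirectSum.IsInternal gr
  d : V →ₗ[k] V
  d_d : ∀ x, d (d x) = 0
  d_gr : ∀ i, ∀ x ∈ gr i, d x ∈ gr (i - 1)
  mul : V →ₗ[k] V →ₗ[k] V
  mul_assoc' : ∀ x y z, mul (mul x y) z = mul x (mul y z)
  one : V
  one_gr : one ∈ gr 0
  one_mul' : ∀ x, mul one x = x
  mul_one' : ∀ x, mul x one = x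
  mul_gr : ∀ i j, ∀ x ∈ gr i, ∀ y ∈ gr j, mul x y ∈ gr (i + j)
  leibniz : ∀ i, ∀ x ∈ gr i, ∀ y, d (mul x y) = mul (d x) y + (Int.negOnePow i : ℤ) • mul x (d y)

attribute [instance] DGA.acg
attribute [instance 2000] DGA.mod

variable {k : Type} [CommRing k]

/-- A dg `(A,A)`-bimodule over a dg algebra `A`. -/
structure DGBimod (A : DGA k) : Type 1 where
  V : Type
  [acg : AddCommGroup V]
  [mod : Module k V]
  gr : ℤ → Submodule k V
  internal : DirectSum.IsInternal gr
  d : V →ₗ[k] V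
  d_d : ∀ x, d (d x) = 0
  d_gr : ∀ i, ∀ x ∈ gr i, d x ∈ gr (i - 1)
  actL : A.V →ₗ[k] V →ₗ[k] V
  actR : V →ₗ[k] A.V →ₗ[k] V
  actL_one : ∀ m, actL A.one m = m
  actR_one : ∀ m, actR m A.one = m
  actL_mul : ∀ a b m, actL (A.mul a b) m = actL a (actL b m)
  actR_mul : ∀ m a b, actR (actR m a) b = actR m (A.mul a b)
  actLR : ∀ a m b, actR (actL a m) b = actL a (actR m b)
  actL_gr : ∀ i j, ∀ a ∈ A.gr i, ∀ m ∈ gr j, actL a m ∈ gr (i + j)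
  actR_gr : ∀ i j, ∀ m ∈ gr i, ∀ a ∈ A.gr j, actR m a ∈ gr (i + j)
  leibnizL : ∀ i, ∀ a ∈ A.gr i, ∀ m, d (actL a m) = actL (A.d a) m + (Int.negOnePow i : ℤ) • actL a (d m)
  leibnizR : ∀ j, ∀ m ∈ gr j, ∀ a, d (actR m a) = actR (d m) a + (Int.negOnePow j : ℤ) • actR m (A.d a)

attribute [instance] DGBimod.acg
attribute [instance 2000] DGBimod.mod

/-- The diagonal bimodule: `A` viewed as a bimodule over itself. -/
def DGA.diag (A : DGA k) : DGBimod A where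
  V := A.V
  gr := A.gr
  internal := A.internal
  d := A.d
  d_d := A.d_d
  d_gr := A.d_gr
  actL := A.mul
  actR := A.mul
  actL_one := A.one_mul'
  actR_one := A.mul_one'
  actL_mul := fun a b m => A.mul_assoc' a b m
  actR_mul := fun m a b => A.mul_assoc' m a b
  actLR := fun a m b => A.mul_assoc' a m b
  actL_gr := A.mul_gr
  actR_gr := A.mul_gr
  leibnizL := A.leibniz
  leibnizR := A.leibniz

variable {A : DGA k}

/-- A homomorphism of dg bimodules of degree `s`: a linear map raising degree by `s`,
commuting with the differentials and the two actions. -/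
def IsBHom (M N : DGBimod A) (s : ℤ) (f : M.V →ₗ[k] N.V) : Prop :=
  (∀ i, ∀ x ∈ M.gr i, f x ∈ N.gr (i + s)) ∧
  (∀ x, f (M.d x) = N.d (f x)) ∧
  (∀ a m, f (M.actL a m) = N.actL a (f m)) ∧
  (∀ m a, f (M.actR m a) = N.actR (f m) a)

/-- Graded maps of degree `s` compatible with the bimodule actions (no compatibility with the
differential required); these are used as homotopies. -/
def grHomSub (M N : DGBimod A) (s : ℤ) : Submodule k (M.V →ₗ[k] N.V) where
  carrier := {f | (∀ i, ∀ x ∈ M.gr i, f x ∈ N.gr (i + s)) ∧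
    (∀ a m, f (M.actL a m) = N.actL a (f m)) ∧
    (∀ m a, f (M.actR m a) = N.actR (f m) a)}
  add_mem' := by
    rintro f g ⟨hf1, hf2, hf3⟩ ⟨hg1, hg2, hg3⟩
    refine ⟨fun i x hx => ?_, fun a m => ?_, fun m a => ?_⟩ <;>
      simp [LinearMap.add_apply, hf2, hg2, hf3, hg3]
    exact Submodule.add_mem _ (hf1 i x hx) (hg1 i x hx)
  zero_mem' := by
    refine ⟨fun i x hx => ?_, fun a m => ?_, fun m a => ?_⟩ <;> simp
  smul_mem' := by
    rintro c f ⟨hf1, hf2, hf3⟩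
    refine ⟨fun i x hx => ?_, fun a m => ?_, fun m a => ?_⟩ <;>
      simp [LinearMap.smul_apply, hf2, hf3]
    exact Submodule.smul_mem _ _ (hf1 i x hx)

/-- Bimodule chain maps of degree `s`, as a submodule of all linear maps. -/
def bcmSub (M N : DGBimod A) (s : ℤ) : Submodule k (M.V →ₗ[k] N.V) where
  carrier := {f | IsBHom M N s f}
  add_mem' := by
    rintro f g ⟨hf1, hf0, hf2, hf3⟩ ⟨hg1, hg0, hg2, hg3⟩
    refine ⟨fun i x hx => ?_, fun x => ?_, fun a m => ?_, fun m a => ?_⟩ <;>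
      simp [LinearMap.add_apply, hf0, hg0, hf2, hg2, hf3, hg3]
    exact Submodule.add_mem _ (hf1 i x hx) (hg1 i x hx)
  zero_mem' := by
    refine ⟨fun i x hx => ?_, fun x => ?_, fun a m => ?_, fun m a => ?_⟩ <;> simp
  smul_mem' := by
    rintro c f ⟨hf1, hf0, hf2, hf3⟩
    refine ⟨fun i x hx => ?_, fun x => ?_, fun a m => ?_, fun m a => ?_⟩ <;>
      simp [LinearMap.smul_apply, hf0, hf2, hf3]
    exact Submodule.smul_mem _ _ (hf1 i x hx)

/-- The nullhomotopic degree-`s` maps `d ∘ h + h ∘ d` for `h` a degree `s+1` bimodule map. -/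
def nullHtpSub (M N : DGBimod A) (s : ℤ) : Submodule k (M.V →ₗ[k] N.V) :=
  Submodule.map
    ((LinearMap.llcomp k M.V N.V N.V N.d) + (LinearMap.lcomp k N.V M.d))
    (grHomSub M N (s + 1))

/-- Homotopy classes of degree-`s` bimodule chain maps `M → N`; for `M` a cell retract this
computes morphisms `Σ^s M → N` in the derived category of dg bimodules. -/
def HtpyHom (M N : DGBimod A) (s : ℤ) :=
  bcmSub M N s ⧸ Submodule.comap (bcmSub M N s).subtype (nullHtpSub M N s)

instance (M N : DGBimod A) (s : ℤ) : AddCommGroup (HtpyHom M N s) :=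
  inferInstanceAs (AddCommGroup (_ ⧸ _))
instance (M N : DGBimod A) (s : ℤ) : Module k (HtpyHom M N s) :=
  inferInstanceAs (Module k (_ ⧸ _))


/-- Homology in degree `n` of a graded module with "relations": the degree-`n` part of the
homology of the quotient complex `(T/N, d)` where the grading of `T/N` is induced by `gr`.
Taking `N = ⊥` gives ordinary graded homology. -/
def Hgr (T : Type) [AddCommGroup T] [Module k T] (gr : ℤ → Submodule k T)
    (N : Submodule k T) (d : T →ₗ[k] T) (n : ℤ) : Type :=
  ↥((gr n ⊔ N) ⊓ Submodule.comap d N) ⧸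
    Submodule.comap ((gr n ⊔ N) ⊓ Submodule.comap d N).subtype
      (Submodule.map d (gr (n + 1) ⊔ N) ⊔ N)

instance (T : Type) [AddCommGroup T] [Module k T] (gr : ℤ → Submodule k T)
    (N : Submodule k T) (d : T →ₗ[k] T) (n : ℤ) : AddCommGroup (Hgr T gr N d n) :=
  inferInstanceAs (AddCommGroup (_ ⧸ _))
instance (T : Type) [AddCommGroup T] [Module k T] (gr : ℤ → Submodule k T)
    (N : Submodule k T) (d : T →ₗ[k] T) (n : ℤ) : Module k (Hgr T gr N d n) :=
  inferInstanceAs (Module k (_ ⧸ _))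

/-- `f` induces an isomorphism on (graded) homology, with a degree shift `s`; stated
elementarily: the induced map on homology classes is surjective and injective. -/
def IsQIsoDeg (T S : Type) [AddCommGroup T] [Module k T] [AddCommGroup S] [Module k S]
    (grT : ℤ → Submodule k T) (grS : ℤ → Submodule k S)
    (dT : T →ₗ[k] T) (dS : S →ₗ[k] S) (s : ℤ) (f : T →ₗ[k] S) : Prop :=
  ∀ n : ℤ,
    (∀ y ∈ grS (n + s), dS y = 0 →
      ∃ x ∈ grT n, dT x = 0 ∧ f x - y ∈ Submodule.map dS (grS (n + s + 1))) ∧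
    (∀ x ∈ grT n, dT x = 0 → f x ∈ Submodule.map dS (grS (n + s + 1)) →
      x ∈ Submodule.map dT (grT (n + 1)))

variable {A : DGA k}

/-- The bilinear "sandwich" map `(a, b) ↦ a · m · b` for a fixed element `m` of a bimodule. -/
def sandwich (M : DGBimod A) (m : M.V) : A.V →ₗ[k] A.V →ₗ[k] M.V :=
  LinearMap.mk₂ k (fun a b => M.actR (M.actL a m) b)
    (fun a₁ a₂ b => by simp)
    (fun c a b => by simp)
    (fun a b₁ b₂ => by simp)
    (fun c a b => by simp)

/-- The bimodule map `A ⊗ A → M`, `a ⊗ b ↦ a · m · b`. -/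
def sandwichT (M : DGBimod A) (m : M.V) : (A.V ⊗[k] A.V) →ₗ[k] M.V :=
  TensorProduct.lift (sandwich M m)

/-- `S'/S` is a free dg bimodule: there is a family of "generators" `g i` of degrees `deg i`,
closed cycles modulo `S`, which generate `S'` freely over `A ⊗ A` modulo `S`. -/
def IsFreeStep (M : DGBimod A) (S S' : Submodule k M.V) : Prop :=
  ∃ (I : Type) (g : I → M.V) (deg : I → ℤ),
    (∀ i, g i ∈ S') ∧ (∀ i, M.d (g i) ∈ S) ∧
    (∀ i p q, ∀ a ∈ A.gr p, ∀ b ∈ A.gr q, M.actR (M.actL a (g i)) b ∈ M.gr (p + q + deg i)) ∧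
    S' ≤ S ⊔ (⨆ i, LinearMap.range (sandwichT M (g i))) ∧
    (∀ (u : Finset I) (c : I → A.V ⊗[k] A.V),
      (∑ i ∈ u, sandwichT M (g i) (c i)) ∈ S → ∀ i ∈ u, c i = 0)

/-- As `IsFreeStep`, with a finite generating family. -/
def IsFreeStepFin (M : DGBimod A) (S S' : Submodule k M.V) : Prop :=
  ∃ (I : Type) (_ : Finite I) (g : I → M.V) (deg : I → ℤ),
    (∀ i, g i ∈ S') ∧ (∀ i, M.d (g i) ∈ S) ∧
    (∀ i p q, ∀ a ∈ A.gr p, ∀ b ∈ A.gr q, M.actR (M.actL a (g i)) b ∈ M.gr (p + q + deg i)) ∧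
    S' ≤ S ⊔ (⨆ i, LinearMap.range (sandwichT M (g i))) ∧
    (∀ (u : Finset I) (c : I → A.V ⊗[k] A.V),
      (∑ i ∈ u, sandwichT M (g i) (c i)) ∈ S → ∀ i ∈ u, c i = 0)

/-- A filtration exhibiting `M` as a cell bimodule. -/
def IsCellFiltration (M : DGBimod A) (Fil : ℕ → Submodule k M.V) : Prop :=
  Fil 0 = ⊥ ∧ Monotone Fil ∧ (⨆ n, Fil n) = ⊤ ∧
  (∀ n, ∀ x ∈ Fil n, M.d x ∈ Fil n) ∧
  (∀ n a, ∀ x ∈ Fil n, M.actL a x ∈ Fil n) ∧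
  (∀ n a, ∀ x ∈ Fil n, M.actR x a ∈ Fil n) ∧
  (∀ n, IsFreeStep M (Fil n) (Fil (n + 1)))

/-- A cell bimodule: admits a filtration with free subquotients. -/
def IsCellBimod (M : DGBimod A) : Prop := ∃ Fil, IsCellFiltration M Fil

/-- A finite cell bimodule: a finite filtration with finite-rank free subquotients. -/
def IsFiniteCellBimod (M : DGBimod A) : Prop :=
  ∃ Fil, (Fil 0 = ⊥ ∧ Monotone Fil ∧ (⨆ n, Fil n) = ⊤ ∧
    (∀ n, ∀ x ∈ Fil n, M.d x ∈ Fil n) ∧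
    (∀ n a, ∀ x ∈ Fil n, M.actL a x ∈ Fil n) ∧
    (∀ n a, ∀ x ∈ Fil n, M.actR x a ∈ Fil n) ∧
    (∀ n, IsFreeStepFin M (Fil n) (Fil (n + 1)))) ∧ (∃ n₀, Fil n₀ = ⊤)

/-- A (finite) cell retract: a subcomplex of a (finite) cell bimodule whose inclusion admits
a bimodule retraction. -/
def IsCellRetract (P : DGBimod A) : Prop :=
  ∃ (C : DGBimod A), IsCellBimod C ∧
    ∃ (ι : P.V →ₗ[k] C.V) (r : C.V →ₗ[k] P.V),
      IsBHom P C 0 ι ∧ IsBHom C P 0 r ∧ Function.Injective ι ∧ r.comp ι = LinearMap.id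

def IsFiniteCellRetract (P : DGBimod A) : Prop :=
  ∃ (C : DGBimod A), IsFiniteCellBimod C ∧
    ∃ (ι : P.V →ₗ[k] C.V) (r : C.V →ₗ[k] P.V),
      IsBHom P C 0 ι ∧ IsBHom C P 0 r ∧ Function.Injective ι ∧ r.comp ι = LinearMap.id

/-- `ρ : R → M` is a resolution: a quasi-isomorphism of dg bimodules from a cell retract. -/
def IsResolution (R M : DGBimod A) (ρ : R.V →ₗ[k] M.V) : Prop :=
  IsCellRetract R ∧ IsBHom R M 0 ρ ∧ IsQIsoDeg R.V M.V R.gr M.gr R.d M.d 0 ρ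

/-- A bimodule is perfect if it admits a resolution by a finite cell retract. -/
def IsPerfect (M : DGBimod A) : Prop :=
  ∃ (R : DGBimod A) (ρ : R.V →ₗ[k] M.V),
    IsFiniteCellRetract R ∧ IsBHom R M 0 ρ ∧ IsQIsoDeg R.V M.V R.gr M.gr R.d M.d 0 ρ

/-- `A` is homologically smooth: perfect as a bimodule over itself. -/
def HomSmooth (A : DGA k) : Prop := IsPerfect A.diag

/-- The homology of the dg algebra `A` in degree `n`. -/
abbrev AlgH (A : DGA k) (n : ℤ) := Hgr A.V A.gr ⊥ A.d n

/-- `A` is homologically proper: its total homology is finitely generated. -/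
def HomProper (A : DGA k) : Prop :=
  (∀ n, Module.Finite k (AlgH A n)) ∧ (Set.Finite {n : ℤ | Nontrivial (AlgH A n)})

/-- A dg bimodule is bounded if it is supported in finitely many gradings. -/
def BoundedBimod (M : DGBimod A) : Prop := ∃ u : Finset ℤ, ∀ i ∉ u, M.gr i = ⊥

/-! ### Bicomplexes and the spectral sequences of their two filtrations -/

/-- A bicomplex of `k`-modules "with relations", presented as one ambient module with a
bigrading by submodules, a horizontal differential `dh` (of bidegree `(-1,0)`), a vertical
differential `dv` (of bidegree `(0,-1)`) and a submodule `N` of relations (so that the actual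
bicomplex is the quotient by `N`; take `N = ⊥` for an honest bicomplex). -/
structure RelBicx (k : Type) [CommRing k] : Type 1 where
  T : Type
  [acg : AddCommGroup T]
  [mod : Module k T]
  gr : ℤ → ℤ → Submodule k T
  N : Submodule k T
  dh : T →ₗ[k] T
  dv : T →ₗ[k] T

attribute [instance] RelBicx.acg RelBicx.mod

namespace RelBicx

variable {k : Type} [CommRing k] (B : RelBicx k)

/-- The total differential. -/
def D : B.T →ₗ[k] B.T := B.dh + B.dv

/-- The column filtration (by the first index `p`) of the total complex, in total degree `n`. -/
def Fcol (p n : ℤ) : Submodule k B.T := ⨆ (i : ℤ) (_ : i ≤ p), B.gr i (n - i)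

/-- The row filtration (by the second index `q`) of the total complex, in total degree `n`. -/
def Frow (q n : ℤ) : Submodule k B.T := ⨆ (j : ℤ) (_ : j ≤ q), B.gr (n - j) j

/-- Approximate cycles for the spectral sequence of the filtration `F`:
elements of filtration `p` (mod `N`) whose total differential drops filtration by `r`. -/
def Zpage (F : ℤ → ℤ → Submodule k B.T) (r p n : ℤ) : Submodule k B.T :=
  (F p n ⊔ B.N) ⊓ Submodule.comap B.D (F (p - r) (n - 1) ⊔ B.N)

/-- The boundaries subobject for the `r`-th page at filtration `p`, total degree `n`. -/
def Bpage (F : ℤ → ℤ → Submodule k B.T) (r p n : ℤ) : Submodule k B.T :=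
  Submodule.map B.D (B.Zpage F (r - 1) (p + r - 1) (n + 1)) ⊔ B.Zpage F (r - 1) (p - 1) n ⊔ B.N

/-- The `r`-th page of the spectral sequence of the filtration `F`, at filtration degree `p`
and total degree `n` (the classical subquotient description `Z^r/B^r`). -/
def Epage (F : ℤ → ℤ → Submodule k B.T) (r p n : ℤ) : Type :=
  ↥(B.Zpage F r p n) ⧸
    Submodule.comap (B.Zpage F r p n).subtype (B.Bpage F r p n)

instance (F : ℤ → ℤ → Submodule k B.T) (r p n : ℤ) : AddCommGroup (B.Epage F r p n) :=
  inferInstanceAs (AddCommGroup (_ ⧸ _))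
instance (F : ℤ → ℤ → Submodule k B.T) (r p n : ℤ) : Module k (B.Epage F r p n) :=
  inferInstanceAs (Module k (_ ⧸ _))

/-- The spectral sequence `ᵛʰE` (filtration by columns; one first takes homology with respect
to the vertical differential). Indexing: `vhE r p q` is `ᵛʰE^r_{p,q}`. -/
def vhE (r p q : ℤ) : Type := B.Epage B.Fcol r p (p + q)

/-- The spectral sequence `ʰᵛE` (filtration by rows; one first takes homology with respect to
the horizontal differential), in the transposed indexing of Lipshitz–Treumann:
`hvE r p q` is `ʰᵛE^r_{p,q}`, whose filtration index is the row `q`. -/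
def hvE (r p q : ℤ) : Type := B.Epage B.Frow r q (p + q)

instance (r p q : ℤ) : AddCommGroup (B.vhE r p q) := inferInstanceAs (AddCommGroup (Epage _ _ _ _ _))
instance (r p q : ℤ) : Module k (B.vhE r p q) := inferInstanceAs (Module k (Epage _ _ _ _ _))
instance (r p q : ℤ) : AddCommGroup (B.hvE r p q) := inferInstanceAs (AddCommGroup (Epage _ _ _ _ _))
instance (r p q : ℤ) : Module k (B.hvE r p q) := inferInstanceAs (Module k (Epage _ _ _ _ _))

/-- Vanishing of the differential leaving the `r`-th page at position `(p, n)`: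
the total differential of any approximate cycle is, up to boundaries of earlier pages and
relations, an approximate cycle of deeper filtration. -/
def zeroDiff (F : ℤ → ℤ → Submodule k B.T) (r p n : ℤ) : Prop :=
  Submodule.map B.D (B.Zpage F r p n) ≤
    Submodule.map B.D (B.Zpage F (r - 1) (p - 1) n) ⊔ B.Zpage F (r - 1) (p - r - 1) (n - 1) ⊔ B.N

/-- The spectral sequence of the filtration `F` collapses at the `r₀`-th page. -/
def collapsesAt (F : ℤ → ℤ → Submodule k B.T) (r₀ : ℤ) : Prop :=
  ∀ r : ℤ, r₀ ≤ r → ∀ p n : ℤ, B.zeroDiff F r p n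

/-- The part of total degree `n` of the bicomplex. -/
def totGr (n : ℤ) : Submodule k B.T := ⨆ p : ℤ, B.gr p (n - p)

/-- The degree-`n` homology of the total complex (of the quotient by `N`). -/
def Htot (n : ℤ) : Type :=
  ↥((B.totGr n ⊔ B.N) ⊓ Submodule.comap B.D B.N) ⧸
    Submodule.comap ((B.totGr n ⊔ B.N) ⊓ Submodule.comap B.D B.N).subtype
      (Submodule.map B.D (B.totGr (n + 1) ⊔ B.N) ⊔ B.N)

instance (n : ℤ) : AddCommGroup (B.Htot n) := inferInstanceAs (AddCommGroup (_ ⧸ _))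
instance (n : ℤ) : Module k (B.Htot n) := inferInstanceAs (Module k (_ ⧸ _))

/-- The graded piece `F_p H_n / F_{p-1} H_n` of the filtration induced by `F` on the homology
of the total complex. -/
def grHtot (F : ℤ → ℤ → Submodule k B.T) (p n : ℤ) : Type :=
  ↥((F p n ⊔ B.N) ⊓ Submodule.comap B.D B.N) ⧸
    Submodule.comap ((F p n ⊔ B.N) ⊓ Submodule.comap B.D B.N).subtype
      (((F (p - 1) n ⊔ B.N) ⊓ Submodule.comap B.D B.N) ⊔
        Submodule.map B.D (B.totGr (n + 1) ⊔ B.N) ⊔ B.N)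

instance (F : ℤ → ℤ → Submodule k B.T) (p n : ℤ) : AddCommGroup (B.grHtot F p n) :=
  inferInstanceAs (AddCommGroup (_ ⧸ _))
instance (F : ℤ → ℤ → Submodule k B.T) (p n : ℤ) : Module k (B.grHtot F p n) :=
  inferInstanceAs (Module k (_ ⧸ _))

/-- The spectral sequence of the filtration `F` converges to the homology of the total
complex: for every position the pages eventually stabilize and agree with the associated
graded of the induced filtration on the homology of the total complex. -/
def convergesTo (F : ℤ → ℤ → Submodule k B.T) : Prop :=
  ∀ p n : ℤ, ∃ r₀ : ℤ, ∀ r : ℤ, r₀ ≤ r →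
    Nonempty (B.Epage F r p n ≃ₗ[k] B.grHtot F p n)

end RelBicx
/-! ### Hochschild chains, the involution `τ`, and the Hochschild–Tate bicomplex (over `𝔽₂`) -/

section Hochschild

variable {A : DGA (ZMod 2)} (R M : DGBimod A)

/-- The ambient space `R ⊗ M` of the Hochschild chain complex `HC(A, M)` (with respect to the
resolution `R` of the diagonal bimodule): `HC(A,M) = (R ⊗ M)/rel2`. -/
abbrev T2 := R.V ⊗[ZMod 2] M.V

/-- The differential `∂(r ⊗ m) = ∂r ⊗ m + r ⊗ ∂m` (char. 2). -/
def d2 : T2 R M →ₗ[ZMod 2] T2 R M :=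
  TensorProduct.map R.d LinearMap.id + TensorProduct.map LinearMap.id M.d

/-- The grading of `R ⊗ M`. -/
def gr2 (n : ℤ) : Submodule (ZMod 2) (T2 R M) :=
  Submodule.span (ZMod 2)
    {z | ∃ i j, ∃ r ∈ R.gr i, ∃ m ∈ M.gr j, i + j = n ∧ z = r ⊗ₜ[ZMod 2] m}

/-- The Hochschild relations `ra ⊗ m ∼ r ⊗ am` and `ar ⊗ m ∼ r ⊗ ma` (char. 2). -/
def rel2 : Submodule (ZMod 2) (T2 R M) :=
  Submodule.span (ZMod 2)
    ({z | ∃ r a m, z = (R.actR r a) ⊗ₜ[ZMod 2] m + r ⊗ₜ[ZMod 2] (M.actL a m)} ∪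
     {z | ∃ r a m, z = (R.actL a r) ⊗ₜ[ZMod 2] m + r ⊗ₜ[ZMod 2] (M.actR m a)})

/-- The underlying space of the Hochschild chain complex `HC(A, M)`. -/
abbrev HCQ := T2 R M ⧸ rel2 R M

/-- The Hochschild homology `HH_n(A, M)` (computed from the chosen resolution `R → A`). -/
abbrev HH (n : ℤ) := Hgr (T2 R M) (gr2 R M) (rel2 R M) (d2 R M) n

/-- The ambient space `R ⊗ (M ⊗ (R ⊗ M))` of the Hochschild chain complex of the derived
tensor product: `HC(A, M ⊗̃_A M) = (R ⊗ (M ⊠ R ⊠ M))/∼ = (R ⊗ M ⊗ R ⊗ M)/rel4`. -/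
abbrev T4 := R.V ⊗[ZMod 2] (M.V ⊗[ZMod 2] (R.V ⊗[ZMod 2] M.V))

/-- The differential of `R ⊗ M ⊗ R ⊗ M` (char. 2; no signs). -/
def d4 : T4 R M →ₗ[ZMod 2] T4 R M :=
  TensorProduct.map R.d LinearMap.id +
  TensorProduct.map LinearMap.id (TensorProduct.map M.d LinearMap.id +
    TensorProduct.map LinearMap.id (TensorProduct.map R.d LinearMap.id +
      TensorProduct.map LinearMap.id M.d))

/-- The grading of `R ⊗ M ⊗ R ⊗ M`. -/
def gr4 (n : ℤ) : Submodule (ZMod 2) (T4 R M) :=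
  Submodule.span (ZMod 2)
    {z | ∃ i₁ j₁ i₂ j₂, ∃ r ∈ R.gr i₁, ∃ m ∈ M.gr j₁, ∃ r' ∈ R.gr i₂, ∃ m' ∈ M.gr j₂,
      i₁ + j₁ + i₂ + j₂ = n ∧ z = r ⊗ₜ[ZMod 2] (m ⊗ₜ[ZMod 2] (r' ⊗ₜ[ZMod 2] m'))}

/-- The combined relations presenting `HC(A, M ⊗̃_A M)` as a quotient of `R ⊗ M ⊗ R ⊗ M`:
the two relations of the naive tensor products `M ⊠_A R ⊠_A M` and the two outer Hochschild
relations (char. 2). -/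
def rel4 : Submodule (ZMod 2) (T4 R M) :=
  Submodule.span (ZMod 2)
    ({z | ∃ r a m r' m', z = (R.actR r a) ⊗ₜ[ZMod 2] (m ⊗ₜ[ZMod 2] (r' ⊗ₜ[ZMod 2] m')) +
        r ⊗ₜ[ZMod 2] ((M.actL a m) ⊗ₜ[ZMod 2] (r' ⊗ₜ[ZMod 2] m'))} ∪
     {z | ∃ r a m r' m', z = (R.actL a r) ⊗ₜ[ZMod 2] (m ⊗ₜ[ZMod 2] (r' ⊗ₜ[ZMod 2] m')) +
        r ⊗ₜ[ZMod 2] (m ⊗ₜ[ZMod 2] (r' ⊗ₜ[ZMod 2] (M.actR m' a)))} ∪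
     {z | ∃ r a m r' m', z = r ⊗ₜ[ZMod 2] ((M.actR m a) ⊗ₜ[ZMod 2] (r' ⊗ₜ[ZMod 2] m')) +
        r ⊗ₜ[ZMod 2] (m ⊗ₜ[ZMod 2] ((R.actL a r') ⊗ₜ[ZMod 2] m'))} ∪
     {z | ∃ r a m r' m', z = r ⊗ₜ[ZMod 2] (m ⊗ₜ[ZMod 2] ((R.actR r' a) ⊗ₜ[ZMod 2] m')) +
        r ⊗ₜ[ZMod 2] (m ⊗ₜ[ZMod 2] (r' ⊗ₜ[ZMod 2] (M.actL a m')))})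


instance {A : DGA (ZMod 2)} (R M : DGBimod A) :
    HasQuotient (T4 R M) (Submodule (ZMod 2) (T4 R M)) := Submodule.hasQuotient

/-- The underlying space of the Hochschild chain complex `HC(A, M ⊗̃_A M)`. -/
abbrev HCQ4 := T4 R M ⧸ rel4 R M

/-- The Hochschild homology `HH_n(A, M ⊗̃_A M)` of the derived tensor square. -/
abbrev HH4 (n : ℤ) := Hgr (T4 R M) (gr4 R M) (rel4 R M) (d4 R M) n

/-- The involution `τ` of `R ⊗ (M ⊗ (R ⊗ M))` exchanging the two halves:
`r ⊗ (m ⊗ (r' ⊗ m')) ↦ r' ⊗ (m' ⊗ (r ⊗ m))`. -/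
def tau4 : T4 R M →ₗ[ZMod 2] T4 R M :=
  ((TensorProduct.assoc (ZMod 2) R.V M.V (R.V ⊗[ZMod 2] M.V)).toLinearMap).comp
    (((TensorProduct.comm (ZMod 2) (R.V ⊗[ZMod 2] M.V) (R.V ⊗[ZMod 2] M.V)).toLinearMap).comp
      ((TensorProduct.assoc (ZMod 2) R.V M.V (R.V ⊗[ZMod 2] M.V)).symm.toLinearMap))

/-- The Hochschild–Tate bicomplex `HC^{Tate}(A, M ⊗̃_A M)`: the `ℤ`-periodic bicomplex whose
columns are the Hochschild complex of `M ⊗̃_A M` and whose horizontal differential is `1 + τ`. -/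
def TateBicx : RelBicx (ZMod 2) where
  T := ℤ →₀ T4 R M
  gr := fun p q => Submodule.map (Finsupp.lsingle p) (gr4 R M q)
  N := ⨅ p : ℤ, Submodule.comap (Finsupp.lapply p) (rel4 R M)
  dv := Finsupp.mapRange.linearMap (d4 R M)
  dh := (Finsupp.lmapDomain (T4 R M) (ZMod 2) (fun p => p - 1)).comp
    (Finsupp.mapRange.linearMap (LinearMap.id + tau4 R M))


/-- An element of the Hochschild–Tate bicomplex concentrated in column `p`. -/
def tateSingle (p : ℤ) (x : T4 R M) : (TateBicx R M).T := Finsupp.single p x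

/-- A dg bimodule `M` is `π`-formal (with respect to the resolution `R` of the diagonal
bimodule) if the spectral sequence `ʰᵛE` of the Hochschild–Tate bicomplex of `M ⊗̃_A M`
collapses at the `E³`-page; equivalently, all the induced operations
`d^{2i} : HH_k(A,M) → HH_{k-i}(A,M)`, `i ≥ 2`, vanish. -/
def PiFormalBimod : Prop := (TateBicx R M).collapsesAt (TateBicx R M).Frow 3

/-- A dg algebra is `π`-formal if every dg bimodule over it is `π`-formal. -/
def PiFormalAlg (R : DGBimod A) : Prop := ∀ M : DGBimod A, PiFormalBimod R M

end Hochschild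

/-! ### Cyclic modules over `𝔽₂` -/

/-- A cyclic module over `𝔽₂` (a functor on Connes's cyclic category `ΔC`): vector spaces
`X n`, face maps `d n i : X (n+1) → X n` (`0 ≤ i ≤ n+1`), degeneracies
`s n i : X n → X (n+1)` (`0 ≤ i ≤ n`), and cyclic operators `t n` generating a
`ℤ/(n+1)`-action, subject to the cyclic identities. (Face and degeneracy maps for indices out
of range are unconstrained junk data.) -/
structure CycMod : Type 1 where
  X : ℕ → Type
  [acg : ∀ n, AddCommGroup (X n)]
  [mod : ∀ n, Module (ZMod 2) (X n)]
  d : ∀ n : ℕ, ℕ → (X (n + 1) →ₗ[ZMod 2] X n)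
  s : ∀ n : ℕ, ℕ → (X n →ₗ[ZMod 2] X (n + 1))
  t : ∀ n : ℕ, X n →ₗ[ZMod 2] X n
  dd : ∀ n i j, i < j → j ≤ n + 2 →
    (d n i).comp (d (n + 1) j) = (d n (j - 1)).comp (d (n + 1) i)
  ss : ∀ n i j, i ≤ j → j ≤ n →
    (s (n + 1) i).comp (s n j) = (s (n + 1) (j + 1)).comp (s n i)
  ds_lt : ∀ n i j, i < j → j ≤ n + 1 →
    (d (n + 1) i).comp (s (n + 1) j) = (s n (j - 1)).comp (d n i)
  ds_eq : ∀ n j, j ≤ n →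
    (d n j).comp (s n j) = LinearMap.id ∧ (d n (j + 1)).comp (s n j) = LinearMap.id
  ds_gt : ∀ n i j, j + 1 < i → i ≤ n + 2 →
    (d (n + 1) i).comp (s (n + 1) j) = (s n j).comp (d n (i - 1))
  t_ord : ∀ n, (t n) ^ (n + 1) = LinearMap.id
  dt : ∀ n i, 1 ≤ i → i ≤ n + 1 → (d n i).comp (t (n + 1)) = (t n).comp (d n (i - 1))
  d0t : ∀ n, (d n 0).comp (t (n + 1)) = d n (n + 1)
  st : ∀ n i, 1 ≤ i → i ≤ n → (s n i).comp (t n) = (t (n + 1)).comp (s n (i - 1))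
  s0t : ∀ n, (s n 0).comp (t n) = ((t (n + 1)).comp (t (n + 1))).comp (s n n)

attribute [instance] CycMod.acg CycMod.mod

namespace CycMod

variable (C : CycMod)

/-- The Hochschild differential `∂ = ∑_{i=0}^{n+1} d_i : X_{n+1} → X_n`. -/
def bd (n : ℕ) : C.X (n + 1) →ₗ[ZMod 2] C.X n := ∑ i ∈ Finset.range (n + 2), C.d n i

/-- The bar differential `b' = ∑_{i=0}^{n} d_i : X_{n+1} → X_n`. -/
def bd' (n : ℕ) : C.X (n + 1) →ₗ[ZMod 2] C.X n := ∑ i ∈ Finset.range (n + 1), C.d n i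

/-- Hochschild cycles. -/
def cyc : ∀ n : ℕ, Submodule (ZMod 2) (C.X n)
  | 0 => ⊤
  | (m + 1) => LinearMap.ker (C.bd m)

/-- The Hochschild homology `HH_n(𝓜)` of a cyclic module. -/
def HHc (n : ℕ) : Type :=
  ↥(C.cyc n) ⧸ Submodule.comap (C.cyc n).subtype (LinearMap.range (C.bd n))

instance (n : ℕ) : AddCommGroup (C.HHc n) := inferInstanceAs (AddCommGroup (_ ⧸ _))
instance (n : ℕ) : Module (ZMod 2) (C.HHc n) := inferInstanceAs (Module (ZMod 2) (_ ⧸ _))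

/-- A cyclic module is bounded if its Hochschild homology vanishes in all but finitely many
degrees. -/
def Bounded : Prop := Set.Finite {n : ℕ | Nontrivial (C.HHc n)}

/-- The cyclic bicomplex `CC(𝓜)`: first-quadrant, columns alternately `(HC, ∂)` and
`(HC, b')`, horizontal maps alternately `1 - t` and `N = ∑ tⁱ` (char. 2). Its column
filtration spectral sequence is the Hodge-to-de Rham (Hochschild-to-cyclic) spectral
sequence, converging to cyclic homology. -/
def CC : RelBicx (ZMod 2) where
  T := Π₀ pq : ℕ × ℕ, C.X pq.2
  gr := fun p q =>
    if 0 ≤ p ∧ 0 ≤ q then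
      Submodule.map (DFinsupp.lsingle (p.toNat, q.toNat)) ⊤
    else ⊥
  N := ⊥
  dv := DFinsupp.lsum ℕ (fun pq =>
    match pq with
    | (_, 0) => 0
    | (p, q + 1) =>
      (DFinsupp.lsingle (p, q)).comp (if Even p then C.bd q else C.bd' q))
  dh := DFinsupp.lsum ℕ (fun pq =>
    match pq with
    | (0, _) => 0
    | (p + 1, q) =>
      (DFinsupp.lsingle (p, q)).comp
        (if Even p then LinearMap.id + C.t q
         else ∑ i ∈ Finset.range (q + 1), (C.t q) ^ i))

/-- Degeneration of the Hodge-to-de Rham spectral sequence of `𝓜` at the `E^{r₀}` page. -/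
def HdRdegenAt (r₀ : ℤ) : Prop := C.CC.collapsesAt C.CC.Fcol r₀

end CycMod

/-- A map of cyclic modules. -/
def IsCycHom (C D : CycMod) (f : ∀ n, C.X n →ₗ[ZMod 2] D.X n) : Prop :=
  (∀ n i, (f n).comp (C.d n i) = (D.d n i).comp (f (n + 1))) ∧
  (∀ n i, (f (n + 1)).comp (C.s n i) = (D.s n i).comp (f n)) ∧
  (∀ n, (f n).comp (C.t n) = (D.t n).comp (f n))

/-- A degreewise map of `ℕ`-indexed chain complexes induces an isomorphism on homology
(stated elementarily). -/
def IsNatQIso (X Y : ℕ → Type)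
    [∀ n, AddCommGroup (X n)] [∀ n, Module (ZMod 2) (X n)]
    [∀ n, AddCommGroup (Y n)] [∀ n, Module (ZMod 2) (Y n)]
    (dX : ∀ n, X (n + 1) →ₗ[ZMod 2] X n) (dY : ∀ n, Y (n + 1) →ₗ[ZMod 2] Y n)
    (f : ∀ n, X n →ₗ[ZMod 2] Y n) : Prop :=
  ((∀ y : Y 0, ∃ x : X 0, f 0 x - y ∈ LinearMap.range (dY 0)) ∧
    (∀ x : X 0, f 0 x ∈ LinearMap.range (dY 0) → x ∈ LinearMap.range (dX 0))) ∧
  (∀ n : ℕ,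
    (∀ y : Y (n + 1), dY n y = 0 →
      ∃ x : X (n + 1), dX n x = 0 ∧ f (n + 1) x - y ∈ LinearMap.range (dY (n + 1))) ∧
    (∀ x : X (n + 1), dX n x = 0 → f (n + 1) x ∈ LinearMap.range (dY (n + 1)) →
      x ∈ LinearMap.range (dX (n + 1))))

/-- A quasi-isomorphism of cyclic modules. -/
def IsCycQIso (C D : CycMod) (f : ∀ n, C.X n →ₗ[ZMod 2] D.X n) : Prop :=
  IsCycHom C D f ∧ IsNatQIso C.X D.X C.bd D.bd f

theorem add_self2 {M : Type} [AddCommGroup M] [Module (ZMod 2) M] (x : M) : x + x = 0 :=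
  ZModModule.add_self x

theorem eq_of_add2 {M : Type} [AddCommGroup M] [Module (ZMod 2) M] {x y : M}
    (h : x + y = 0) : x = y := by
  have := ZModModule.sub_eq_add x y
  rw [h] at this
  exact sub_eq_zero.mp this

theorem add_eq_zero2 {M : Type} [AddCommGroup M] [Module (ZMod 2) M] {x y : M}
    (h : x = y) : x + y = 0 := by
  subst h; exact add_self2 x

namespace CycMod
variable (C : CycMod)

theorem dd_ap (n i j : ℕ) (h : i < j) (hj : j ≤ n + 2) (x : C.X (n+2)) :
    C.d n i (C.d (n+1) j x) = C.d n (j-1) (C.d (n+1) i x) :=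
  LinearMap.congr_fun (C.dd n i j h hj) x
theorem ss_ap (n i j : ℕ) (h : i ≤ j) (hj : j ≤ n) (x : C.X n) :
    C.s (n+1) i (C.s n j x) = C.s (n+1) (j+1) (C.s n i x) :=
  LinearMap.congr_fun (C.ss n i j h hj) x
theorem ds_lt_ap (n i j : ℕ) (h : i < j) (hj : j ≤ n + 1) (x : C.X (n+1)) :
    C.d (n+1) i (C.s (n+1) j x) = C.s n (j-1) (C.d n i x) :=
  LinearMap.congr_fun (C.ds_lt n i j h hj) x
theorem ds_eq_ap (n j : ℕ) (hj : j ≤ n) (x : C.X n) :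
    C.d n j (C.s n j x) = x :=
  LinearMap.congr_fun (C.ds_eq n j hj).1 x
theorem ds_eq_ap' (n j : ℕ) (hj : j ≤ n) (x : C.X n) :
    C.d n (j+1) (C.s n j x) = x :=
  LinearMap.congr_fun (C.ds_eq n j hj).2 x
theorem ds_gt_ap (n i j : ℕ) (h : j + 1 < i) (hj : i ≤ n + 2) (x : C.X (n+1)) :
    C.d (n+1) i (C.s (n+1) j x) = C.s n j (C.d n (i-1) x) :=
  LinearMap.congr_fun (C.ds_gt n i j h hj) x
theorem dt_ap (n i : ℕ) (h : 1 ≤ i) (hi : i ≤ n + 1) (x : C.X (n+1)) :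
    C.d n i (C.t (n+1) x) = C.t n (C.d n (i-1) x) :=
  LinearMap.congr_fun (C.dt n i h hi) x
theorem d0t_ap (n : ℕ) (x : C.X (n+1)) :
    C.d n 0 (C.t (n+1) x) = C.d n (n+1) x :=
  LinearMap.congr_fun (C.d0t n) x
theorem st_ap (n i : ℕ) (h : 1 ≤ i) (hi : i ≤ n) (x : C.X n) :
    C.s n i (C.t n x) = C.t (n+1) (C.s n (i-1) x) :=
  LinearMap.congr_fun (C.st n i h hi) x
theorem s0t_ap (n : ℕ) (x : C.X n) :
    C.s n 0 (C.t n x) = C.t (n+1) (C.t (n+1) (C.s n n x)) :=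
  LinearMap.congr_fun (C.s0t n) x
theorem t_ord_ap (n : ℕ) (x : C.X n) : ((C.t n) ^ (n+1)) x = x :=
  LinearMap.congr_fun (C.t_ord n) x

theorem bd_ap (n : ℕ) (x : C.X (n+1)) : C.bd n x = ∑ i ∈ Finset.range (n+2), C.d n i x := by
  simp [bd, LinearMap.sum_apply]
theorem bd'_ap (n : ℕ) (x : C.X (n+1)) : C.bd' n x = ∑ i ∈ Finset.range (n+1), C.d n i x := by
  simp [bd', LinearMap.sum_apply]

theorem bb_aux (n m : ℕ) (hm : m ≤ n + 2) (x : C.X (n+2)) :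
    ∑ i ∈ Finset.range m, C.d n i (∑ j ∈ Finset.range (m+1), C.d (n+1) j x) = 0 := by
  simp only [map_sum]
  rw [← Finset.sum_product']
  refine Finset.sum_involution
    (fun a _ => if a.1 < a.2 then (a.2 - 1, a.1) else (a.2, a.1+1)) ?_ ?_ ?_ ?_
  · rintro ⟨i, j⟩ h
    simp only [Finset.mem_product, Finset.mem_range] at h
    simp only
    split_ifs with h1
    · simp only
      rw [C.dd_ap n i j h1 (by omega)]
      exact add_self2 _
    · simp only
      rw [C.dd_ap n j (i+1) (by omega) (by omega)]
      exact add_self2 _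
  · rintro ⟨i, j⟩ h _
    simp only [Finset.mem_product, Finset.mem_range] at h
    simp only
    split_ifs with h1 <;> simp only [ne_eq, Prod.mk.injEq] <;> omega
  · rintro ⟨i, j⟩ h
    simp only [Finset.mem_product, Finset.mem_range] at h ⊢
    split_ifs with h1 <;> simp only <;> omega
  · rintro ⟨i, j⟩ h
    simp only [Finset.mem_product, Finset.mem_range] at h
    by_cases h1 : i < j
    · have : ¬ (j - 1 < i) := by omega
      simp [h1, this]; omega
    · have : j < i + 1 := by omega
      simp [h1, this]

theorem bd_bd (n : ℕ) (x : C.X (n+2)) : C.bd n (C.bd (n+1) x) = 0 := by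
  rw [bd_ap, bd_ap]; exact C.bb_aux n (n+2) le_rfl x
theorem bd'_bd' (n : ℕ) (x : C.X (n+2)) : C.bd' n (C.bd' (n+1) x) = 0 := by
  rw [bd'_ap, bd'_ap]; exact C.bb_aux n (n+1) (by omega) x

theorem bd_eq (n : ℕ) (x : C.X (n+1)) : C.bd n x = C.bd' n x + C.d n (n+1) x := by
  rw [bd_ap, bd'_ap, Finset.sum_range_succ]

theorem bd_t (n : ℕ) (x : C.X (n+1)) :
    C.bd n (x + C.t (n+1) x) = C.bd' n x + C.t n (C.bd' n x) := by
  have h : C.bd n (C.t (n+1) x) = C.t n (C.bd' n x) + C.d n (n+1) x := by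
    rw [bd_ap, Finset.sum_range_succ', d0t_ap, bd'_ap, map_sum]
    congr 1
    refine Finset.sum_congr rfl fun i hi => ?_
    rw [Finset.mem_range] at hi
    rw [C.dt_ap n (i+1) (by omega) (by omega)]; rfl
  rw [map_add, h, bd_eq]
  have := add_self2 (C.d n (n+1) x)
  calc _ = C.bd' n x + C.t n (C.bd' n x) + (C.d n (n+1) x + C.d n (n+1) x) := by abel
    _ = _ := by rw [this, add_zero]

/-- the norm -/
def Nm (q : ℕ) : C.X q →ₗ[ZMod 2] C.X q := ∑ i ∈ Finset.range (q + 1), (C.t q) ^ i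

theorem Nm_ap (q : ℕ) (x : C.X q) : C.Nm q x = ∑ i ∈ Finset.range (q+1), ((C.t q)^i) x := by
  simp [Nm, LinearMap.sum_apply]

theorem tpow_succ (q k : ℕ) (x : C.X q) : ((C.t q)^(k+1)) x = C.t q (((C.t q)^k) x) := by
  rw [pow_succ']; rfl
theorem tpow_succ' (q k : ℕ) (x : C.X q) : ((C.t q)^(k+1)) x = ((C.t q)^k) (C.t q x) := by
  rw [pow_succ]; rfl

theorem d_tpow_le (n i k : ℕ) (hk : k ≤ i) (hi : i ≤ n+1) (x : C.X (n+1)) :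
    C.d n i (((C.t (n+1))^k) x) = ((C.t n)^k) (C.d n (i-k) x) := by
  induction k generalizing i with
  | zero => simp
  | succ k ih =>
    rw [tpow_succ, C.dt_ap n i (by omega) hi, ih (i-1) (by omega) (by omega), tpow_succ,
      show i - 1 - k = i - (k+1) by omega]

theorem d_tpow_gt (n i k : ℕ) (hk : i < k) (hk2 : k ≤ n+2) (x : C.X (n+1)) :
    C.d n i (((C.t (n+1))^k) x) = ((C.t n)^(k-1)) (C.d n (n+2+i-k) x) := by
  obtain ⟨m, rfl⟩ : ∃ m, k = i + (m + 1) := ⟨k-i-1, by omega⟩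
  rw [pow_add, Module.End.mul_apply, d_tpow_le _ n i i le_rfl (by omega), Nat.sub_self,
    tpow_succ, d0t_ap, d_tpow_le _ n (n+1) m (by omega) le_rfl, ← Module.End.mul_apply, ← pow_add]
  congr 2
  congr 1; omega

theorem bd'_Nm (n : ℕ) (x : C.X (n+1)) : C.bd' n (C.Nm (n+1) x) = C.Nm n (C.bd n x) := by
  rw [bd'_ap, Nm_ap, bd_ap, Nm_ap]
  simp only [map_sum]
  rw [← Finset.sum_product', ← Finset.sum_product']
  refine Finset.sum_nbij' (fun a => if a.2 ≤ a.1 then (a.2, a.1 - a.2) else (a.2-1, n+2+a.1-a.2))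
    (fun a => if a.1+a.2 ≤ n then (a.1+a.2, a.1) else (a.1+a.2-n-1, a.1+1)) ?_ ?_ ?_ ?_ ?_
  · rintro ⟨i, k⟩ h
    simp only [Finset.mem_product, Finset.mem_range] at h ⊢
    split_ifs <;> simp only <;> omega
  · rintro ⟨i, k⟩ h
    simp only [Finset.mem_product, Finset.mem_range] at h ⊢
    split_ifs <;> simp only <;> omega
  · rintro ⟨i, k⟩ h
    simp only [Finset.mem_product, Finset.mem_range] at h
    by_cases h1 : k ≤ i
    · have h2 : k + (i - k) ≤ n := by omega
      refine Prod.ext ?_ ?_ <;> simp only [h1, h2, if_true] <;> omega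
    · have h2 : ¬ (k - 1 + (n + 2 + i - k) ≤ n) := by omega
      refine Prod.ext ?_ ?_ <;> simp only [h1, h2, if_false] <;> omega
  · rintro ⟨i, k⟩ h
    simp only [Finset.mem_product, Finset.mem_range] at h
    by_cases h1 : i + k ≤ n
    · have h2 : i ≤ i + k := by omega
      refine Prod.ext ?_ ?_ <;> simp only [h1, h2, if_true] <;> omega
    · have h2 : ¬ (i + 1 ≤ i + k - n - 1) := by omega
      refine Prod.ext ?_ ?_ <;> simp only [h1, h2, if_false] <;> omega
  · rintro ⟨i, k⟩ h
    simp only [Finset.mem_product, Finset.mem_range] at h ⊢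
    split_ifs with h1
    · simp only; exact C.d_tpow_le n i k h1 (by omega) x
    · simp only; exact C.d_tpow_gt n i k (by omega) (by omega) x

theorem Nm_t (q : ℕ) (x : C.X q) : C.Nm q (x + C.t q x) = 0 := by
  rw [map_add]
  apply add_eq_zero2
  rw [Nm_ap, Nm_ap, Finset.sum_range_succ', Finset.sum_range_succ]
  simp only [← tpow_succ']
  rw [t_ord_ap]; simp

theorem t_Nm (q : ℕ) (x : C.X q) : C.Nm q x + C.t q (C.Nm q x) = 0 := by
  apply add_eq_zero2
  rw [Nm_ap, map_sum, Finset.sum_range_succ', Finset.sum_range_succ]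
  simp only [← tpow_succ]
  rw [t_ord_ap]; simp

/-- extra degeneracy -/
def hx (n : ℕ) : C.X n →ₗ[ZMod 2] C.X (n+1) := (C.t (n+1)).comp (C.s n n)

theorem bd'_hx_zero (x : C.X 0) : C.bd' 0 (C.hx 0 x) = x := by
  rw [bd'_ap]
  simp only [zero_add, Finset.range_one, Finset.sum_singleton, hx, LinearMap.comp_apply]
  rw [d0t_ap]
  exact C.ds_eq_ap' 0 0 le_rfl x

theorem bd'_hx (n : ℕ) (x : C.X (n+1)) :
    C.bd' (n+1) (C.hx (n+1) x) = x + C.hx n (C.bd' n x) := by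
  rw [bd'_ap, Finset.sum_range_succ']
  simp only [hx, LinearMap.comp_apply]
  rw [d0t_ap, C.ds_eq_ap' (n+1) (n+1) le_rfl x, bd'_ap]
  refine (add_comm _ _).trans ?_
  congr 1
  simp only [map_sum]
  refine Finset.sum_congr rfl fun i hi => ?_
  rw [Finset.mem_range] at hi
  rw [C.dt_ap (n+1) (i+1) (by omega) (by omega), C.ds_lt_ap n _ (n+1) (by omega) le_rfl]
  rfl

/-- vertical differential of column `p` -/
def v (p q : ℕ) : C.X (q+1) →ₗ[ZMod 2] C.X q := if Even p then C.bd q else C.bd' q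
/-- horizontal differential from column `p+1` to column `p` -/
def hh (p q : ℕ) : C.X q →ₗ[ZMod 2] C.X q := if Even p then LinearMap.id + C.t q else C.Nm q

theorem v_zero (q : ℕ) : C.v 0 q = C.bd q := by simp [v]
theorem hh_zero (q : ℕ) : C.hh 0 q = LinearMap.id + C.t q := by simp [hh]

theorem v_v (p q : ℕ) (x : C.X (q+2)) : C.v p q (C.v p (q+1) x) = 0 := by
  unfold v; split_ifs
  · exact C.bd_bd q x
  · exact C.bd'_bd' q x

theorem hh_hh (p q : ℕ) (x : C.X q) : C.hh p q (C.hh (p+1) q x) = 0 := by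
  unfold hh
  by_cases h : Even p
  · have : ¬ Even (p+1) := by simpa [Nat.even_add_one] using h
    simp only [h, this, if_true, if_false]
    exact C.t_Nm q x
  · have : Even (p+1) := by simpa [Nat.even_add_one] using h
    simp only [h, this, if_true, if_false]
    exact C.Nm_t q x

theorem v_hh (p q : ℕ) (x : C.X (q+1)) : C.v p q (C.hh p (q+1) x) = C.hh p q (C.v (p+1) q x) := by
  unfold hh v
  by_cases h : Even p
  · have : ¬ Even (p+1) := by simpa [Nat.even_add_one] using h
    simp only [h, this, if_true, if_false]
    exact C.bd_t q x
  · have : Even (p+1) := by simpa [Nat.even_add_one] using h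
    simp only [h, this, if_true, if_false]
    exact C.bd'_Nm q x

/-- chains of the bicomplex as plain families -/
abbrev Ch := ∀ (_p q : ℕ), C.X q

/-- total differential -/
def DD (y : C.Ch) : C.Ch := fun p q => C.v p q (y p (q+1)) + C.hh p q (y (p+1) q)

theorem DD_ap (y : C.Ch) (p q : ℕ) :
    C.DD y p q = C.v p q (y p (q+1)) + C.hh p q (y (p+1) q) := rfl

theorem DD_DD (y : C.Ch) (p q : ℕ) : C.DD (C.DD y) p q = 0 := by
  simp only [DD_ap, map_add, v_v, hh_hh, v_hh]
  rw [zero_add, add_zero, add_self2]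

theorem DD_add (y z : C.Ch) (p q : ℕ) : C.DD (y + z) p q = C.DD y p q + C.DD z p q := by
  simp only [DD_ap, Pi.add_apply, map_add]; abel

/-- single chain -/
def sg (p q : ℕ) (x : C.X q) : C.Ch := Function.update 0 p (Function.update 0 q x)

theorem sg_same (p q : ℕ) (x : C.X q) : C.sg p q x p q = x := by simp [sg]
theorem sg_ne (p q : ℕ) (x : C.X q) (p' q' : ℕ) (h : p' ≠ p ∨ q' ≠ q) : C.sg p q x p' q' = 0 := by
  unfold sg
  by_cases h1 : p' = p
  · subst h1
    have : q' ≠ q := by tauto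
    simp [this]
  · simp [h1]

/-- cycle in column `p` -/
def cc (p : ℕ) : ∀ q, C.X q → Prop
  | 0, _ => True
  | (q+1), x => C.v p q x = 0

/-- `b'` columns are acyclic -/
theorem odd_acyc (p : ℕ) (hp : ¬ Even p) (q : ℕ) (x : C.X q)
    (hx : C.cc p q x) : ∃ z, C.v p q z = x := by
  have hv : ∀ m, C.v p m = C.bd' m := fun m => by simp [v, hp]
  refine ⟨C.hx q x, ?_⟩
  rw [hv]
  cases q with
  | zero => exact C.bd'_hx_zero x
  | succ m =>
    have : C.v p m x = 0 := hx
    rw [hv] at this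
    rw [bd'_hx, this]; simp

/-- Every total cycle-candidate's zeroth column differential is a boundary. -/
def Inj : Prop := ∀ (n : ℕ) (y : C.Ch), (∀ p q, p + q ≠ n + 1 → y p q = 0) →
  (∀ p q, C.DD y (p+1) q = 0) → ∃ z, C.bd n z = C.DD y 0 n

end CycMod

namespace CycMod
variable (C : CycMod)

abbrev TT := Π₀ pq : ℕ × ℕ, C.X pq.2

def toCh (y : C.TT) : C.Ch := fun p q => y (p, q)

theorem toCh_add (y z : C.TT) : C.toCh (y + z) = C.toCh y + C.toCh z := rfl

theorem toCh_single (p q : ℕ) (x : C.X q) :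
    C.toCh (DFinsupp.single (p, q) x : C.TT) = C.sg p q x := by
  funext a b
  by_cases h : a = p ∧ b = q
  · obtain ⟨rfl, rfl⟩ := h
    rw [sg_same]; exact DFinsupp.single_eq_same
  · rw [sg_ne _ _ _ _ _ _ (by tauto)]
    exact DFinsupp.single_eq_of_ne (by simpa [Prod.ext_iff] using h)

/-- `D` on the total object, typed concretely -/
def DT : C.TT →ₗ[ZMod 2] C.TT := C.CC.D

theorem DT_single (p q : ℕ) (x : C.X q) :
    C.toCh (C.DT (DFinsupp.single (p, q) x)) = C.DD (C.sg p q x) := by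
  have h1 : C.DT (DFinsupp.single (p, q) x) =
      (match p with
       | 0 => 0
       | p+1 => (DFinsupp.single (p, q) (C.hh p q x) : C.TT)) +
      (match q, x with
       | 0, _ => 0
       | q+1, x => (DFinsupp.single (p, q) (C.v p q x) : C.TT)) := by
    have e : C.DT (DFinsupp.single (p, q) x) =
      (DFinsupp.lsum ℕ (fun pq : ℕ × ℕ =>
        match pq with
        | (0, _) => 0
        | (p + 1, q) =>
          (DFinsupp.lsingle (p, q)).comp
            (if Even p then LinearMap.id + C.t q
            else ∑ i ∈ Finset.range (q + 1), (C.t q) ^ i)) : C.TT →ₗ[ZMod 2] C.TT)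
          (DFinsupp.single (p, q) x) +
      (DFinsupp.lsum ℕ (fun pq : ℕ × ℕ =>
        match pq with
        | (_, 0) => 0
        | (p, q + 1) =>
          (DFinsupp.lsingle (p, q)).comp (if Even p then C.bd q else C.bd' q)) :
          C.TT →ₗ[ZMod 2] C.TT)
          (DFinsupp.single (p, q) x) := rfl
    rw [e]
    congr 1
    · rw [DFinsupp.lsum_single]
      cases p <;> rfl
    · rw [DFinsupp.lsum_single]
      cases q <;> rfl
  rw [h1, toCh_add]
  funext a b
  rw [Pi.add_apply, Pi.add_apply, DD_ap, add_comm]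
  congr 1
  · cases q with
    | zero =>
      rw [sg_ne _ _ _ _ _ _ (by omega), map_zero]; rfl
    | succ q =>
      simp only [toCh_single]
      by_cases h : a = p ∧ b = q
      · obtain ⟨rfl, rfl⟩ := h
        rw [sg_same, sg_same]
      · rw [sg_ne _ _ _ _ _ _ (by omega), sg_ne _ _ _ _ _ _ (by omega), map_zero]
  · cases p with
    | zero =>
      rw [sg_ne _ _ _ _ _ _ (by omega), map_zero]; rfl
    | succ p =>
      simp only [toCh_single]
      by_cases h : a = p ∧ b = q
      · obtain ⟨rfl, rfl⟩ := h
        rw [sg_same, sg_same]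
      · rw [sg_ne _ _ _ _ _ _ (by omega), sg_ne _ _ _ _ _ _ (by omega), map_zero]

theorem toCh_DT (y : C.TT) : C.toCh (C.DT y) = C.DD (C.toCh y) := by
  classical
  refine DFinsupp.induction (p := fun y => C.toCh (C.DT y) = C.DD (C.toCh y)) y ?_ ?_
  · funext p q
    rw [map_zero, DD_ap]
    simp [toCh]
  · rintro ⟨p, q⟩ x f _ _ ih
    rw [map_add, toCh_add, toCh_add, ih, DT_single, toCh_single]
    funext p q; rw [DD_add]; rfl

theorem toCh_inj {y z : C.TT} (h : C.toCh y = C.toCh z) : y = z :=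
  DFinsupp.ext fun ⟨p, q⟩ => congrFun (congrFun h p) q

theorem DT_DT (y : C.TT) : C.DT (C.DT y) = 0 := by
  apply C.toCh_inj
  rw [toCh_DT, toCh_DT]
  funext p q; exact C.DD_DD _ p q

/-- filtration, explicit -/
def Fx (P n : ℤ) : Submodule (ZMod 2) C.TT where
  carrier := {y | ∀ p q : ℕ, ¬ ((p : ℤ) ≤ P ∧ (p : ℤ) + q = n) → C.toCh y p q = 0}
  add_mem' := by
    intro a b ha hb p q h
    rw [toCh_add, Pi.add_apply, Pi.add_apply, ha p q h, hb p q h, add_zero]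
  zero_mem' := fun p q _ => rfl
  smul_mem' := by
    intro c x hx p q h
    have : C.toCh (c • x) p q = c • C.toCh x p q := rfl
    rw [this, hx p q h, smul_zero]

theorem Fcol_eq (P n : ℤ) : (C.CC.Fcol P n) = C.Fx P n := by
  classical
  apply le_antisymm
  · refine iSup_le fun i => iSup_le fun hi => ?_
    show (if 0 ≤ i ∧ 0 ≤ n - i then
      Submodule.map (DFinsupp.lsingle (i.toNat, (n-i).toNat)) ⊤
      else ⊥ : Submodule (ZMod 2) C.TT) ≤ _
    split_ifs with h
    · rintro _ ⟨x, -, rfl⟩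
      intro p q hpq
      show C.toCh (DFinsupp.single _ _) p q = 0
      rw [toCh_single, sg_ne]
      omega
    · exact bot_le
  · show C.Fx P n ≤ (⨆ (i : ℤ) (_ : i ≤ P), (if 0 ≤ i ∧ 0 ≤ n - i then
      Submodule.map (DFinsupp.lsingle (i.toNat, (n-i).toNat)) ⊤
      else ⊥ : Submodule (ZMod 2) C.TT))
    intro y hy
    have : y = y.sum (fun i x => (DFinsupp.single i x : C.TT)) := DFinsupp.sum_single.symm
    rw [this]
    refine Submodule.sum_mem _ fun i hi => ?_
    obtain ⟨p, q⟩ := i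
    have hne : y (p, q) ≠ 0 := by simpa using hi
    have h2 : (p : ℤ) ≤ P ∧ (p : ℤ) + q = n := by
      by_contra hc
      exact hne (hy p q hc)
    refine Submodule.mem_iSup_of_mem (p : ℤ) (Submodule.mem_iSup_of_mem h2.1 ?_)
    rw [if_pos (by omega)]
    have e1 : (p:ℤ).toNat = p := by omega
    have e2 : (n-p).toNat = q := by omega
    rw [e1, e2]
    exact ⟨y (p, q), trivial, rfl⟩

theorem Zpage_eq (r p n : ℤ) : C.CC.Zpage C.CC.Fcol r p n =
    C.Fx p n ⊓ Submodule.comap C.DT (C.Fx (p-r) (n-1)) := by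
  have h1 : C.CC.Zpage C.CC.Fcol r p n =
    (C.CC.Fcol p n ⊔ ⊥) ⊓ Submodule.comap C.CC.D (C.CC.Fcol (p - r) (n - 1) ⊔ ⊥) := rfl
  rw [h1, sup_bot_eq, sup_bot_eq]
  exact congrArg₂ (fun a b : Submodule (ZMod 2) C.TT => a ⊓ Submodule.comap C.DT b)
    (C.Fcol_eq _ _) (C.Fcol_eq _ _)

/-- concrete approximate cycles -/
def Zx (r p n : ℤ) : Submodule (ZMod 2) C.TT :=
  C.Fx p n ⊓ Submodule.comap C.DT (C.Fx (p-r) (n-1))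

theorem zeroDiff_iff (r p n : ℤ) : C.CC.zeroDiff C.CC.Fcol r p n ↔
    Submodule.map C.DT (C.Zx r p n) ≤
      Submodule.map C.DT (C.Zx (r-1) (p-1) n) ⊔ C.Zx (r-1) (p-r-1) (n-1) := by
  have h1 : C.CC.zeroDiff C.CC.Fcol r p n ↔
    Submodule.map C.CC.D (C.CC.Zpage C.CC.Fcol r p n) ≤
    Submodule.map C.CC.D (C.CC.Zpage C.CC.Fcol (r - 1) (p - 1) n) ⊔
      C.CC.Zpage C.CC.Fcol (r - 1) (p - r - 1) (n - 1) ⊔ ⊥ := Iff.rfl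
  rw [h1, sup_bot_eq, Zpage_eq, Zpage_eq, Zpage_eq]
  exact Iff.rfl

theorem mem_Zx (r p n : ℤ) (y : C.TT) :
    y ∈ C.Zx r p n ↔ y ∈ C.Fx p n ∧ C.DT y ∈ C.Fx (p - r) (n-1) := Iff.rfl

theorem Fx_mono {P P' n : ℤ} (h : P ≤ P') : C.Fx P n ≤ C.Fx P' n :=
  fun _ hy p q hpq => hy p q (fun h2 => hpq ⟨h2.1.trans h, h2.2⟩)

theorem Fx_neg {P n : ℤ} (h : P < 0) {y : C.TT} (hy : y ∈ C.Fx P n) : y = 0 := by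
  apply C.toCh_inj
  funext p q
  exact hy p q (by omega)

def ofCh (n : ℕ) (y : C.Ch) : C.TT :=
  ∑ p ∈ Finset.range (n+1), DFinsupp.single (p, n-p) (y p (n-p))

theorem toCh_ofCh (n : ℕ) (y : C.Ch) (hy : ∀ p q, p + q ≠ n → y p q = 0) :
    C.toCh (C.ofCh n y) = y := by
  funext p q
  have h1 : C.toCh (C.ofCh n y) p q =
      ∑ a ∈ Finset.range (n+1), C.sg a (n-a) (y a (n-a)) p q := by
    simp only [← toCh_single]
    unfold toCh ofCh
    rw [DFinsupp.finsetSum_apply]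
  rw [h1]
  by_cases h : p + q = n
  · rw [Finset.sum_eq_single p]
    · obtain rfl : q = n - p := by omega
      rw [sg_same]
    · intro a _ ha
      rw [sg_ne]; exact Or.inl (Ne.symm ha)
    · intro ha; simp at ha; omega
  · rw [hy p q h]
    refine Finset.sum_eq_zero fun a ha => ?_
    simp at ha
    rw [sg_ne]; omega

theorem inj_of_degen (h : C.HdRdegenAt 1) : C.Inj := by
  intro n y hy hD
  have key : ∀ P : ℕ, ∀ Y ∈ C.Fx P (n+1), C.DT Y ∈ C.Fx 0 n →
      ∃ Y' ∈ C.Fx 0 (n+1), C.DT Y' = C.DT Y := by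
    intro P
    induction P with
    | zero => exact fun Y hY _ => ⟨Y, hY, rfl⟩
    | succ P ih =>
      intro Y hY hDY
      have hz := (C.zeroDiff_iff _ _ _).1 (h (P+1) (by omega) (P+1) (n+1))
      have hmem : C.DT Y ∈ Submodule.map C.DT (C.Zx (P+1) (P+1) (n+1)) := by
        refine ⟨Y, ?_, rfl⟩
        refine (C.mem_Zx _ _ _ _).2 ⟨by exact_mod_cast hY, ?_⟩
        simpa using hDY
      have h2 := hz hmem
      obtain ⟨a, ⟨Y', hY', rfl⟩, b, hb, hab⟩ := Submodule.mem_sup.1 h2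
      have hb0 : b = 0 := C.Fx_neg (by omega) ((C.mem_Zx _ _ _ _).1 hb).1
      have hY2 := ((C.mem_Zx _ _ _ _).1 hY').1
      have heq : C.DT Y' = C.DT Y := by rw [← hab, hb0, add_zero]
      have hY3 : Y' ∈ C.Fx P (n+1) := by
        have e3 : ((P:ℤ)+1-1) = P := by omega
        rw [e3] at hY2; exact hY2
      obtain ⟨Z, hZ, hZe⟩ := ih Y' hY3 (by rw [heq]; exact hDY)
      exact ⟨Z, hZ, hZe.trans heq⟩
  have e := C.toCh_ofCh (n+1) y hy
  have hDeg : ∀ p q, p + q ≠ n → C.DD y p q = 0 := by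
    intro p q hpq
    rw [DD_ap, hy _ _ (by omega), hy _ _ (by omega)]; simp
  obtain ⟨Y', hY', he⟩ := key (n+1) (C.ofCh (n+1) y)
    (by intro p q hpq; rw [e]; apply hy; omega)
    (by
      intro p q hpq
      rw [toCh_DT, e]
      cases p with
      | zero => apply hDeg; omega
      | succ p => exact hD p q)
  refine ⟨C.toCh Y' 0 (n+1), ?_⟩
  rw [← e, ← toCh_DT, ← he, toCh_DT, DD_ap, hY' 1 n (by omega), v_zero]
  simp

theorem col_kill (hI : C.Inj) (r p n : ℤ) (hr : 1 ≤ r) (Y : C.TT) (c q : ℕ) (hc : (c:ℤ) = p - r)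
    (hq : (c:ℤ) + q = n - 1) (hY : Y ∈ C.Fx p n) (hD : C.DT Y ∈ C.Fx (p-r) (n-1)) :
    ∃ z, C.v c q z = C.toCh (C.DT Y) c q := by
  have hDz : ∀ a b, c < a → C.DD (C.toCh Y) a b = 0 := by
    intro a b hab
    rw [← toCh_DT]; apply hD; omega
  by_cases hev : Even c
  · obtain ⟨z, hz⟩ := hI q (fun a b => C.toCh Y (c+a) b)
      (by intro a b hab; apply hY; omega)
      (by
        intro a b
        have := hDz (c+(a+1)) b (by omega)
        rw [DD_ap] at this ⊢
        have e1 : Even (c + (a+1)) ↔ Even (a+1) := by simp [Nat.even_add, hev]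
        simp only [v, hh, e1] at this ⊢
        exact this)
    refine ⟨z, ?_⟩
    rw [toCh_DT]
    rw [DD_ap] at hz ⊢
    simp only [v, hh, hev, if_true, Even.zero, add_zero, zero_add] at hz ⊢
    exact hz
  · apply C.odd_acyc c hev
    cases q with
    | zero => trivial
    | succ m =>
    show C.v c m _ = 0
    have := C.DD_DD (C.toCh Y) c m
    rw [DD_ap _ _ c m, hDz (c+1) m (by omega), map_zero, add_zero] at this
    rw [toCh_DT]; exact this

theorem degen_of_inj (hI : C.Inj) : C.HdRdegenAt 1 := by
  intro r hr p n
  rw [zeroDiff_iff]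
  rintro _ ⟨Y, hY, rfl⟩
  obtain ⟨hY1, hY2⟩ := (C.mem_Zx _ _ _ _).1 hY
  by_cases hc : p - r < 0
  · rw [C.Fx_neg hc hY2]; exact Submodule.zero_mem _
  obtain ⟨c, hc⟩ : ∃ c : ℕ, (c : ℤ) = p - r := ⟨(p-r).toNat, by omega⟩
  by_cases hq : n - 1 - c < 0
  · refine Submodule.mem_sup_right ((C.mem_Zx _ _ _ _).2 ⟨?_, ?_⟩)
    · intro a b hab
      apply hY2; omega
    · rw [DT_DT]; exact Submodule.zero_mem _
  obtain ⟨q, hq⟩ : ∃ q : ℕ, (c:ℤ) + q = n - 1 := ⟨(n-1-c).toNat, by omega⟩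
  obtain ⟨z, hz⟩ := C.col_kill hI r p n hr Y c q hc hq hY1 hY2
  set Y' : C.TT := DFinsupp.single (c, q+1) z with hY'
  have hch : C.toCh Y' = C.sg c (q+1) z := C.toCh_single c (q+1) z
  refine Submodule.mem_sup.2 ⟨C.DT Y', ⟨Y', (C.mem_Zx _ _ _ _).2 ⟨?_, ?_⟩, rfl⟩,
    C.DT Y - C.DT Y', (C.mem_Zx _ _ _ _).2 ⟨?_, ?_⟩, by abel⟩
  · intro a b hab
    rw [hch, sg_ne]; omega
  · intro a b hab
    rw [toCh_DT, hch, DD_ap, sg_ne _ _ _ _ _ _ (by omega), sg_ne _ _ _ _ _ _ (by omega)]; simp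
  · intro a b hab
    have e : C.toCh (C.DT Y - C.DT Y') a b = C.toCh (C.DT Y) a b - C.toCh (C.DT Y') a b := rfl
    rw [e, C.toCh_DT Y', hch, DD_ap, C.sg_ne _ _ _ (a+1) b (by omega), map_zero, add_zero]
    by_cases h : a = c ∧ b = q
    · obtain ⟨rfl, rfl⟩ := h
      rw [sg_same, hz, sub_self]
    · rw [sg_ne _ _ _ _ _ _ (by omega), map_zero, sub_zero]
      apply hY2; omega
  · rw [map_sub, DT_DT, DT_DT, sub_zero]; exact Submodule.zero_mem _

end CycMod

/-- weak homs: commute with in-range operators -/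
structure WH (C D : CycMod) (f : ∀ n, C.X n →ₗ[ZMod 2] D.X n) : Prop where
  d : ∀ n i, i ≤ n+1 → ∀ x, f n (C.d n i x) = D.d n i (f (n+1) x)
  s : ∀ n i, i ≤ n → ∀ x, f (n+1) (C.s n i x) = D.s n i (f n x)
  t : ∀ n x, f n (C.t n x) = D.t n (f n x)

theorem IsCycHom.wh {C D : CycMod} {f : ∀ n, C.X n →ₗ[ZMod 2] D.X n} (h : IsCycHom C D f) :
    WH C D f :=
  ⟨fun n i _ x => LinearMap.congr_fun (h.1 n i) x,
   fun n i _ x => LinearMap.congr_fun (h.2.1 n i) x,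
   fun n x => LinearMap.congr_fun (h.2.2 n) x⟩

namespace WH
variable {C D : CycMod} {f : ∀ n, C.X n →ₗ[ZMod 2] D.X n} (h : WH C D f)
include h

theorem bd (n : ℕ) (x : C.X (n+1)) : f n (C.bd n x) = D.bd n (f (n+1) x) := by
  rw [CycMod.bd_ap, CycMod.bd_ap, map_sum]
  exact Finset.sum_congr rfl fun i hi => h.d n i (by simp at hi; omega) x
theorem bd' (n : ℕ) (x : C.X (n+1)) : f n (C.bd' n x) = D.bd' n (f (n+1) x) := by
  rw [CycMod.bd'_ap, CycMod.bd'_ap, map_sum]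
  exact Finset.sum_congr rfl fun i hi => h.d n i (by simp at hi; omega) x
theorem tpow (n k : ℕ) (x : C.X n) : f n (((C.t n)^k) x) = ((D.t n)^k) (f n x) := by
  induction k with
  | zero => simp
  | succ k ih => rw [CycMod.tpow_succ, CycMod.tpow_succ, h.t, ih]
theorem Nm (n : ℕ) (x : C.X n) : f n (C.Nm n x) = D.Nm n (f n x) := by
  rw [CycMod.Nm_ap, CycMod.Nm_ap, map_sum]
  exact Finset.sum_congr rfl fun i _ => h.tpow n i x
theorem v (p n : ℕ) (x : C.X (n+1)) : f n (C.v p n x) = D.v p n (f (n+1) x) := by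
  unfold CycMod.v; split_ifs
  · exact h.bd n x
  · exact h.bd' n x
theorem hh (p n : ℕ) (x : C.X n) : f n (C.hh p n x) = D.hh p n (f n x) := by
  unfold CycMod.hh; split_ifs
  · simp [h.t]
  · exact h.Nm n x
theorem DD (y : C.Ch) (p q : ℕ) : f q (C.DD y p q) = D.DD (fun p q => f q (y p q)) p q := by
  rw [CycMod.DD_ap, CycMod.DD_ap, map_add, h.v, h.hh]
theorem cyc (n : ℕ) (x : C.X n) (hx : x ∈ C.cyc n) : f n x ∈ D.cyc n := by
  cases n with
  | zero => trivial
  | succ n =>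
    have hx' : C.bd n x = 0 := hx
    show D.bd n _ = 0
    rw [← h.bd, hx', map_zero]
omit h in
theorem comp {E : CycMod} {g : ∀ n, D.X n →ₗ[ZMod 2] E.X n} (hg : WH D E g) (h : WH C D f) :
    WH C E (fun n => (g n).comp (f n)) :=
  ⟨fun n i hi x => by simp [h.d n i hi, hg.d n i hi], fun n i hi x => by simp [h.s n i hi, hg.s n i hi],
    fun n x => by simp [h.t, hg.t]⟩
end WH

theorem WH.id (C : CycMod) : WH C C (fun _ => LinearMap.id) :=
  ⟨fun _ _ _ _ => rfl, fun _ _ _ _ => rfl, fun _ _ => rfl⟩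

/-- HH-injective -/
def HInj (C D : CycMod) (f : ∀ n, C.X n →ₗ[ZMod 2] D.X n) : Prop :=
  ∀ n, ∀ x ∈ C.cyc n, f n x ∈ LinearMap.range (D.bd n) → x ∈ LinearMap.range (C.bd n)
/-- HH-surjective -/
def HSurj (C D : CycMod) (f : ∀ n, C.X n →ₗ[ZMod 2] D.X n) : Prop :=
  ∀ n, ∀ y ∈ D.cyc n, ∃ x ∈ C.cyc n, f n x - y ∈ LinearMap.range (D.bd n)

theorem natQIso_iff (C D : CycMod) (f : ∀ n, C.X n →ₗ[ZMod 2] D.X n) :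
    IsNatQIso C.X D.X C.bd D.bd f ↔ HInj C D f ∧ HSurj C D f := by
  constructor
  · rintro ⟨⟨h1, h2⟩, h3⟩
    refine ⟨?_, ?_⟩
    · intro n x hx
      cases n with
      | zero => exact h2 x
      | succ n => exact (h3 n).2 x hx
    · intro n y hy
      cases n with
      | zero => obtain ⟨x, hx⟩ := h1 y; exact ⟨x, trivial, hx⟩
      | succ n => exact (h3 n).1 y hy
  · rintro ⟨h1, h2⟩
    refine ⟨⟨?_, ?_⟩, ?_⟩
    · intro y; obtain ⟨x, _, hx⟩ := h2 0 y trivial; exact ⟨x, hx⟩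
    · intro x; exact h1 0 x trivial
    · intro n; exact ⟨fun y hy => h2 (n+1) y hy, fun x hx => h1 (n+1) x hx⟩

/-- concentrated in one degree -/
def Conc (W : CycMod) (j : ℕ) : Prop :=
  ∀ m, m ≠ j → ∀ w ∈ W.cyc m, w ∈ LinearMap.range (W.bd m)

namespace CycMod
variable {C : CycMod}

theorem cc_zero (q : ℕ) (x : C.X q) : C.cc 0 q x ↔ x ∈ C.cyc q := by
  cases q with
  | zero => exact Iff.rfl
  | succ q => show C.v 0 q x = 0 ↔ C.bd q x = 0; rw [v_zero]

theorem cc_even {p : ℕ} (hp : Even p) (q : ℕ) (x : C.X q) : C.cc p q x ↔ x ∈ C.cyc q := by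
  cases q with
  | zero => exact Iff.rfl
  | succ q => show C.v p q x = 0 ↔ C.bd q x = 0; simp [v, hp]

theorem v_even {p : ℕ} (hp : Even p) (q : ℕ) : C.v p q = C.bd q := by simp [v, hp]

theorem DD_cyc (y : C.Ch) (p q : ℕ) (h : ∀ b, C.DD y (p+1) b = 0) : C.cc p q (C.DD y p q) := by
  cases q with
  | zero => trivial
  | succ q =>
    have := C.DD_DD y p q
    rw [DD_ap _ (C.DD y), h, map_zero, add_zero] at this
    exact this

theorem cc_of_top (y : C.Ch) (p q : ℕ) (h : y (p+1) = 0) (h2 : ∀ b, C.DD y p b = 0) :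
    C.cc p q (y p q) := by
  cases q with
  | zero => trivial
  | succ q =>
    have := h2 q
    rw [DD_ap, h] at this
    show C.v p q _ = 0
    simpa using this

theorem DD_sg_gt (N q : ℕ) (u : C.X q) (p b : ℕ) (h : N < p) : C.DD (C.sg N q u) p b = 0 := by
  rw [DD_ap, sg_ne _ _ _ _ _ _ (by omega), sg_ne _ _ _ _ _ _ (by omega)]; simp

theorem DD_sg_top (N q : ℕ) (u : C.X (q+1)) : C.DD (C.sg N (q+1) u) N q = C.v N q u := by
  rw [DD_ap, sg_same, sg_ne _ _ _ _ _ _ (by omega)]; simp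

theorem DD_sg_deg (N q : ℕ) (u : C.X q) (p b : ℕ) (h : p + b + 1 ≠ N + q) :
    C.DD (C.sg N q u) p b = 0 := by
  rw [DD_ap, sg_ne _ _ _ _ _ _ (by omega), sg_ne _ _ _ _ _ _ (by omega)]; simp

theorem map_sg {D : CycMod} (f : ∀ n, C.X n →ₗ[ZMod 2] D.X n) (N q : ℕ) (u : C.X q) (p b : ℕ) :
    f b (C.sg N q u p b) = D.sg N q (f q u) p b := by
  by_cases h : p = N ∧ b = q
  · obtain ⟨rfl, rfl⟩ := h
    rw [sg_same, sg_same]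
  · rw [sg_ne _ _ _ _ _ _ (by omega), sg_ne _ _ _ _ _ _ (by omega), map_zero]

theorem inj_of_map {P S : CycMod} {g : ∀ n, P.X n →ₗ[ZMod 2] S.X n} (hg : WH P S g)
    (hi : HInj P S g) (hS : S.Inj) : P.Inj := by
  intro n y hy hD
  obtain ⟨z, hz⟩ := hS n (fun p q => g q (y p q))
    (fun p q h => by rw [hy p q h, map_zero])
    (fun p q => by rw [← hg.DD, hD, map_zero])
  rw [← hg.DD] at hz
  exact hi n _ ((cc_zero _ _).1 (DD_cyc y 0 n (hD 0))) ⟨z, hz⟩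

section lift
variable {P : CycMod} {f : ∀ n, P.X n →ₗ[ZMod 2] C.X n} (hf : WH P C f)
  (hi : HInj P C f) (hs : HSurj P C f)

include hi in
theorem colinj (p m : ℕ) (x : P.X m) (hx : P.cc p m x) (c : C.X (m+1)) (h : f m x = C.v p m c) :
    ∃ u, P.v p m u = x := by
  by_cases hp : Even p
  · rw [cc_even hp] at hx
    rw [v_even hp] at h ⊢
    exact hi m x hx ⟨c, h.symm⟩
  · exact P.odd_acyc p hp m x hx

include hs in
theorem colsurj (p q : ℕ) (c : C.X q) (hc : C.cc p q c) :
    ∃ v', P.cc p q v' ∧ ∃ z, c + f q v' = C.v p q z := by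
  by_cases hp : Even p
  · rw [cc_even hp] at hc
    obtain ⟨x, hx, z, hz⟩ := hs q c hc
    refine ⟨x, (cc_even hp _ _).2 hx, z, ?_⟩
    rw [v_even hp, hz, ZModModule.sub_eq_add, add_comm]
  · obtain ⟨z, hz⟩ := C.odd_acyc p hp q c hc
    refine ⟨0, ?_, z, ?_⟩
    · cases q with
      | zero => trivial
      | succ q => exact map_zero _
    · rw [map_zero, add_zero, hz]

include hf hi hs in
theorem lift_step (N q : ℕ) (y : C.Ch) (w : P.Ch)
    (hyN : y (N+1) = 0) (hwN : w (N+1) = 0) (hDw : ∀ p q, P.DD w p q = 0)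
    (hDy : ∀ p q, C.DD y p q = f q (w p q)) :
    ∃ (u : P.X q) (z : C.X (q+1)), (∀ m (u' : P.X (m+1)), HEq u' u → q = m+1 → P.v N m u' = w N m) ∧
      y N q + f q u = C.v N q z := by
  cases q with
  | zero =>
    obtain ⟨v', hv', z, hz⟩ := colsurj hs N 0 (y N 0) trivial
    exact ⟨v', z, fun m u' _ h => by omega, hz⟩
  | succ m =>
    have hyD : f m (w N m) = C.v N m (y N (m+1)) := by
      rw [← hDy, DD_ap, hyN]; simp
    obtain ⟨u0, hu0⟩ := colinj hi N m (w N m) (cc_of_top w N m hwN (hDw N)) _ hyD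
    obtain ⟨v', hv', z, hz⟩ := colsurj hs N (m+1) (y N (m+1) + f (m+1) u0) (by
      show C.v N m _ = 0
      rw [map_add, ← hf.v, hu0, hyD]; exact add_self2 _)
    refine ⟨u0 + v', z, ?_, ?_⟩
    · intro m' u' h1 h2
      obtain rfl : m = m' := by omega
      obtain rfl := eq_of_heq h1
      have hv2 : P.v N m v' = 0 := hv'
      rw [map_add, hu0, hv2, add_zero]
    · rw [map_add, ← add_assoc, hz]

include hf hi hs in
theorem lift_bound (n N : ℕ) : ∀ (y : C.Ch) (w : P.Ch),
    (∀ p q, p + q ≠ n + 1 → y p q = 0) → (∀ p q, p + q ≠ n → w p q = 0) →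
    (∀ p, N ≤ p → y p = 0) → (∀ p, N ≤ p → w p = 0) →
    (∀ p q, P.DD w p q = 0) → (∀ p q, C.DD y p q = f q (w p q)) →
    ∃ y'' : P.Ch, (∀ p q, p + q ≠ n + 1 → y'' p q = 0) ∧ ∀ p q, P.DD y'' p q = w p q := by
  induction N with
  | zero =>
    intro y w _ _ _ hw _ _
    refine ⟨0, fun _ _ _ => rfl, fun p q => ?_⟩
    rw [hw p (Nat.zero_le _), DD_ap]; simp
  | succ N ih =>
    intro y w hy hw hyN hwN hDw hDy
    by_cases hN : n + 1 < N
    · refine ih y w hy hw ?_ ?_ hDw hDy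
      · intro p hp; funext q; exact hy p q (by omega)
      · intro p hp; funext q; exact hw p q (by omega)
    obtain ⟨q, hq⟩ : ∃ q, N + q = n + 1 := ⟨n+1-N, by omega⟩
    obtain ⟨u, z, hu, hz⟩ := lift_step hf hi hs N q y w (hyN _ le_rfl) (hwN _ le_rfl) hDw hDy
    refine Exists.elim (ih
      (y + (fun p b => f b (P.sg N q u p b)) + C.DD (C.sg N (q+1) z))
      (w + P.DD (P.sg N q u)) ?_ ?_ ?_ ?_ ?_ ?_) ?_
    · intro a b hab
      simp only [Pi.add_apply]
      rw [hy a b hab, sg_ne _ _ _ _ _ _ (by omega), DD_sg_deg _ _ _ _ _ (by omega)]; simp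
    · intro a b hab
      simp only [Pi.add_apply]
      rw [hw a b hab, DD_sg_deg _ _ _ _ _ (by omega)]; simp
    · intro a ha
      funext b
      simp only [Pi.add_apply, Pi.zero_apply]
      rcases Nat.lt_or_ge N a with h | h
      · rw [hyN a h, sg_ne _ _ _ _ _ _ (by omega), DD_sg_gt _ _ _ _ _ h]; simp
      · obtain rfl : a = N := by omega
        by_cases hb : b = q
        · subst hb
          rw [sg_same, DD_sg_top, ← hz]; exact add_self2 _
        · rw [hy _ _ (by omega), sg_ne _ _ _ _ _ _ (by omega), DD_sg_deg _ _ _ _ _ (by omega)]; simp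
    · intro a ha
      funext b
      simp only [Pi.add_apply, Pi.zero_apply]
      rcases Nat.lt_or_ge N a with h | h
      · rw [hwN a h, DD_sg_gt _ _ _ _ _ h]; simp
      · obtain rfl : a = N := by omega
        by_cases hb : q = b + 1
        · subst hb
          rw [DD_sg_top, hu b u HEq.rfl rfl]; exact add_self2 _
        · rw [hw _ _ (by omega), DD_sg_deg _ _ _ _ _ (by omega)]; simp
    · intro a b
      rw [DD_add, hDw, DD_DD, add_zero]
    · intro a b
      rw [DD_add, DD_add, DD_DD, add_zero, hDy, ← hf.DD]
      simp only [Pi.add_apply, map_add]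
    · rintro y'' ⟨h1, h2⟩
      refine ⟨y'' + P.sg N q u, ?_, ?_⟩
      · intro a b hab
        rw [Pi.add_apply, Pi.add_apply, h1 a b hab, sg_ne _ _ _ _ _ _ (by omega), add_zero]
      · intro a b
        rw [DD_add, h2, Pi.add_apply, Pi.add_apply, add_assoc, add_self2, add_zero]

include hf hi hs in
theorem inj_push (hP : P.Inj) : C.Inj := by
  intro n y hy hD
  obtain ⟨x', hx', c, hc⟩ := colsurj hs 0 n (C.DD y 0 n) (DD_cyc y 0 n (hD 0))
  obtain ⟨y'', h1, h2⟩ := lift_bound hf hi hs n (n+2) (y + C.sg 0 (n+1) c) (P.sg 0 n x')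
    (by intro a b hab; simp only [Pi.add_apply]; rw [hy _ _ hab, sg_ne _ _ _ _ _ _ (by omega)]; simp)
    (by intro a b hab; rw [sg_ne _ _ _ _ _ _ (by omega)])
    (by intro a ha; funext b; simp only [Pi.add_apply]
        rw [hy _ _ (by omega), sg_ne _ _ _ _ _ _ (by omega)]; simp)
    (by intro a ha; funext b; rw [sg_ne _ _ _ _ _ _ (by omega)]; rfl)
    (by
      intro a b
      by_cases hab : a = 0 ∧ n = b+1
      · obtain ⟨rfl, rfl⟩ := hab
        rw [DD_sg_top]; exact hx'
      · rw [DD_ap, sg_ne _ _ _ _ _ _ (by omega), sg_ne _ _ _ _ _ _ (by omega)]; simp)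
    (by
      intro a b
      rw [DD_add, map_sg]
      by_cases hab : a = 0 ∧ b = n
      · obtain ⟨rfl, rfl⟩ := hab
        rw [DD_sg_top, sg_same, ← hc, ← add_assoc, add_self2, zero_add]
      · rw [sg_ne _ _ _ _ _ _ (by omega)]
        by_cases ha : a = 0
        · subst ha
          rw [DD_sg_deg _ _ _ _ _ (by omega), DD_ap, hy _ _ (by omega), hy _ _ (by omega)]; simp
        · obtain ⟨a', rfl⟩ := Nat.exists_eq_succ_of_ne_zero ha
          rw [DD_sg_gt _ _ _ _ _ (by omega)]
          rw [hD a' b, add_zero])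
  obtain ⟨z, hz⟩ := hP n y'' h1 (fun p q => by rw [h2, sg_ne _ _ _ _ _ _ (by omega)])
  rw [h2, sg_same] at hz
  refine ⟨f (n+1) z + c, ?_⟩
  rw [map_add, ← hf.bd, hz]
  rw [v_zero] at hc
  rw [← hc, add_comm, add_assoc, add_self2, add_zero]
end lift

theorem conc_inj {n0 : ℕ} (h : Conc C n0) : C.Inj := by
  intro n y hy hD
  by_cases hn : n = n0
  swap
  · exact h n hn _ ((cc_zero _ _).1 (DD_cyc y 0 n (hD 0)))
  have key : ∀ P : ℕ, ∀ y : C.Ch, (∀ p q, p + q ≠ n + 1 → y p q = 0) →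
      (∀ p q, C.DD y (p+1) q = 0) → (∀ p, P < p → y p = 0) → ∃ z, C.bd n z = C.DD y 0 n := by
    intro P
    induction P with
    | zero =>
      intro y hy hD hP
      refine ⟨y 0 (n+1), ?_⟩
      rw [DD_ap, hP 1 (by omega), v_zero]; simp
    | succ P ih =>
      intro y hy hD hP
      by_cases hPn : n < P
      · refine ih y hy hD ?_
        intro p hp; funext q; exact hy p q (by omega)
      obtain ⟨q, hq⟩ : ∃ q, P + q = n := ⟨n-P, by omega⟩
      have hcyc := cc_of_top y (P+1) q (hP _ (by omega)) (hD P)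
      obtain ⟨ζ, hζ⟩ : ∃ ζ, C.v (P+1) q ζ = y (P+1) q := by
        by_cases hev : Even (P+1)
        · rw [cc_even hev] at hcyc
          rw [v_even hev]
          have : P ≠ 0 := by rintro rfl; simp at hev
          exact h q (by omega) _ hcyc
        · exact C.odd_acyc _ hev q _ hcyc
      refine Exists.elim (ih (y + C.DD (C.sg (P+1) (q+1) ζ)) ?_ ?_ ?_) ?_
      · intro a b hab
        simp only [Pi.add_apply]
        rw [hy a b hab, DD_sg_deg _ _ _ _ _ (by omega)]; simp
      · intro a b
        rw [DD_add, DD_DD, add_zero, hD]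
      · intro a ha
        funext b
        simp only [Pi.add_apply, Pi.zero_apply]
        rcases Nat.lt_or_ge (P+1) a with h' | h'
        · rw [hP a h', DD_sg_gt _ _ _ _ _ h']; simp
        · obtain rfl : a = P+1 := by omega
          by_cases hb : b = q
          · subst hb
            rw [DD_sg_top, hζ]; exact add_self2 _
          · rw [hy _ _ (by omega), DD_sg_deg _ _ _ _ _ (by omega)]; simp
      · rintro z hz
        refine ⟨z, ?_⟩
        rw [hz, DD_add, DD_DD, add_zero]
  refine key (n+1) y hy hD ?_
  intro p hp; funext q; exact hy p q (by omega)

end CycMod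

/-- build a cyclic module from a jointly injective family of maps to cyclic modules -/
def ofInj (X : ℕ → Type) [∀ n, AddCommGroup (X n)] [∀ n, Module (ZMod 2) (X n)]
    (d : ∀ n : ℕ, ℕ → (X (n + 1) →ₗ[ZMod 2] X n))
    (s : ∀ n : ℕ, ℕ → (X n →ₗ[ZMod 2] X (n + 1)))
    (t : ∀ n : ℕ, X n →ₗ[ZMod 2] X n)
    {ι : Type} (D : ι → CycMod) (f : ∀ a n, X n →ₗ[ZMod 2] (D a).X n)
    (inj : ∀ n (x y : X n), (∀ a, f a n x = f a n y) → x = y)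
    (hd : ∀ a n i, i ≤ n + 1 → ∀ x, f a n (d n i x) = (D a).d n i (f a (n+1) x))
    (hs : ∀ a n i, i ≤ n → ∀ x, f a (n+1) (s n i x) = (D a).s n i (f a n x))
    (ht : ∀ a n x, f a n (t n x) = (D a).t n (f a n x)) : CycMod where
  X := X
  d := d
  s := s
  t := t
  dd n i j h hj := LinearMap.ext fun x => inj _ _ _ fun a => by
    simp only [LinearMap.comp_apply]
    rw [hd _ _ _ (by omega), hd _ _ _ (by omega), hd _ _ _ (by omega), hd _ _ _ (by omega),
      (D a).dd_ap n i j h hj]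
  ss n i j h hj := LinearMap.ext fun x => inj _ _ _ fun a => by
    simp only [LinearMap.comp_apply]
    rw [hs _ _ _ (by omega), hs _ _ _ (by omega), hs _ _ _ (by omega), hs _ _ _ (by omega),
      (D a).ss_ap n i j h hj]
  ds_lt n i j h hj := LinearMap.ext fun x => inj _ _ _ fun a => by
    simp only [LinearMap.comp_apply]
    rw [hd _ _ _ (by omega), hs _ _ _ (by omega), hs _ _ _ (by omega), hd _ _ _ (by omega),
      (D a).ds_lt_ap n i j h hj]
  ds_eq n j hj := ⟨LinearMap.ext fun x => inj _ _ _ fun a => by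
    simp only [LinearMap.comp_apply, LinearMap.id_apply]
    rw [hd _ _ _ (by omega), hs _ _ _ (by omega), (D a).ds_eq_ap n j hj],
    LinearMap.ext fun x => inj _ _ _ fun a => by
    simp only [LinearMap.comp_apply, LinearMap.id_apply]
    rw [hd _ _ _ (by omega), hs _ _ _ (by omega), (D a).ds_eq_ap' n j hj]⟩
  ds_gt n i j h hj := LinearMap.ext fun x => inj _ _ _ fun a => by
    simp only [LinearMap.comp_apply]
    rw [hd _ _ _ (by omega), hs _ _ _ (by omega), hs _ _ _ (by omega), hd _ _ _ (by omega),
      (D a).ds_gt_ap n i j h hj]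
  t_ord n := LinearMap.ext fun x => inj _ _ _ fun a => by
    have : ∀ k, f a n (((t n)^k) x) = (((D a).t n)^k) (f a n x) := by
      intro k
      induction k with
      | zero => simp
      | succ k ih => rw [pow_succ', pow_succ', Module.End.mul_apply, Module.End.mul_apply, ht, ih]
    rw [this, (D a).t_ord_ap]; rfl
  dt n i h hi := LinearMap.ext fun x => inj _ _ _ fun a => by
    simp only [LinearMap.comp_apply]
    rw [hd _ _ _ (by omega), ht, ht, hd _ _ _ (by omega), (D a).dt_ap n i h hi]
  d0t n := LinearMap.ext fun x => inj _ _ _ fun a => by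
    simp only [LinearMap.comp_apply]
    rw [hd _ _ _ (by omega), ht, hd _ _ _ (by omega), (D a).d0t_ap n]
  st n i h hi := LinearMap.ext fun x => inj _ _ _ fun a => by
    simp only [LinearMap.comp_apply]
    rw [hs _ _ _ (by omega), ht, ht, hs _ _ _ (by omega), (D a).st_ap n i h hi]
  s0t n := LinearMap.ext fun x => inj _ _ _ fun a => by
    simp only [LinearMap.comp_apply]
    rw [hs _ _ _ (by omega), ht, ht, ht, hs _ _ _ (by omega), (D a).s0t_ap n]

/-- build a cyclic module from a surjection from a cyclic module -/
def ofSurj (X : ℕ → Type) [∀ n, AddCommGroup (X n)] [∀ n, Module (ZMod 2) (X n)]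
    (d : ∀ n : ℕ, ℕ → (X (n + 1) →ₗ[ZMod 2] X n))
    (s : ∀ n : ℕ, ℕ → (X n →ₗ[ZMod 2] X (n + 1)))
    (t : ∀ n : ℕ, X n →ₗ[ZMod 2] X n)
    (D : CycMod) (f : ∀ n, D.X n →ₗ[ZMod 2] X n)
    (surj : ∀ n, Function.Surjective (f n))
    (hd : ∀ n i, i ≤ n + 1 → ∀ x, d n i (f (n+1) x) = f n (D.d n i x))
    (hs : ∀ n i, i ≤ n → ∀ x, s n i (f n x) = f (n+1) (D.s n i x))
    (ht : ∀ n x, t n (f n x) = f n (D.t n x)) : CycMod where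
  X := X
  d := d
  s := s
  t := t
  dd n i j h hj := LinearMap.ext fun x => by
    obtain ⟨x, rfl⟩ := surj _ x
    simp only [LinearMap.comp_apply]
    rw [hd _ _ (by omega), hd _ _ (by omega), hd _ _ (by omega), hd _ _ (by omega),
      D.dd_ap n i j h hj]
  ss n i j h hj := LinearMap.ext fun x => by
    obtain ⟨x, rfl⟩ := surj _ x
    simp only [LinearMap.comp_apply]
    rw [hs _ _ (by omega), hs _ _ (by omega), hs _ _ (by omega), hs _ _ (by omega),
      D.ss_ap n i j h hj]
  ds_lt n i j h hj := LinearMap.ext fun x => by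
    obtain ⟨x, rfl⟩ := surj _ x
    simp only [LinearMap.comp_apply]
    rw [hs _ _ (by omega), hd _ _ (by omega), hd _ _ (by omega), hs _ _ (by omega),
      D.ds_lt_ap n i j h hj]
  ds_eq n j hj := ⟨LinearMap.ext fun x => by
    obtain ⟨x, rfl⟩ := surj _ x
    simp only [LinearMap.comp_apply, LinearMap.id_apply]
    rw [hs _ _ (by omega), hd _ _ (by omega), D.ds_eq_ap n j hj],
    LinearMap.ext fun x => by
    obtain ⟨x, rfl⟩ := surj _ x
    simp only [LinearMap.comp_apply, LinearMap.id_apply]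
    rw [hs _ _ (by omega), hd _ _ (by omega), D.ds_eq_ap' n j hj]⟩
  ds_gt n i j h hj := LinearMap.ext fun x => by
    obtain ⟨x, rfl⟩ := surj _ x
    simp only [LinearMap.comp_apply]
    rw [hs _ _ (by omega), hd _ _ (by omega), hd _ _ (by omega), hs _ _ (by omega),
      D.ds_gt_ap n i j h hj]
  t_ord n := LinearMap.ext fun x => by
    obtain ⟨x, rfl⟩ := surj _ x
    have : ∀ k, ((t n)^k) (f n x) = f n (((D.t n)^k) x) := by
      intro k
      induction k with
      | zero => simp
      | succ k ih => rw [pow_succ', pow_succ', Module.End.mul_apply, Module.End.mul_apply, ih, ht]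
    rw [this, D.t_ord_ap]; rfl
  dt n i h hi := LinearMap.ext fun x => by
    obtain ⟨x, rfl⟩ := surj _ x
    simp only [LinearMap.comp_apply]
    rw [ht, hd _ _ (by omega), hd _ _ (by omega), ht, D.dt_ap n i h hi]
  d0t n := LinearMap.ext fun x => by
    obtain ⟨x, rfl⟩ := surj _ x
    simp only [LinearMap.comp_apply]
    rw [ht, hd _ _ (by omega), hd _ _ (by omega), D.d0t_ap n]
  st n i h hi := LinearMap.ext fun x => by
    obtain ⟨x, rfl⟩ := surj _ x
    simp only [LinearMap.comp_apply]
    rw [ht, hs _ _ (by omega), hs _ _ (by omega), ht, D.st_ap n i h hi]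
  s0t n := LinearMap.ext fun x => by
    obtain ⟨x, rfl⟩ := surj _ x
    simp only [LinearMap.comp_apply]
    rw [ht, hs _ _ (by omega), hs _ _ (by omega), ht, ht, D.s0t_ap n]

/-- sub-cyclic-module data -/
structure Closed (C : CycMod) (U : ∀ n, Submodule (ZMod 2) (C.X n)) : Prop where
  d : ∀ n i, i ≤ n + 1 → ∀ x ∈ U (n+1), C.d n i x ∈ U n
  s : ∀ n i, i ≤ n → ∀ x ∈ U n, C.s n i x ∈ U (n+1)
  t : ∀ n, ∀ x ∈ U n, C.t n x ∈ U n

section subquot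
variable (C : CycMod) (U : ∀ n, Submodule (ZMod 2) (C.X n)) (hU : Closed C U)

/-- sub cyclic module -/
def sub : CycMod :=
  ofInj (fun n => U n)
    (fun n i => if h : i ≤ n + 1 then (C.d n i).restrict (hU.d n i h) else 0)
    (fun n i => if h : i ≤ n then (C.s n i).restrict (hU.s n i h) else 0)
    (fun n => (C.t n).restrict (hU.t n))
    (fun _ : Unit => C) (fun _ n => (U n).subtype)
    (fun n x y h => Subtype.ext (h ()))
    (fun _ n i h x => by rw [dif_pos h]; rfl)
    (fun _ n i h x => by rw [dif_pos h]; rfl)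
    (fun _ n x => rfl)

def subι (n : ℕ) : (sub C U hU).X n →ₗ[ZMod 2] C.X n := (U n).subtype

theorem subι_wh : WH (sub C U hU) C (subι C U hU) where
  d n i h x := by
    show (((dite (i ≤ n+1) _ _ : U (n+1) →ₗ[ZMod 2] U n)) x : C.X n) = _
    rw [dif_pos h]; rfl
  s n i h x := by
    show (((dite (i ≤ n) _ _ : U n →ₗ[ZMod 2] U (n+1))) x : C.X (n+1)) = _
    rw [dif_pos h]; rfl
  t n x := rfl

theorem subι_inj (n : ℕ) : Function.Injective (subι C U hU n) := Subtype.val_injective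

theorem subι_mem (n : ℕ) (x : (sub C U hU).X n) : subι C U hU n x ∈ U n := Subtype.property x

def subMk (n : ℕ) (x : C.X n) (hx : x ∈ U n) : (sub C U hU).X n := (⟨x, hx⟩ : U n)
theorem subι_mk (n : ℕ) (x : C.X n) (hx : x ∈ U n) : subι C U hU n (subMk C U hU n x hx) = x := rfl

/-- quotient cyclic module -/
def quot : CycMod :=
  ofSurj (fun n => C.X n ⧸ U n)
    (fun n i => if h : i ≤ n + 1 then Submodule.mapQ (U (n+1)) (U n) (C.d n i) (hU.d n i h) else 0)
    (fun n i => if h : i ≤ n then Submodule.mapQ (U n) (U (n+1)) (C.s n i) (hU.s n i h) else 0)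
    (fun n => Submodule.mapQ (U n) (U n) (C.t n) (hU.t n))
    C (fun n => (U n).mkQ)
    (fun n => Submodule.mkQ_surjective _)
    (fun n i h x => by rw [dif_pos h]; rfl)
    (fun n i h x => by rw [dif_pos h]; rfl)
    (fun n x => rfl)

def quotπ (n : ℕ) : C.X n →ₗ[ZMod 2] (quot C U hU).X n := (U n).mkQ

theorem quotπ_wh : WH C (quot C U hU) (quotπ C U hU) where
  d n i h x := by
    show _ = (dite (i ≤ n+1) _ _ : (C.X (n+1) ⧸ U (n+1)) →ₗ[ZMod 2] (C.X n ⧸ U n)) _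
    rw [dif_pos h]; rfl
  s n i h x := by
    show _ = (dite (i ≤ n) _ _ : (C.X n ⧸ U n) →ₗ[ZMod 2] (C.X (n+1) ⧸ U (n+1))) _
    rw [dif_pos h]; rfl
  t n x := rfl

theorem quotπ_surj (n : ℕ) : Function.Surjective (quotπ C U hU n) := Submodule.mkQ_surjective _

theorem quotπ_eq_zero (n : ℕ) (x : C.X n) : quotπ C U hU n x = 0 ↔ x ∈ U n :=
  Submodule.Quotient.mk_eq_zero _

/-- lift -/
def quotLift (n : ℕ) {V : Type} [AddCommGroup V] [Module (ZMod 2) V] (f : C.X n →ₗ[ZMod 2] V)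
    (hf : ∀ x ∈ U n, f x = 0) : (quot C U hU).X n →ₗ[ZMod 2] V :=
  (U n).liftQ f hf
theorem quotLift_mk (n : ℕ) {V : Type} [AddCommGroup V] [Module (ZMod 2) V] (f : C.X n →ₗ[ZMod 2] V)
    (hf : ∀ x ∈ U n, f x = 0) (x : C.X n) : quotLift C U hU n f hf (quotπ C U hU n x) = f x := rfl
end subquot

/-- product of cyclic modules -/
def piC {ι : Type} (D : ι → CycMod) : CycMod :=
  ofInj (fun n => ∀ a, (D a).X n)
    (fun n i => LinearMap.pi fun a => ((D a).d n i).comp (LinearMap.proj a))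
    (fun n i => LinearMap.pi fun a => ((D a).s n i).comp (LinearMap.proj a))
    (fun n => LinearMap.pi fun a => ((D a).t n).comp (LinearMap.proj a))
    D (fun a n => LinearMap.proj a)
    (fun n x y h => funext h)
    (fun _ _ _ _ _ => rfl) (fun _ _ _ _ _ => rfl) (fun _ _ _ => rfl)

def piPr {ι : Type} (D : ι → CycMod) (a : ι) (n : ℕ) : (piC D).X n →ₗ[ZMod 2] (D a).X n :=
  (LinearMap.proj a : (∀ a, (D a).X n) →ₗ[ZMod 2] (D a).X n)
theorem piPr_hom {ι : Type} (D : ι → CycMod) (a : ι) : IsCycHom (piC D) (D a) (piPr D a) :=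
  ⟨fun _ _ => rfl, fun _ _ => rfl, fun _ => rfl⟩
def piLift {ι : Type} (D : ι → CycMod) (C : CycMod) (f : ∀ a n, C.X n →ₗ[ZMod 2] (D a).X n) (n : ℕ) :
    C.X n →ₗ[ZMod 2] (piC D).X n :=
  (LinearMap.pi fun a => f a n : C.X n →ₗ[ZMod 2] (∀ a, (D a).X n))
theorem piPr_lift {ι : Type} (D : ι → CycMod) (C : CycMod) (f : ∀ a n, C.X n →ₗ[ZMod 2] (D a).X n)
    (a : ι) (n : ℕ) (x : C.X n) : piPr D a n (piLift D C f n x) = f a n x := rfl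
theorem piC_ext {ι : Type} (D : ι → CycMod) (n : ℕ) (x y : (piC D).X n)
    (h : ∀ a, piPr D a n x = piPr D a n y) : x = y := funext h
def piMk {ι : Type} (D : ι → CycMod) (n : ℕ) (x : ∀ a, (D a).X n) : (piC D).X n := x
theorem piPr_mk {ι : Type} (D : ι → CycMod) (n : ℕ) (x : ∀ a, (D a).X n) (a : ι) :
    piPr D a n (piMk D n x) = x a := rfl

/-- binary product -/
def prodC (C D : CycMod) : CycMod :=
  ofInj (fun n => C.X n × D.X n)
    (fun n i => (C.d n i).prodMap (D.d n i))
    (fun n i => (C.s n i).prodMap (D.s n i))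
    (fun n => (C.t n).prodMap (D.t n))
    (fun b : Bool => match b with | true => C | false => D)
    (fun b n => match b with
      | true => LinearMap.fst _ _ _
      | false => LinearMap.snd _ _ _)
    (fun n x y h => Prod.ext (h true) (h false))
    (by rintro (_|_) <;> intros <;> rfl) (by rintro (_|_) <;> intros <;> rfl)
    (by rintro (_|_) <;> intros <;> rfl)

section prod
variable (C D : CycMod)
def pfst (n : ℕ) : (prodC C D).X n →ₗ[ZMod 2] C.X n := LinearMap.fst (ZMod 2) (C.X n) (D.X n)
def psnd (n : ℕ) : (prodC C D).X n →ₗ[ZMod 2] D.X n := LinearMap.snd (ZMod 2) (C.X n) (D.X n)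
def pinl (n : ℕ) : C.X n →ₗ[ZMod 2] (prodC C D).X n := LinearMap.inl (ZMod 2) (C.X n) (D.X n)
def pinr (n : ℕ) : D.X n →ₗ[ZMod 2] (prodC C D).X n := LinearMap.inr (ZMod 2) (C.X n) (D.X n)
theorem pfst_wh : WH (prodC C D) C (pfst C D) :=
  ⟨fun _ _ _ _ => rfl, fun _ _ _ _ => rfl, fun _ _ => rfl⟩
theorem psnd_wh : WH (prodC C D) D (psnd C D) :=
  ⟨fun _ _ _ _ => rfl, fun _ _ _ _ => rfl, fun _ _ => rfl⟩
theorem prod_ext (n : ℕ) {x y : (prodC C D).X n} (h1 : pfst C D n x = pfst C D n y)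
    (h2 : psnd C D n x = psnd C D n y) : x = y := Prod.ext h1 h2
theorem pfst_inl (n : ℕ) (x : C.X n) : pfst C D n (pinl C D n x) = x := rfl
theorem psnd_inl (n : ℕ) (x : C.X n) : psnd C D n (pinl C D n x) = 0 := rfl
theorem pfst_inr (n : ℕ) (x : D.X n) : pfst C D n (pinr C D n x) = 0 := rfl
theorem psnd_inr (n : ℕ) (x : D.X n) : psnd C D n (pinr C D n x) = x := rfl
theorem pinl_wh : WH C (prodC C D) (pinl C D) :=
  ⟨fun n i h x => prod_ext _ _ _ rfl (map_zero (D.d n i)).symm,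
   fun n i h x => prod_ext _ _ _ rfl (map_zero (D.s n i)).symm,
   fun n x => prod_ext _ _ _ rfl (map_zero (D.t n)).symm⟩
theorem pinr_wh : WH D (prodC C D) (pinr C D) :=
  ⟨fun n i h x => prod_ext _ _ _ (map_zero (C.d n i)).symm rfl,
   fun n i h x => prod_ext _ _ _ (map_zero (C.s n i)).symm rfl,
   fun n x => prod_ext _ _ _ (map_zero (C.t n)).symm rfl⟩
end prod

/-- change out-of-range data -/
def rejunk (U C : CycMod) (f : ∀ n, C.X n →ₗ[ZMod 2] U.X n) (r : ∀ n, U.X n →ₗ[ZMod 2] C.X n) :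
    CycMod :=
  ofInj U.X
    (fun n i => if i ≤ n + 1 then U.d n i else (f n).comp ((C.d n i).comp (r (n+1))))
    (fun n i => if i ≤ n then U.s n i else (f (n+1)).comp ((C.s n i).comp (r n)))
    U.t (fun _ : Unit => U) (fun _ _ => LinearMap.id)
    (fun n x y h => h ())
    (fun _ n i h x => by rw [if_pos h]; rfl)
    (fun _ n i h x => by rw [if_pos h]; rfl)
    (fun _ _ _ => rfl)

section rejunk
variable (U C : CycMod) (f : ∀ n, C.X n →ₗ[ZMod 2] U.X n) (r : ∀ n, U.X n →ₗ[ZMod 2] C.X n)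

def rejι (n : ℕ) : (rejunk U C f r).X n →ₗ[ZMod 2] U.X n := (LinearMap.id : U.X n →ₗ[ZMod 2] U.X n)
def rejι' (n : ℕ) : U.X n →ₗ[ZMod 2] (rejunk U C f r).X n := (LinearMap.id : U.X n →ₗ[ZMod 2] U.X n)

theorem rejι_wh : WH (rejunk U C f r) U (rejι U C f r) where
  d n i h x := by
    show (ite (i ≤ n+1) _ _ : U.X (n+1) →ₗ[ZMod 2] U.X n) x = _
    rw [if_pos h]; rfl
  s n i h x := by
    show (ite (i ≤ n) _ _ : U.X n →ₗ[ZMod 2] U.X (n+1)) x = _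
    rw [if_pos h]; rfl
  t n x := rfl
theorem rejι'_wh : WH U (rejunk U C f r) (rejι' U C f r) where
  d n i h x := by
    show _ = (ite (i ≤ n+1) _ _ : U.X (n+1) →ₗ[ZMod 2] U.X n) x
    rw [if_pos h]; rfl
  s n i h x := by
    show _ = (ite (i ≤ n) _ _ : U.X n →ₗ[ZMod 2] U.X (n+1)) x
    rw [if_pos h]; rfl
  t n x := rfl

theorem rej_hom (hf : WH C U f) (hr : ∀ n x, r n (f n x) = x) :
    IsCycHom C (rejunk U C f r) (fun n => (rejι' U C f r n).comp (f n)) := by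
  refine ⟨fun n i => LinearMap.ext fun x => ?_, fun n i => LinearMap.ext fun x => ?_,
    fun n => LinearMap.ext fun x => hf.t n x⟩
  · show f n (C.d n i x) = (ite (i ≤ n+1) _ _ : U.X (n+1) →ₗ[ZMod 2] U.X n) (f (n+1) x)
    split_ifs with h
    · exact hf.d n i h x
    · show _ = f n (C.d n i (r (n+1) (f (n+1) x)))
      rw [hr]
  · show f (n+1) (C.s n i x) = (ite (i ≤ n) _ _ : U.X n →ₗ[ZMod 2] U.X (n+1)) (f n x)
    split_ifs with h
    · exact hf.s n i h x
    · show _ = f (n+1) (C.s n i (r n (f n x)))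
      rw [hr]
end rejunk

/-- Conc transfers along isomorphisms -/
theorem Conc.iso {C D : CycMod} {f : ∀ n, C.X n →ₗ[ZMod 2] D.X n} {g : ∀ n, D.X n →ₗ[ZMod 2] C.X n}
    (hf : WH C D f) (hg : WH D C g) (h : ∀ n x, g n (f n x) = x) {j : ℕ} (hD : Conc D j) :
    Conc C j := by
  intro m hm w hw
  obtain ⟨z, hz⟩ := hD m hm _ (hf.cyc m w hw)
  exact ⟨g (m+1) z, by rw [← hg.bd, hz, h]⟩

/-- constant cyclic module -/
def constC (V : Type) [AddCommGroup V] [Module (ZMod 2) V] : CycMod where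
  X := fun _ => V
  d := fun _ _ => LinearMap.id
  s := fun _ _ => LinearMap.id
  t := fun _ => LinearMap.id
  dd := by intros; rfl
  ss := by intros; rfl
  ds_lt := by intros; rfl
  ds_eq := by intros; exact ⟨rfl, rfl⟩
  ds_gt := by intros; rfl
  t_ord := by intro n; exact one_pow _
  dt := by intros; rfl
  d0t := by intros; rfl
  st := by intros; rfl
  s0t := by intros; rfl

theorem constC_bd (V : Type) [AddCommGroup V] [Module (ZMod 2) V] (n : ℕ) (x : V) :
    ((constC V).bd n : V →ₗ[ZMod 2] V) x = if Even n then 0 else x := by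
  have h1 : ((constC V).bd n : V →ₗ[ZMod 2] V) x = ∑ i ∈ Finset.range (n+2), x :=
    (constC V).bd_ap n x
  rw [h1, Finset.sum_const, Finset.card_range]
  have h2 : (n+2) • x = ((n+2 : ℕ) : ZMod 2) • x := (Nat.cast_smul_eq_nsmul (ZMod 2) _ _).symm
  rw [h2]
  split_ifs with h
  · have : ((n+2 : ℕ) : ZMod 2) = 0 := by
      rw [ZMod.natCast_eq_zero_iff]; obtain ⟨k, rfl⟩ := h; omega
    rw [this, zero_smul]
  · have : ((n+2 : ℕ) : ZMod 2) = 1 := by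
      rw [Nat.not_even_iff_odd] at h
      obtain ⟨k, rfl⟩ := h
      push_cast
      have : (2 : ZMod 2) = 0 := rfl
      rw [this]; ring
    rw [this, one_smul]

theorem constC_conc (V : Type) [AddCommGroup V] [Module (ZMod 2) V] : Conc (constC V) 0 := by
  intro m hm w hw
  obtain ⟨m, rfl⟩ := Nat.exists_eq_succ_of_ne_zero hm
  have hw' : (if Even m then (0 : V) else w) = 0 := (constC_bd V m w).symm.trans hw
  by_cases h : Even m
  · refine ⟨w, (constC_bd V (m+1) w).trans (if_neg ?_)⟩
    simpa [Nat.even_add_one] using h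
  · have hw2 : w = 0 := (if_neg h).symm.trans hw'
    exact ⟨0, by rw [map_zero, hw2]⟩

def exDel (n i : ℕ) (b : Fin (n+1)) : Fin (n+2) :=
  ⟨if b.1 < i then b.1 else b.1 + 1, by have := b.2; split_ifs <;> omega⟩
def exSig (n i : ℕ) (b : Fin (n+2)) : Fin (n+1) :=
  ⟨min (if b.1 ≤ i then b.1 else b.1 - 1) n, by have := b.2; omega⟩
def exTau (n : ℕ) (b : Fin (n+1)) : Fin (n+1) :=
  ⟨if b.1 = 0 then n else b.1 - 1, by have := b.2; split_ifs <;> omega⟩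

def exT (C : CycMod) (n : ℕ) : (Fin (n+1) → C.X n) →ₗ[ZMod 2] (Fin (n+1) → C.X n) :=
  LinearMap.pi fun b => (C.t n).comp (LinearMap.proj (exTau n b))

theorem exT_pow (C : CycMod) (n k : ℕ) (hk : k ≤ n + 1) (x : Fin (n+1) → C.X n) (b c : Fin (n+1))
    (hc : c.1 = if k ≤ b.1 then b.1 - k else b.1 + n + 1 - k) :
    ((exT C n)^k) x b = ((C.t n)^k) (x c) := by
  induction k generalizing b c with
  | zero => simp at hc ⊢; rw [Fin.ext hc]
  | succ k ih =>
    rw [pow_succ', pow_succ', Module.End.mul_apply, Module.End.mul_apply]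
    show C.t n (((exT C n)^k) x (exTau n b)) = _
    rw [ih (by omega) (exTau n b) c]
    have := b.2; have := c.2
    simp only [exTau]
    split_ifs at hc ⊢ <;> omega

/-- the contractible cyclic module of functions -/
def expo (C : CycMod) : CycMod where
  X := fun n => Fin (n+1) → C.X n
  d := fun n i => LinearMap.pi fun b => (C.d n i).comp (LinearMap.proj (exDel n i b))
  s := fun n i => LinearMap.pi fun b => (C.s n i).comp (LinearMap.proj (exSig n i b))
  t := exT C
  dd n i j h hj := LinearMap.ext fun x => funext fun b => by
    refine (C.dd_ap n i j h hj _).trans ?_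
    have e : exDel (n+1) j (exDel n i b) = exDel (n+1) i (exDel n (j-1) b) := by
      apply Fin.ext; have := b.2; simp only [exDel]; split_ifs <;> omega
    rw [e]; rfl
  ss n i j h hj := LinearMap.ext fun x => funext fun b => by
    refine (C.ss_ap n i j h hj _).trans ?_
    have e : exSig n j (exSig (n+1) i b) = exSig n i (exSig (n+1) (j+1) b) := by
      apply Fin.ext; have := b.2; simp only [exSig]; split_ifs <;> omega
    rw [e]; rfl
  ds_lt n i j h hj := LinearMap.ext fun x => funext fun b => by
    refine (C.ds_lt_ap n i j h hj _).trans ?_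
    have e : exSig (n+1) j (exDel (n+1) i b) = exDel n i (exSig n (j-1) b) := by
      apply Fin.ext; have := b.2; simp only [exSig, exDel]; split_ifs <;> omega
    rw [e]; rfl
  ds_eq n j hj := ⟨LinearMap.ext fun x => funext fun b => by
    refine (C.ds_eq_ap n j hj _).trans ?_
    have e : exSig n j (exDel n j b) = b := by
      apply Fin.ext; have := b.2; simp only [exSig, exDel]; split_ifs <;> omega
    rw [e]; rfl, LinearMap.ext fun x => funext fun b => by
    refine (C.ds_eq_ap' n j hj _).trans ?_
    have e : exSig n j (exDel n (j+1) b) = b := by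
      apply Fin.ext; have := b.2; simp only [exSig, exDel]; split_ifs <;> omega
    rw [e]; rfl⟩
  ds_gt n i j h hj := LinearMap.ext fun x => funext fun b => by
    refine (C.ds_gt_ap n i j h hj _).trans ?_
    have e : exSig (n+1) j (exDel (n+1) i b) = exDel n (i-1) (exSig n j b) := by
      apply Fin.ext; have := b.2; simp only [exSig, exDel]; split_ifs <;> omega
    rw [e]; rfl
  t_ord n := LinearMap.ext fun x => funext fun b => by
    rw [exT_pow C n (n+1) le_rfl x b b (by have := b.2; split_ifs <;> omega), C.t_ord_ap]; rfl
  dt n i h hi := LinearMap.ext fun x => funext fun b => by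
    refine (C.dt_ap n i h hi _).trans ?_
    have e : exTau (n+1) (exDel n i b) = exDel n (i-1) (exTau n b) := by
      apply Fin.ext; have := b.2; simp only [exTau, exDel]; grind
    rw [e]; rfl
  d0t n := LinearMap.ext fun x => funext fun b => by
    refine (C.d0t_ap n _).trans ?_
    have e : exTau (n+1) (exDel n 0 b) = exDel n (n+1) b := by
      apply Fin.ext; have := b.2; simp only [exTau, exDel]; grind
    rw [e]; rfl
  st n i h hi := LinearMap.ext fun x => funext fun b => by
    refine (C.st_ap n i h hi _).trans ?_
    have e : exTau n (exSig n i b) = exSig n (i-1) (exTau (n+1) b) := by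
      apply Fin.ext; have := b.2; simp only [exTau, exSig]; split_ifs <;> omega
    rw [e]; rfl
  s0t n := LinearMap.ext fun x => funext fun b => by
    refine (C.s0t_ap n _).trans ?_
    have e : exTau n (exSig n 0 b) = exSig n n (exTau (n+1) (exTau (n+1) b)) := by
      apply Fin.ext; have := b.2; simp only [exTau, exSig]; split_ifs <;> omega
    rw [e]; rfl

section expo
variable (C : CycMod)
def exMk (n : ℕ) (x : Fin (n+1) → C.X n) : (expo C).X n := x
def exPr (n : ℕ) (b : Fin (n+1)) : (expo C).X n →ₗ[ZMod 2] C.X n :=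
  (LinearMap.proj b : (Fin (n+1) → C.X n) →ₗ[ZMod 2] C.X n)
theorem exPr_mk (n : ℕ) (x : Fin (n+1) → C.X n) (b) : exPr C n b (exMk C n x) = x b := rfl
theorem ex_ext (n : ℕ) {x y : (expo C).X n} (h : ∀ b, exPr C n b x = exPr C n b y) : x = y :=
  funext h
theorem exPr_d (n i : ℕ) (x : (expo C).X (n+1)) (b) :
    exPr C n b ((expo C).d n i x) = C.d n i (exPr C (n+1) (exDel n i b) x) := rfl
/-- constants -/
def exC (n : ℕ) : C.X n →ₗ[ZMod 2] (expo C).X n :=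
  (LinearMap.pi fun _ => LinearMap.id : C.X n →ₗ[ZMod 2] (Fin (n+1) → C.X n))
theorem exPr_exC (n : ℕ) (x : C.X n) (b) : exPr C n b (exC C n x) = x := rfl
theorem exC_wh : WH C (expo C) (exC C) :=
  ⟨fun _ _ _ _ => rfl, fun _ _ _ _ => rfl, fun _ _ => rfl⟩
theorem exC_inj (n : ℕ) : Function.Injective (exC C n) := fun x y h => by
  have := congrArg (exPr C n 0) h
  exact this

theorem sum_skip {M : Type} [AddCommMonoid M] (m a : ℕ) (ha : a ≤ m) (F : ℕ → M) :
    ∑ i ∈ Finset.range (m+1), F i = F a + ∑ i ∈ Finset.range m, F (if i < a then i else i+1) := by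
  induction m generalizing F with
  | zero => obtain rfl : a = 0 := by omega
            simp
  | succ m ih =>
    rcases Nat.lt_or_ge m a with h | h
    · obtain rfl : a = m+1 := by omega
      rw [Finset.sum_range_succ, add_comm]
      congr 1
      exact Finset.sum_congr rfl fun i hi => by rw [if_pos (by simpa using hi)]
    · rw [Finset.sum_range_succ, ih h, Finset.sum_range_succ (fun i => F (if i < a then i else i+1)),
        if_neg (by omega), add_assoc]

/-- contraction -/
def exH (n : ℕ) (x : (expo C).X n) : (expo C).X (n+1) :=
  exMk C (n+1) fun a => if h : a.1 < n+1 then C.s n a.1 (exPr C n ⟨a.1, h⟩ x) else 0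

theorem exH_pr_lt (n : ℕ) (x : (expo C).X n) (a : Fin (n+2)) (h : a.1 < n+1) :
    exPr C (n+1) a (exH C n x) = C.s n a.1 (exPr C n ⟨a.1, h⟩ x) := dif_pos h
theorem exH_pr_ge (n : ℕ) (x : (expo C).X n) (a : Fin (n+2)) (h : ¬ a.1 < n+1) :
    exPr C (n+1) a (exH C n x) = 0 := dif_neg h

theorem exH_main (n : ℕ) (x : (expo C).X n) (b : Fin (n+1)) :
    C.d n (b.1+1) (exPr C (n+1) (exDel n (b.1+1) b) (exH C n x)) = exPr C n b x := by
  have e : exDel n (b.1+1) b = ⟨b.1, by omega⟩ := Fin.ext (by simp [exDel])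
  rw [e, exH_pr_lt C n x _ b.2, C.ds_eq_ap' n b.1 (by omega)]

theorem exH_other (n : ℕ) (x : (expo C).X (n+1)) (b : Fin (n+2)) (i : ℕ) (hi : i < n + 2) :
    C.d (n+1) (if i < b.1+1 then i else i+1)
      (exPr C (n+2) (exDel (n+1) (if i < b.1+1 then i else i+1) b) (exH C (n+1) x))
      = if h : b.1 < n + 1 then C.s n b.1 (C.d n i (exPr C (n+1) (exDel n i ⟨b.1, h⟩) x)) else 0 := by
  by_cases hib : i < b.1 + 1
  · simp only [if_pos hib]
    have e : exDel (n+1) i b = ⟨b.1+1, by omega⟩ := Fin.ext (by simp [exDel]; omega)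
    rw [e]
    by_cases h : b.1 < n + 1
    · rw [exH_pr_lt C (n+1) x _ (by simp; omega), dif_pos h, C.ds_lt_ap n i (b.1+1) hib (by omega)]
      have e2 : exDel n i ⟨b.1, h⟩ = ⟨b.1+1, by omega⟩ := Fin.ext (by simp [exDel]; omega)
      rw [e2]; rfl
    · rw [exH_pr_ge C (n+1) x _ (by simp; omega), dif_neg h, map_zero]
  · simp only [if_neg hib]
    have e : exDel (n+1) (i+1) b = ⟨b.1, by omega⟩ := Fin.ext (by simp [exDel]; omega)
    have h : b.1 < n + 1 := by omega
    rw [e, exH_pr_lt C (n+1) x _ b.2, dif_pos h, C.ds_gt_ap n (i+1) b.1 (by omega) (by omega)]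
    have e2 : exDel n i ⟨b.1, h⟩ = b := Fin.ext (by simp [exDel]; omega)
    rw [e2]; rfl

theorem exH_other0 (x : (expo C).X 0) (b : Fin 1) :
    C.d 0 0 (exPr C 1 (exDel 0 0 b) (exH C 0 x)) = 0 := by
  have e : exDel 0 0 b = ⟨1, by omega⟩ := Fin.ext (by simp [exDel])
  rw [e, exH_pr_ge C 0 x _ (by simp), map_zero]

theorem expo_acyc (m : ℕ) (w : (expo C).X m) (hw : w ∈ (expo C).cyc m) :
    w ∈ LinearMap.range ((expo C).bd m) := by
  refine ⟨exH C m w, ex_ext C m fun b => ?_⟩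
  rw [CycMod.bd_ap, map_sum]
  simp only [exPr_d]
  rw [sum_skip (m+1) (b.1+1) (by omega)
    (fun i => C.d m i (exPr C (m+1) (exDel m i b) (exH C m w))), exH_main]
  rw [add_eq_left]
  cases m with
  | zero =>
    rw [Finset.sum_range_one]
    simpa using exH_other0 C w b
  | succ n =>
    rw [Finset.sum_congr rfl fun i hi => exH_other C n w b i (by rw [Finset.mem_range] at hi; omega)]
    split_ifs with h
    · rw [← map_sum]
      have hw' : (expo C).bd n w = 0 := hw
      have := congrArg (exPr C n ⟨b.1, h⟩) hw'
      rw [CycMod.bd_ap, map_sum, map_zero] at this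
      simp only [exPr_d] at this
      rw [this, map_zero]
    · simp
end expo

section sgl
variable {V W : Type} [AddCommGroup V] [Module (ZMod 2) V] [AddCommGroup W] [Module (ZMod 2) W]

/-- basis-type element -/
def sgl (V : Type) [AddCommGroup V] [Module (ZMod 2) V] (n a : ℕ) : V →ₗ[ZMod 2] (Fin (n+1) → V) :=
  LinearMap.pi fun b => if b.1 = a then LinearMap.id else 0

theorem sgl_ap (n a : ℕ) (x : V) (b : Fin (n+1)) : sgl V n a x b = if b.1 = a then x else 0 := by
  unfold sgl; rw [LinearMap.pi_apply]; split_ifs <;> rfl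

theorem sgl_sum (n : ℕ) (y : Fin (n+1) → V) : ∑ a : Fin (n+1), sgl V n a.1 (y a) = y := by
  funext b
  rw [Finset.sum_apply, Finset.sum_eq_single b]
  · rw [sgl_ap, if_pos rfl]
  · intro a _ h; rw [sgl_ap, if_neg]; intro e; exact h (Fin.ext e.symm)
  · simp

theorem sgl_ext {n : ℕ} {f g : (Fin (n+1) → V) →ₗ[ZMod 2] W}
    (h : ∀ a, a ≤ n → ∀ x, f (sgl V n a x) = g (sgl V n a x)) : f = g := by
  refine LinearMap.ext fun y => ?_
  rw [← sgl_sum n y, map_sum, map_sum]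
  exact Finset.sum_congr rfl fun a _ => h a.1 (by omega) _

/-- monomial map -/
def bm (n m : ℕ) (f : ℕ → ℕ) (A : ℕ → V →ₗ[ZMod 2] W) :
    (Fin (n+1) → V) →ₗ[ZMod 2] (Fin (m+1) → W) :=
  ∑ a : Fin (n+1), (sgl W m (f a.1)).comp ((A a.1).comp (LinearMap.proj a))

theorem bm_sgl (n m : ℕ) (f : ℕ → ℕ) (A : ℕ → V →ₗ[ZMod 2] W) (a : ℕ) (ha : a ≤ n) (x : V) :
    bm n m f A (sgl V n a x) = sgl W m (f a) (A a x) := by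
  unfold bm
  rw [LinearMap.sum_apply, Finset.sum_eq_single (⟨a, by omega⟩ : Fin (n+1))]
  · simp [sgl_ap]
  · intro b _ hb
    have : ¬ b.1 = a := fun e => hb (Fin.ext e)
    simp [sgl_ap, this]
  · simp
end sgl

section Fd
variable (C : CycMod)

theorem dd_gen (n p q p' q' : ℕ) (x : C.X (n+2))
    (h : (p < q ∧ q ≤ n+2 ∧ p' = q-1 ∧ q' = p) ∨ (p' < q' ∧ q' ≤ n+2 ∧ p = q'-1 ∧ q = p')) :
    C.d n p (C.d (n+1) q x) = C.d n p' (C.d (n+1) q' x) := by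
  rcases h with ⟨h1, h2, rfl, rfl⟩ | ⟨h1, h2, rfl, rfl⟩
  · exact C.dd_ap _ _ _ h1 h2 x
  · exact (C.dd_ap _ _ _ h1 h2 x).symm
theorem ss_gen (n p q p' q' : ℕ) (x : C.X n)
    (h : (p ≤ q ∧ q ≤ n ∧ p' = q+1 ∧ q' = p) ∨ (p' ≤ q' ∧ q' ≤ n ∧ p = q'+1 ∧ q = p')) :
    C.s (n+1) p (C.s n q x) = C.s (n+1) p' (C.s n q' x) := by
  rcases h with ⟨h1, h2, rfl, rfl⟩ | ⟨h1, h2, rfl, rfl⟩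
  · exact C.ss_ap _ _ _ h1 h2 x
  · exact (C.ss_ap _ _ _ h1 h2 x).symm
theorem ds_gen (n p q p' q' : ℕ) (x : C.X (n+1))
    (h : (p < q ∧ q ≤ n+1 ∧ p' = q-1 ∧ q' = p) ∨ (q + 1 < p ∧ p ≤ n+2 ∧ p' = q ∧ q' = p-1)) :
    C.d (n+1) p (C.s (n+1) q x) = C.s n p' (C.d n q' x) := by
  rcases h with ⟨h1, h2, rfl, rfl⟩ | ⟨h1, h2, rfl, rfl⟩
  · exact C.ds_lt_ap _ _ _ h1 h2 x
  · exact C.ds_gt_ap _ _ _ h1 h2 x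
theorem ds_gen1 (n p q : ℕ) (x : C.X n) (hq : q ≤ n) (h : p = q ∨ p = q+1) :
    C.d n p (C.s n q x) = x := by
  rcases h with rfl | rfl
  · exact C.ds_eq_ap _ _ hq x
  · exact C.ds_eq_ap' _ _ hq x

/-- index maps for the free cyclic module on the decalage -/
def fda (n i a : ℕ) : ℕ := if a ≤ i then (if a = n+1 then 0 else a) else a - 1
def fdi (n i a : ℕ) : ℕ := if a ≤ i then i - a else n+2+i-a
def fsa (i a : ℕ) : ℕ := if a ≤ i then a else a+1
def fsi (n i a : ℕ) : ℕ := if a ≤ i then i - a else n+1+i-a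
def fta (n a : ℕ) : ℕ := if a = n then 0 else a+1

abbrev FdX (n : ℕ) : Type := Fin (n+1) → C.X (n+1)
def Fdd (n i : ℕ) : FdX C (n+1) →ₗ[ZMod 2] FdX C n :=
  bm (n+1) n (fda n i) (fun a => C.d (n+1) (fdi n i a))
def Fds (n i : ℕ) : FdX C n →ₗ[ZMod 2] FdX C (n+1) :=
  bm n (n+1) (fsa i) (fun a => C.s (n+1) (fsi n i a))
def Fdt (n : ℕ) : FdX C n →ₗ[ZMod 2] FdX C n :=
  bm n n (fta n) (fun _ => LinearMap.id)

theorem Fdd_s (n i a : ℕ) (ha : a ≤ n+1) (x : C.X (n+2)) :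
    Fdd C n i (sgl (C.X (n+2)) (n+1) a x) = sgl (C.X (n+1)) n (fda n i a) (C.d (n+1) (fdi n i a) x) :=
  bm_sgl _ _ _ _ _ ha _
theorem Fds_s (n i a : ℕ) (ha : a ≤ n) (x : C.X (n+1)) :
    Fds C n i (sgl (C.X (n+1)) n a x) = sgl (C.X (n+2)) (n+1) (fsa i a) (C.s (n+1) (fsi n i a) x) :=
  bm_sgl _ _ _ _ _ ha _
theorem Fdt_s (n a : ℕ) (ha : a ≤ n) (x : C.X (n+1)) :
    Fdt C n (sgl (C.X (n+1)) n a x) = sgl (C.X (n+1)) n (fta n a) x :=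
  bm_sgl _ _ _ _ _ ha _

theorem fda_le (n i a : ℕ) (ha : a ≤ n+1) : fda n i a ≤ n := by
  unfold fda; split_ifs <;> omega
theorem fsa_le (n i a : ℕ) (ha : a ≤ n) : fsa i a ≤ n+1 := by
  unfold fsa; split_ifs <;> omega
theorem fta_le (n a : ℕ) (ha : a ≤ n) : fta n a ≤ n := by
  unfold fta; split_ifs <;> omega

theorem sgl_congr {V : Type} [AddCommGroup V] [Module (ZMod 2) V] (n : ℕ) {a b : ℕ} {x y : V}
    (h : a = b) (h' : x = y) : sgl V n a x = sgl V n b y := by rw [h, h']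

theorem Fdt_pow (n a m : ℕ) (ha : a ≤ n) (hm : a + m ≤ n) (x : C.X (n+1)) :
    ((Fdt C n)^m) (sgl (C.X (n+1)) n a x) = sgl (C.X (n+1)) n (a+m) x := by
  induction m with
  | zero => rfl
  | succ m ih =>
    rw [pow_succ', Module.End.mul_apply, ih (by omega), Fdt_s C _ _ (by omega)]
    exact sgl_congr _ (by unfold fta; rw [if_neg (by omega)]; rfl) rfl

/-- free cyclic module on the decalage of `C` -/
def Fd : CycMod where
  X := FdX C
  d := Fdd C
  s := Fds C
  t := Fdt C
  dd n i j h hj := sgl_ext fun a ha x => by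
    simp only [LinearMap.comp_apply]
    rw [Fdd_s _ _ _ _ ha, Fdd_s _ _ _ _ (fda_le _ _ _ ha), Fdd_s _ _ _ _ ha,
      Fdd_s _ _ _ _ (fda_le _ _ _ ha)]
    refine sgl_congr _ ?_ (dd_gen C _ _ _ _ _ _ ?_)
    · unfold fda; grind
    · unfold fda fdi; grind
  ss n i j h hj := sgl_ext fun a ha x => by
    simp only [LinearMap.comp_apply]
    rw [Fds_s _ _ _ _ ha, Fds_s _ _ _ _ (fsa_le _ _ _ ha), Fds_s _ _ _ _ ha,
      Fds_s _ _ _ _ (fsa_le _ _ _ ha)]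
    refine sgl_congr _ ?_ (ss_gen C _ _ _ _ _ _ ?_)
    · unfold fsa; grind
    · unfold fsa fsi; grind
  ds_lt n i j h hj := sgl_ext fun a ha x => by
    simp only [LinearMap.comp_apply]
    rw [Fds_s _ _ _ _ ha, Fdd_s _ _ _ _ (fsa_le _ _ _ ha), Fdd_s _ _ _ _ ha,
      Fds_s _ _ _ _ (fda_le _ _ _ ha)]
    refine sgl_congr _ ?_ (ds_gen C _ _ _ _ _ _ ?_)
    · unfold fsa fda; grind
    · unfold fsa fsi fda fdi; grind
  ds_eq n j hj := ⟨sgl_ext fun a ha x => by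
    simp only [LinearMap.comp_apply, LinearMap.id_apply]
    rw [Fds_s _ _ _ _ ha, Fdd_s _ _ _ _ (fsa_le _ _ _ ha)]
    refine sgl_congr _ ?_ (ds_gen1 C _ _ _ _ ?_ ?_)
    · unfold fsa fda; grind
    · unfold fsi; grind
    · unfold fsa fsi fdi; grind, sgl_ext fun a ha x => by
    simp only [LinearMap.comp_apply, LinearMap.id_apply]
    rw [Fds_s _ _ _ _ ha, Fdd_s _ _ _ _ (fsa_le _ _ _ ha)]
    refine sgl_congr _ ?_ (ds_gen1 C _ _ _ _ ?_ ?_)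
    · unfold fsa fda; grind
    · unfold fsi; grind
    · unfold fsa fsi fdi; grind⟩
  ds_gt n i j h hj := sgl_ext fun a ha x => by
    simp only [LinearMap.comp_apply]
    rw [Fds_s _ _ _ _ ha, Fdd_s _ _ _ _ (fsa_le _ _ _ ha), Fdd_s _ _ _ _ ha,
      Fds_s _ _ _ _ (fda_le _ _ _ ha)]
    refine sgl_congr _ ?_ (ds_gen C _ _ _ _ _ _ ?_)
    · unfold fsa fda; grind
    · unfold fsa fsi fda fdi; grind
  t_ord n := sgl_ext fun a ha x => by
    have e0 : (Fdt C n)^(n+1) = (Fdt C n)^(a + (1 + (n - a))) := congrArg _ (by omega)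
    rw [e0, pow_add, pow_add, Module.End.mul_apply,
      Module.End.mul_apply, Fdt_pow C n a (n-a) ha (by omega), pow_one, Fdt_s C _ _ (by omega)]
    have e : fta n (a + (n-a)) = 0 := by unfold fta; grind
    rw [e, Fdt_pow C n 0 a (by omega) (by omega), zero_add]; rfl
  dt n i h hi := sgl_ext fun a ha x => by
    simp only [LinearMap.comp_apply]
    rw [Fdt_s _ _ _ ha, Fdd_s _ _ _ _ (fta_le _ _ ha), Fdd_s _ _ _ _ ha,
      Fdt_s _ _ _ (fda_le _ _ _ ha)]
    refine sgl_congr _ ?_ (congrArg (fun m => C.d (n+1) m x) ?_)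
    · unfold fta fda; grind
    · unfold fta fdi; grind
  d0t n := sgl_ext fun a ha x => by
    simp only [LinearMap.comp_apply]
    rw [Fdt_s _ _ _ ha, Fdd_s _ _ _ _ (fta_le _ _ ha), Fdd_s _ _ _ _ ha]
    refine sgl_congr _ ?_ (congrArg (fun m => C.d (n+1) m x) ?_)
    · unfold fta fda; grind
    · unfold fta fdi; grind
  st n i h hi := sgl_ext fun a ha x => by
    simp only [LinearMap.comp_apply]
    rw [Fdt_s _ _ _ ha, Fds_s _ _ _ _ (fta_le _ _ ha), Fds_s _ _ _ _ ha,
      Fdt_s _ _ _ (fsa_le _ _ _ ha)]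
    refine sgl_congr _ ?_ (congrArg (fun m => C.s (n+1) m x) ?_)
    · unfold fta fsa; grind
    · unfold fta fsi; grind
  s0t n := sgl_ext fun a ha x => by
    simp only [LinearMap.comp_apply]
    rw [Fdt_s _ _ _ ha, Fds_s _ _ _ _ (fta_le _ _ ha), Fds_s _ _ _ _ ha,
      Fdt_s _ _ _ (fsa_le _ _ _ ha), Fdt_s _ _ _ (fta_le _ _ (fsa_le _ _ _ ha))]
    refine sgl_congr _ ?_ (congrArg (fun m => C.s (n+1) m x) ?_)
    · unfold fta fsa; grind
    · unfold fta fsi; grind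

theorem s_tpow_le (n i m : ℕ) (hk : m ≤ i) (hi : i ≤ n) (x : C.X n) :
    C.s n i (((C.t n)^m) x) = ((C.t (n+1))^m) (C.s n (i-m) x) := by
  induction m generalizing i with
  | zero => simp
  | succ m ih =>
    rw [C.tpow_succ, C.st_ap n i (by omega) hi, ih (i-1) (by omega) (by omega), C.tpow_succ,
      show i - 1 - m = i - (m+1) by omega]

theorem s_tpow_gt (n i l : ℕ) (hk : i < l) (hk2 : l ≤ n+1) (x : C.X n) :
    C.s n i (((C.t n)^l) x) = ((C.t (n+1))^(l+1)) (C.s n (n+1+i-l) x) := by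
  obtain ⟨m, rfl⟩ : ∃ m, l = i + (m + 1) := ⟨l-i-1, by omega⟩
  rw [pow_add, Module.End.mul_apply, s_tpow_le _ n i i le_rfl (by omega), Nat.sub_self,
    C.tpow_succ, C.s0t_ap, s_tpow_le _ n n m (by omega) le_rfl, ← C.tpow_succ, ← C.tpow_succ,
    ← Module.End.mul_apply, ← pow_add]
  congr 2
  congr 1; omega

/-- the projection -/
def Fdπ0 (n : ℕ) : (Fin (n+1) → C.X (n+1)) →ₗ[ZMod 2] C.X n :=
  ∑ a : Fin (n+1), LinearMap.comp ((C.t n)^a.1)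
    ((C.d n (n+1)).comp (LinearMap.proj a : (Fin (n+1) → C.X (n+1)) →ₗ[ZMod 2] C.X (n+1)))
def Fdπ (n : ℕ) : (Fd C).X n →ₗ[ZMod 2] C.X n := Fdπ0 C n

theorem Fdπ_s (n a : ℕ) (ha : a ≤ n) (x : C.X (n+1)) :
    Fdπ C n (sgl (C.X (n+1)) n a x) = ((C.t n)^a) (C.d n (n+1) x) := by
  show Fdπ0 C n _ = _
  unfold Fdπ0
  rw [LinearMap.sum_apply, Finset.sum_eq_single (⟨a, by omega⟩ : Fin (n+1))]
  · simp [sgl_ap]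
  · intro b _ hb
    have : ¬ b.1 = a := fun e => hb (Fin.ext e)
    simp [sgl_ap, this]
  · simp

theorem Fdπ_surj (n : ℕ) : Function.Surjective (Fdπ C n) := fun y =>
  ⟨sgl (C.X (n+1)) n 0 (C.s n n y), by
    rw [Fdπ_s C n 0 (by omega), C.ds_eq_ap' n n le_rfl]; rfl⟩

theorem Fdπ_wh : WH (Fd C) C (Fdπ C) where
  d n i hi y := by
    suffices h : (Fdπ0 C n).comp (Fdd C n i) = (C.d n i).comp (Fdπ0 C (n+1)) from
      LinearMap.congr_fun h y
    refine sgl_ext fun a ha x => ?_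
    show Fdπ C n (Fdd C n i _) = C.d n i (Fdπ C (n+1) _)
    rw [Fdd_s C _ _ _ ha, Fdπ_s C _ _ (fda_le _ _ _ ha), Fdπ_s C _ _ ha]
    by_cases h : a ≤ i
    · have e1 : fdi n i a = i - a := if_pos h
      rw [C.d_tpow_le n i a h hi, e1, C.dd_ap n (i-a) (n+2) (by omega) le_rfl]
      by_cases h2 : a = n+1
      · have e2 : fda n i a = 0 := by unfold fda; grind
        rw [e2, h2, C.t_ord_ap]; rfl
      · have e2 : fda n i a = a := by unfold fda; grind
        rw [e2]; rfl
    · have e1 : fdi n i a = n+2+i-a := if_neg h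
      have e2 : fda n i a = a-1 := if_neg h
      rw [C.d_tpow_gt n i a (by omega) (by omega), e1, e2, C.dd_ap n (n+2+i-a) (n+2) (by omega) le_rfl]
      rfl
  s n i hi y := by
    suffices h : (Fdπ0 C (n+1)).comp (Fds C n i) = (C.s n i).comp (Fdπ0 C n) from
      LinearMap.congr_fun h y
    refine sgl_ext fun a ha x => ?_
    show Fdπ C (n+1) (Fds C n i _) = C.s n i (Fdπ C n _)
    rw [Fds_s C _ _ _ ha, Fdπ_s C _ _ (fsa_le _ _ _ ha), Fdπ_s C _ _ ha]
    by_cases h : a ≤ i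
    · have e1 : fsi n i a = i - a := if_pos h
      have e2 : fsa i a = a := if_pos h
      rw [s_tpow_le C n i a h hi, e1, e2, C.ds_gt_ap n (n+2) (i-a) (by omega) le_rfl]
      rfl
    · have e1 : fsi n i a = n+1+i-a := if_neg h
      have e2 : fsa i a = a+1 := if_neg h
      rw [s_tpow_gt C n i a (by omega) (by omega), e1, e2, C.ds_gt_ap n (n+2) (n+1+i-a) (by omega) le_rfl]
      rfl
  t n y := by
    suffices h : (Fdπ0 C n).comp (Fdt C n) = (C.t n).comp (Fdπ0 C n) from
      LinearMap.congr_fun h y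
    refine sgl_ext fun a ha x => ?_
    show Fdπ C n (Fdt C n _) = C.t n (Fdπ C n _)
    rw [Fdt_s C _ _ ha, Fdπ_s C _ _ (fta_le _ _ ha), Fdπ_s C _ _ ha, ← C.tpow_succ]
    by_cases h : a = n
    · have e2 : fta n a = 0 := if_pos h
      rw [e2, h, C.t_ord_ap]; rfl
    · have e2 : fta n a = a+1 := if_neg h
      rw [e2]
end Fd

section cochains
variable (E : CycMod) (V : Type) [AddCommGroup V] [Module (ZMod 2) V]
abbrev Co : Type := ∀ p q : ℕ, ℕ → (E.X q →ₗ[ZMod 2] V)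
end cochains

section cochains
variable {E : CycMod} {V : Type} [AddCommGroup V] [Module (ZMod 2) V]

def vpart (φ : ∀ _ q : ℕ, E.X q →ₗ[ZMod 2] V) (p : ℕ) : ∀ q : ℕ, E.X q →ₗ[ZMod 2] V
  | 0 => 0
  | (q+1) => (φ p q).comp (E.v p q)
def hpart (φ : ∀ _ q : ℕ, E.X q →ₗ[ZMod 2] V) : ∀ p q : ℕ, E.X q →ₗ[ZMod 2] V
  | 0, _ => 0
  | (p+1), q => (φ p q).comp (E.hh p q)
def dco (φ : ∀ _ q : ℕ, E.X q →ₗ[ZMod 2] V) (p q : ℕ) : E.X q →ₗ[ZMod 2] V :=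
  vpart φ p q + hpart φ p q

theorem dco_00 (φ : ∀ _ q : ℕ, E.X q →ₗ[ZMod 2] V) (x) : dco φ 0 0 x = 0 := by
  simp [dco, vpart, hpart]
theorem dco_0s (φ : ∀ _ q : ℕ, E.X q →ₗ[ZMod 2] V) (q x) : dco φ 0 (q+1) x = φ 0 q (E.bd q x) := by
  simp [dco, vpart, hpart, CycMod.v_zero]
theorem dco_s0 (φ : ∀ _ q : ℕ, E.X q →ₗ[ZMod 2] V) (p x) : dco φ (p+1) 0 x = φ p 0 (E.hh p 0 x) := by
  simp [dco, vpart, hpart]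
theorem dco_ss (φ : ∀ _ q : ℕ, E.X q →ₗ[ZMod 2] V) (p q x) :
    dco φ (p+1) (q+1) x = φ (p+1) q (E.v (p+1) q x) + φ p (q+1) (E.hh p (q+1) x) := by
  simp [dco, vpart, hpart]

theorem dco_dco (φ : ∀ _ q : ℕ, E.X q →ₗ[ZMod 2] V) (p q : ℕ) (x) : dco (dco φ) p q x = 0 := by
  rcases p with _ | p <;> rcases q with _ | q
  · exact dco_00 _ _
  · rw [dco_0s]
    cases q with
    | zero => exact dco_00 _ _
    | succ q => rw [dco_0s, CycMod.bd_bd, map_zero]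
  · rw [dco_s0]
    cases p with
    | zero => exact dco_00 _ _
    | succ p => rw [dco_s0, CycMod.hh_hh, map_zero]
  · rw [dco_ss]
    rcases p with _ | p <;> rcases q with _ | q
    · rw [dco_s0, dco_0s, ← E.v_zero, E.v_hh, add_self2]
    · rw [dco_ss, dco_0s, ← E.v_zero, E.v_hh, E.v_v, map_zero, zero_add, add_self2]
    · rw [dco_s0, dco_ss, E.v_hh, E.hh_hh, map_zero, add_zero, add_self2]
    · rw [dco_ss, dco_ss, E.v_hh, E.v_v, E.hh_hh, map_zero, map_zero, zero_add, add_zero, add_self2]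

theorem dco_add (φ ψ : ∀ _ q : ℕ, E.X q →ₗ[ZMod 2] V) (p q : ℕ) (x) :
    dco (fun p q => φ p q + ψ p q) p q x = dco φ p q x + dco ψ p q x := by
  rcases p with _ | p <;> rcases q with _ | q
  · simp [dco_00]
  · simp [dco_0s]
  · simp [dco_s0]
  · simp [dco_ss]; abel

def scoc (p q : ℕ) (χ : E.X q →ₗ[ZMod 2] V) : ∀ _ q : ℕ, E.X q →ₗ[ZMod 2] V :=
  Function.update (fun _ _ => 0) p (Function.update (fun _ => 0) q χ)
theorem scoc_same (p q : ℕ) (χ : E.X q →ₗ[ZMod 2] V) : scoc p q χ p q = χ := by simp [scoc]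
theorem scoc_ne (p q : ℕ) (χ : E.X q →ₗ[ZMod 2] V) (p' q' : ℕ) (h : p' ≠ p ∨ q' ≠ q) :
    scoc p q χ p' q' = 0 := by
  unfold scoc
  by_cases h1 : p' = p
  · subst h1
    have : q' ≠ q := by tauto
    simp [this]
  · simp [h1]

theorem dco_scoc_h (p q : ℕ) (χ : E.X q →ₗ[ZMod 2] V) (x) :
    dco (scoc p q χ) (p+1) q x = χ (E.hh p q x) := by
  cases q with
  | zero => rw [dco_s0, scoc_same]
  | succ q => rw [dco_ss, scoc_same, scoc_ne _ _ _ _ _ (by omega)]; simp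
theorem dco_scoc_0 (p q : ℕ) (χ : E.X q →ₗ[ZMod 2] V) (p' q' : ℕ)
    (h1 : ¬ (p' = p + 1 ∧ q' = q)) (h2 : ¬ (p' = p ∧ q' = q + 1)) (x) :
    dco (scoc p q χ) p' q' x = 0 := by
  rcases p' with _ | p' <;> rcases q' with _ | q'
  · exact dco_00 _ _
  · rw [dco_0s, scoc_ne _ _ _ _ _ (by omega)]; simp
  · rw [dco_s0, scoc_ne _ _ _ _ _ (by omega)]; simp
  · rw [dco_ss, scoc_ne _ _ _ _ _ (by omega), scoc_ne _ _ _ _ _ (by omega)]; simp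
end cochains

section Fdrow
variable (C : CycMod) {V : Type} [AddCommGroup V] [Module (ZMod 2) V]

def fs (n a : ℕ) : C.X (n+1) →ₗ[ZMod 2] (Fd C).X n := sgl (C.X (n+1)) n a
theorem fs_ext {n : ℕ} {f g : (Fd C).X n →ₗ[ZMod 2] V}
    (h : ∀ a, a ≤ n → ∀ x, f (fs C n a x) = g (fs C n a x)) : f = g := sgl_ext h
theorem fs_t (n a : ℕ) (ha : a < n) (x) : (Fd C).t n (fs C n a x) = fs C n (a+1) x := by
  have := Fdt_s C n a ha.le x
  rw [show fta n a = a + 1 from if_neg (by omega)] at this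
  exact this
theorem fs_t' (n : ℕ) (x) : (Fd C).t n (fs C n n x) = fs C n 0 x := by
  have := Fdt_s C n n le_rfl x
  rw [show fta n n = 0 from if_pos rfl] at this
  exact this
theorem fs_d (n i : ℕ) (x) : (Fd C).d n i (fs C (n+1) 0 x) = fs C n 0 (C.d (n+1) i x) := by
  have := Fdd_s C n i 0 (by omega) x
  rw [show fda n i 0 = 0 by simp [fda], show fdi n i 0 = i by simp [fdi]] at this
  exact this
theorem fs_tpow (n m : ℕ) (hm : m ≤ n) (x) : ((Fd C).t n ^ m) (fs C n 0 x) = fs C n m x := by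
  induction m with
  | zero => rfl
  | succ m ih => rw [CycMod.tpow_succ, ih (by omega), fs_t C n m (by omega)]
theorem fs_Nm (n : ℕ) (x) : (Fd C).Nm n (fs C n 0 x) = ∑ b ∈ Finset.range (n+1), fs C n b x := by
  rw [CycMod.Nm_ap]
  exact Finset.sum_congr rfl fun b hb => fs_tpow C n b (by rw [Finset.mem_range] at hb; omega) x
theorem fs_bd (n : ℕ) (x) : (Fd C).bd n (fs C (n+1) 0 x) =
    ∑ i ∈ Finset.range (n+2), fs C n 0 (C.d (n+1) i x) := by
  rw [CycMod.bd_ap]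
  exact Finset.sum_congr rfl fun b hb => fs_d C n b x

/-- invariant maps -/
def TInv (n : ℕ) (f : (Fd C).X n →ₗ[ZMod 2] V) : Prop := ∀ y, f (y + (Fd C).t n y) = 0

theorem TInv.eq {n : ℕ} {f : (Fd C).X n →ₗ[ZMod 2] V} (h : TInv C n f) (y) : f ((Fd C).t n y) = f y := by
  have := h y
  rw [map_add] at this
  exact (eq_of_add2 this).symm
theorem TInv.fs {n : ℕ} {f : (Fd C).X n →ₗ[ZMod 2] V} (h : TInv C n f) (a : ℕ) (ha : a ≤ n) (x) :
    f (fs C n a x) = f (fs C n 0 x) := by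
  induction a with
  | zero => rfl
  | succ a ih => rw [← fs_t C n a (by omega), h.eq, ih (by omega)]
theorem TInv.ext {n : ℕ} {f g : (Fd C).X n →ₗ[ZMod 2] V} (hf : TInv C n f) (hg : TInv C n g)
    (h : ∀ x, f (LT.fs C n 0 x) = g (LT.fs C n 0 x)) : f = g :=
  fs_ext C fun a ha x => by rw [hf.fs C a ha, hg.fs C a ha, h]

/-- linear map by components -/
def lm (n : ℕ) (B : ℕ → C.X (n+1) →ₗ[ZMod 2] V) : (Fd C).X n →ₗ[ZMod 2] V :=
  (∑ a : Fin (n+1), (B a.1).comp (LinearMap.proj a : (Fin (n+1) → C.X (n+1)) →ₗ[ZMod 2] C.X (n+1)) :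
    (Fin (n+1) → C.X (n+1)) →ₗ[ZMod 2] V)
theorem lm_fs (n : ℕ) (B : ℕ → C.X (n+1) →ₗ[ZMod 2] V) (a : ℕ) (ha : a ≤ n) (x) :
    lm C n B (fs C n a x) = B a x := by
  show (∑ a : Fin (n+1), (B a.1).comp (LinearMap.proj a : (Fin (n+1) → C.X (n+1)) →ₗ[ZMod 2] C.X (n+1)) :
    (Fin (n+1) → C.X (n+1)) →ₗ[ZMod 2] V) (sgl (C.X (n+1)) n a x) = _
  rw [LinearMap.sum_apply, Finset.sum_eq_single (⟨a, by omega⟩ : Fin (n+1))]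
  · simp [sgl_ap]
  · intro b _ hb
    have : ¬ b.1 = a := fun e => hb (Fin.ext e)
    simp [sgl_ap, this]
  · simp

theorem row_exact (p n : ℕ) (f : (Fd C).X n →ₗ[ZMod 2] V) (h : ∀ y, f ((Fd C).hh (p+1) n y) = 0) :
    ∃ χ : (Fd C).X n →ₗ[ZMod 2] V, ∀ y, χ ((Fd C).hh p n y) = f y := by
  by_cases hp : Even p
  · have hp1 : ¬ Even (p+1) := by simpa [Nat.even_add_one] using hp
    simp only [CycMod.hh, if_neg hp1, if_pos hp] at h ⊢
    refine ⟨lm C n fun a => ∑ b ∈ Finset.range a, f.comp (fs C n b), fun y => ?_⟩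
    suffices e : (lm C n fun a => ∑ b ∈ Finset.range a, f.comp (fs C n b)).comp
      (LinearMap.id + (Fd C).t n) = f from LinearMap.congr_fun e y
    refine fs_ext C fun a ha x => ?_
    simp only [LinearMap.comp_apply, LinearMap.add_apply, LinearMap.id_apply, map_add]
    rw [lm_fs C n _ a ha]
    rcases Nat.lt_or_ge a n with h1 | h1
    · rw [fs_t C n a h1, lm_fs C n _ (a+1) h1, Finset.sum_range_succ, LinearMap.add_apply,
        ← add_assoc, add_self2, zero_add]; rfl
    · obtain rfl : a = n := by omega
      rw [fs_t', lm_fs C a _ 0 (by omega), Finset.sum_range_zero, LinearMap.zero_apply, add_zero]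
      have := h (fs C a 0 x)
      rw [fs_Nm, map_sum, Finset.sum_range_succ] at this
      rw [LinearMap.sum_apply]
      exact eq_of_add2 this
  · have hp1 : Even (p+1) := by simpa [Nat.even_add_one] using hp
    simp only [CycMod.hh, if_pos hp1, if_neg hp] at h ⊢
    have hf : TInv C n f := h
    let χ := lm C n (fun a => if a = 0 then f.comp (fs C n 0) else 0)
    refine ⟨χ, fun y => ?_⟩
    suffices e : χ.comp ((Fd C).Nm n) = f from LinearMap.congr_fun e y
    refine TInv.ext C (fun y => ?_) hf fun x => ?_
    · rw [LinearMap.comp_apply, CycMod.Nm_t, map_zero]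
    · rw [LinearMap.comp_apply, fs_Nm, map_sum, Finset.sum_eq_single 0]
      · rw [lm_fs C n _ 0 (by omega), if_pos rfl]; rfl
      · intro b hb h0
        rw [lm_fs C n _ b (by rw [Finset.mem_range] at hb; omega), if_neg h0]; rfl
      · simp

theorem col_last (j : ℕ) (f : (Fd C).X (j+1) →ₗ[ZMod 2] V) (ht : TInv C (j+1) f)
    (hb : ∀ y, f ((Fd C).bd (j+1) y) = 0) :
    ∃ χ : (Fd C).X j →ₗ[ZMod 2] V, TInv C j χ ∧ ∀ y, χ ((Fd C).bd j y) = f y := by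
  let χ : (Fd C).X j →ₗ[ZMod 2] V := lm C j fun _ => (f.comp (fs C (j+1) 0)).comp (C.s (j+1) (j+1))
  have hχ : TInv C j χ := by
    intro y
    suffices e : χ.comp (LinearMap.id + (Fd C).t j) = 0 from LinearMap.congr_fun e y
    refine fs_ext C fun a ha x => ?_
    simp only [LinearMap.comp_apply, LinearMap.add_apply, LinearMap.id_apply, map_add, LinearMap.zero_apply]
    rw [lm_fs C j _ a ha]
    rcases Nat.lt_or_ge a j with h1 | h1
    · rw [fs_t C j a h1, lm_fs C j _ (a+1) h1, add_self2]
    · obtain rfl : a = j := by omega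
      rw [fs_t', lm_fs C a _ 0 (by omega), add_self2]
  refine ⟨χ, hχ, fun y => ?_⟩
  suffices e : χ.comp ((Fd C).bd j) = f from LinearMap.congr_fun e y
  refine TInv.ext C (fun y => ?_) ht fun x => ?_
  · have h1 := (Fd C).v_hh 0 j y
    simp only [CycMod.v_zero, CycMod.hh_zero, LinearMap.add_apply, LinearMap.id_apply] at h1
    rw [LinearMap.comp_apply, h1]
    exact hχ _
  · rw [LinearMap.comp_apply, fs_bd, map_sum]
    have h2 := hb (fs C (j+2) 0 (C.s (j+2) (j+2) x))
    rw [fs_bd, map_sum, Finset.sum_range_succ, C.ds_eq_ap _ _ le_rfl] at h2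
    rw [← eq_of_add2 h2]
    refine Finset.sum_congr rfl fun i hi => ?_
    rw [Finset.mem_range] at hi
    rw [lm_fs C j _ 0 (by omega), C.ds_lt_ap (j+1) i (j+2) hi (by omega)]
    rfl

theorem stair (j : ℕ) (φ : ∀ _ q : ℕ, (Fd C).X q →ₗ[ZMod 2] V)
    (h : ∀ p q, p + q = j + 2 → ∀ x, dco φ p q x = 0) (m : ℕ) (hm : m ≤ j + 1) :
    ∃ ψ : ∀ _ q : ℕ, (Fd C).X q →ₗ[ZMod 2] V,
      ∀ p q, p + q = j+1 → q < m → ∀ x, φ p q x + dco ψ p q x = 0 := by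
  induction m with
  | zero => exact ⟨fun _ _ => 0, fun p q _ h => absurd h (by omega)⟩
  | succ m ih =>
    obtain ⟨ψ, hψ⟩ := ih (by omega)
    obtain ⟨p, hp⟩ : ∃ p, p + 1 + m = j + 1 := ⟨j - m, by omega⟩
    have key : ∀ x, (φ (p+1) m + dco ψ (p+1) m) ((Fd C).hh (p+1) m x) = 0 := by
      intro x
      have h1 : dco (fun p q => φ p q + dco ψ p q) (p+2) m x = 0 := by
        rw [dco_add, dco_dco, h _ _ (by omega), add_zero]
      cases m with
      | zero => rwa [dco_s0] at h1
      | succ m =>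
        rw [dco_ss, LinearMap.add_apply, hψ _ _ (by omega) (by omega), zero_add] at h1
        exact h1
    obtain ⟨χ, hχ⟩ := row_exact C p m _ key
    refine ⟨fun a b => ψ a b + scoc p m χ a b, fun p' q' hpq hq x => ?_⟩
    rw [dco_add]
    rcases Nat.lt_or_ge q' m with h1 | h1
    · rw [dco_scoc_0 _ _ _ _ _ (by omega) (by omega), add_zero, hψ _ _ hpq h1]
    · obtain rfl : q' = m := by omega
      obtain rfl : p' = p + 1 := by omega
      rw [dco_scoc_h, hχ, LinearMap.add_apply, ← add_assoc, add_self2]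

theorem coc_vanish (j : ℕ) (φ : ∀ _ q : ℕ, (Fd C).X q →ₗ[ZMod 2] V)
    (h : ∀ p q, p + q = j + 2 → ∀ x, dco φ p q x = 0) :
    ∃ ψ : ∀ _ q : ℕ, (Fd C).X q →ₗ[ZMod 2] V, ∀ p q, p + q = j+1 → ∀ x, dco ψ p q x = φ p q x := by
  obtain ⟨ψ, hψ⟩ := stair C j φ h (j+1) le_rfl
  have h1 : ∀ p q, p + q = j + 2 → ∀ x, dco (fun p q => φ p q + dco ψ p q) p q x = 0 := by
    intro p q hpq x
    rw [dco_add, dco_dco, h _ _ hpq, add_zero]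
  obtain ⟨χ, hχ1, hχ2⟩ := col_last C j (φ 0 (j+1) + dco ψ 0 (j+1))
    (fun y => by
      have := h1 1 (j+1) (by omega) y
      rw [dco_ss, LinearMap.add_apply, hψ _ _ (by omega) (by omega), zero_add, CycMod.hh_zero] at this
      exact this)
    (fun y => by
      have := h1 0 (j+2) (by omega) y
      rwa [dco_0s] at this)
  refine ⟨fun a b => ψ a b + scoc 0 j χ a b, fun p q hpq x => ?_⟩
  rw [dco_add]
  rcases Nat.lt_or_ge q (j+1) with h2 | h2
  · have h3 : dco (scoc 0 j χ) p q x = 0 := by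
      by_cases hq : q = j
      · subst hq
        obtain rfl : p = 0 + 1 := by omega
        rw [dco_scoc_h, CycMod.hh_zero]; exact hχ1 x
      · exact dco_scoc_0 _ _ _ _ _ (by omega) (by omega) x
    rw [h3, add_zero]
    exact (eq_of_add2 (hψ _ _ hpq h2 x)).symm
  · obtain rfl : q = j+1 := by omega
    obtain rfl : p = 0 := by omega
    rw [dco_0s (scoc 0 j χ), scoc_same, hχ2, LinearMap.add_apply, add_comm, add_assoc, add_self2, add_zero]
end Fdrow

theorem dco_pull {E F : CycMod} {V : Type} [AddCommGroup V] [Module (ZMod 2) V]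
    {f : ∀ n, E.X n →ₗ[ZMod 2] F.X n} (hf : WH E F f)
    (φ : ∀ _ q : ℕ, F.X q →ₗ[ZMod 2] V) (p q : ℕ) (x : E.X q) :
    dco (fun p q => (φ p q).comp (f q)) p q x = dco φ p q (f q x) := by
  rcases p with _|p <;> rcases q with _|q
  · rw [dco_00, dco_00]
  · rw [dco_0s, dco_0s, ← hf.bd]; rfl
  · rw [dco_s0, dco_s0, ← hf.hh]; rfl
  · rw [dco_ss, dco_ss, ← hf.hh, ← hf.v]; rfl

theorem lin_section {X Y : Type} [AddCommGroup X] [Module (ZMod 2) X] [AddCommGroup Y]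
    [Module (ZMod 2) Y] (f : X →ₗ[ZMod 2] Y) (hf : Function.Surjective f) :
    ∃ σ : Y →ₗ[ZMod 2] X, ∀ y, f (σ y) = y := by
  obtain ⟨σ, hσ⟩ := f.exists_rightInverse_of_surjective (LinearMap.range_eq_top.2 hf)
  exact ⟨σ, fun y => LinearMap.congr_fun hσ y⟩

theorem lin_retract {X Y : Type} [AddCommGroup X] [Module (ZMod 2) X] [AddCommGroup Y]
    [Module (ZMod 2) Y] (f : X →ₗ[ZMod 2] Y) (hf : Function.Injective f) :
    ∃ r : Y →ₗ[ZMod 2] X, ∀ x, r (f x) = x := by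
  obtain ⟨σ, hσ⟩ := f.exists_leftInverse_of_injective (LinearMap.ker_eq_bot.2 hf)
  exact ⟨σ, fun y => LinearMap.congr_fun hσ y⟩

theorem cyc_of_inj {C D : CycMod} {f : ∀ n, C.X n →ₗ[ZMod 2] D.X n} (hf : WH C D f)
    (hi : ∀ n, Function.Injective (f n)) (n : ℕ) (x : C.X n) (h : f n x ∈ D.cyc n) :
    x ∈ C.cyc n := by
  cases n with
  | zero => trivial
  | succ n =>
    apply hi
    have : D.bd n (f (n+1) x) = 0 := h
    rw [hf.bd, this, map_zero]

theorem bd_cyc (C : CycMod) (n : ℕ) (x : C.X (n+1)) : C.bd n x ∈ C.cyc n := by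
  cases n with
  | zero => trivial
  | succ n => exact C.bd_bd n x

theorem les_step {A' I W : CycMod} {V : Type} [AddCommGroup V] [Module (ZMod 2) V] (j : ℕ)
    (ι : ∀ n, A'.X n →ₗ[ZMod 2] I.X n) (hι : WH A' I ι) (hi : ∀ n, Function.Injective (ι n))
    (ρ : ∀ n, I.X n →ₗ[ZMod 2] W.X n) (hρ : WH I W ρ) (hs : ∀ n, Function.Surjective (ρ n))
    (hk : ∀ n x, ρ n x = 0 ↔ ∃ a, ι n a = x)
    (hac : ∀ m, ∀ w ∈ I.cyc m, w ∈ LinearMap.range (I.bd m))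
    (hc : Conc A' j) (e' : A'.X j →ₗ[ZMod 2] V) (h1 : ∀ y, e' (A'.bd j y) = 0)
    (h2 : ∀ w ∈ A'.cyc j, e' w = 0 → w ∈ LinearMap.range (A'.bd j)) :
    Conc W (j+1) ∧ ∃ e : W.X (j+1) →ₗ[ZMod 2] V,
      (∀ y, e (W.bd (j+1) y) = 0) ∧
      (∀ w ∈ W.cyc (j+1), e w = 0 → w ∈ LinearMap.range (W.bd (j+1))) ∧
      (∀ y a, I.bd j y = ι j a → e (ρ (j+1) y) = e' a) := by
  have key : ∀ m (y : I.X (m+1)) a, I.bd m y = ι m a → a ∈ LinearMap.range (A'.bd m) →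
      ρ (m+1) y ∈ LinearMap.range (W.bd (m+1)) := by
    rintro m y a h ⟨b, rfl⟩
    obtain ⟨z, hz⟩ := hac (m+1) (y + ι (m+1) b) (by
      show I.bd m _ = 0
      rw [map_add, h, ← hι.bd, add_self2])
    refine ⟨ρ _ z, ?_⟩
    rw [← hρ.bd, hz, map_add, (hk _ (ι (m+1) b)).2 ⟨b, rfl⟩, add_zero]
  have lift : ∀ m (y : I.X (m+1)), ρ (m+1) y ∈ W.cyc (m+1) →
      ∃ a, ι m a = I.bd m y ∧ a ∈ A'.cyc m := by
    intro m y h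
    have h' : W.bd m (ρ (m+1) y) = 0 := h
    rw [← hρ.bd] at h'
    obtain ⟨a, ha⟩ := (hk _ _).1 h'
    exact ⟨a, ha, cyc_of_inj hι hi _ _ (by rw [ha]; exact bd_cyc _ _ _)⟩
  constructor
  · intro m hm w hw
    obtain ⟨y, rfl⟩ := hs _ w
    cases m with
    | zero =>
      obtain ⟨z, rfl⟩ := hac 0 y trivial
      exact ⟨ρ _ z, (hρ.bd _ _).symm⟩
    | succ m =>
      obtain ⟨a, ha, hac'⟩ := lift m y hw
      exact key m y a ha.symm (hc m (by omega) a hac')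
  · obtain ⟨r, hr⟩ := lin_retract (ι j) (hi j)
    obtain ⟨σ, hσ⟩ := lin_section (ρ (j+1)) (hs (j+1))
    have he : ∀ y a, I.bd j y = ι j a →
        (e'.comp (r.comp ((I.bd j).comp σ))) (ρ (j+1) y) = e' a := by
      intro y a h
      show e' (r (I.bd j (σ (ρ (j+1) y)))) = e' a
      obtain ⟨b, hb⟩ := (hk (j+1) (σ (ρ (j+1) y) + y)).1 (by rw [map_add, hσ, add_self2])
      have h3 : σ (ρ (j+1) y) = ι (j+1) b + y := by
        rw [hb, add_assoc, add_self2, add_zero]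
      rw [h3, map_add, h, ← hι.bd, map_add, hr, hr, map_add, h1, zero_add]
    refine ⟨e'.comp (r.comp ((I.bd j).comp σ)), ?_, ?_, he⟩
    · intro y
      obtain ⟨y, rfl⟩ := hs _ y
      rw [← hρ.bd, he _ 0 (by rw [I.bd_bd, map_zero]), map_zero]
    · intro w hw h0
      obtain ⟨y, rfl⟩ := hs _ w
      obtain ⟨a, ha, hac'⟩ := lift j y hw
      rw [he y a ha.symm] at h0
      exact key j y a ha.symm (h2 a hac' h0)

def TProp (j : ℕ) : Prop := ∀ (C : CycMod) (V : Type) [AddCommGroup V] [Module (ZMod 2) V]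
  (φ : ∀ _ q : ℕ, C.X q →ₗ[ZMod 2] V),
  (∀ p q, p + q = j + 1 → ∀ x, dco φ p q x = 0) →
  ∃ (W : CycMod) (u : ∀ n, C.X n →ₗ[ZMod 2] W.X n) (e : W.X j →ₗ[ZMod 2] V),
    WH C W u ∧ Conc W j ∧ (∀ y, e (W.bd j y) = 0) ∧
    (∀ w ∈ W.cyc j, e w = 0 → w ∈ LinearMap.range (W.bd j)) ∧
    (∀ x ∈ C.cyc j, e (u j x) = φ 0 j x)

theorem ker_closed {C D : CycMod} {f : ∀ n, C.X n →ₗ[ZMod 2] D.X n} (hf : WH C D f) :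
    Closed C (fun n => LinearMap.ker (f n)) where
  d n i h x hx := by
    have hx : f _ x = 0 := hx
    show f _ _ = 0
    rw [hf.d _ _ h, hx, map_zero]
  s n i h x hx := by
    have hx : f _ x = 0 := hx
    show f _ _ = 0
    rw [hf.s _ _ h, hx, map_zero]
  t n x hx := by
    have hx : f _ x = 0 := hx
    show f _ _ = 0
    rw [hf.t, hx, map_zero]

theorem range_closed {C D : CycMod} {f : ∀ n, C.X n →ₗ[ZMod 2] D.X n} (hf : WH C D f) :
    Closed D (fun n => LinearMap.range (f n)) where
  d n i h x hx := by
    obtain ⟨a, rfl⟩ := hx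
    exact ⟨C.d n i a, hf.d _ _ h _⟩
  s n i h x hx := by
    obtain ⟨a, rfl⟩ := hx
    exact ⟨C.s n i a, hf.s _ _ h _⟩
  t n x hx := by
    obtain ⟨a, rfl⟩ := hx
    exact ⟨C.t n a, hf.t _ _⟩

theorem WH.pair {C D E : CycMod} {f : ∀ n, C.X n →ₗ[ZMod 2] D.X n}
    {g : ∀ n, C.X n →ₗ[ZMod 2] E.X n} (hf : WH C D f) (hg : WH C E g) :
    WH C (prodC D E) (fun n => (pinl D E n).comp (f n) + (pinr D E n).comp (g n)) where
  d n i h x := by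
    simp only [LinearMap.add_apply, LinearMap.comp_apply, map_add]
    rw [hf.d _ _ h, hg.d _ _ h, (pinl_wh D E).d _ _ h, (pinr_wh D E).d _ _ h]
  s n i h x := by
    simp only [LinearMap.add_apply, LinearMap.comp_apply, map_add]
    rw [hf.s _ _ h, hg.s _ _ h, (pinl_wh D E).s _ _ h, (pinr_wh D E).s _ _ h]
  t n x := by
    simp only [LinearMap.add_apply, LinearMap.comp_apply, map_add]
    rw [hf.t, hg.t, (pinl_wh D E).t, (pinr_wh D E).t]

/-- descend along a surjection -/
theorem WH.desc {Q C W : CycMod} {π : ∀ n, Q.X n →ₗ[ZMod 2] C.X n} (hπ : WH Q C π)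
    (hs : ∀ n, Function.Surjective (π n)) {g : ∀ n, Q.X n →ₗ[ZMod 2] W.X n} (hg : WH Q W g)
    (hk : ∀ n x, π n x = 0 → g n x = 0) :
    ∃ u : ∀ n, C.X n →ₗ[ZMod 2] W.X n, WH C W u ∧ ∀ n x, u n (π n x) = g n x := by
  choose σ hσ using fun n => lin_section (π n) (hs n)
  have key : ∀ n x, ((g n).comp (σ n)) (π n x) = g n x := by
    intro n x
    apply eq_of_add2
    show g n (σ n (π n x)) + g n x = 0
    rw [← map_add]
    apply hk
    rw [map_add, hσ, add_self2]
  refine ⟨fun n => (g n).comp (σ n), ⟨?_, ?_, ?_⟩, key⟩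
  · intro n i h x
    obtain ⟨x, rfl⟩ := hs _ x
    rw [← hπ.d _ _ h, key, key, hg.d _ _ h]
  · intro n i h x
    obtain ⟨x, rfl⟩ := hs _ x
    rw [← hπ.s _ _ h, key, key, hg.s _ _ h]
  · intro n x
    obtain ⟨x, rfl⟩ := hs _ x
    rw [← hπ.t, key, key, hg.t]

theorem T_step (j : ℕ) (ih : TProp j) : TProp (j+1) := by
  intro C V _ _ φ hφ
  have hπ := Fdπ_wh C
  obtain ⟨ψ, hψ⟩ := coc_vanish C j (fun p q => (φ p q).comp (Fdπ C q)) (by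
    intro p q hpq x
    rw [dco_pull hπ, hφ _ _ hpq])
  have hK := ker_closed hπ
  have hKι := subι_wh (Fd C) _ hK
  obtain ⟨W', u', e', hu', hc', h1, h2, h3⟩ := ih (sub (Fd C) _ hK) V
    (fun p q => (ψ p q).comp (subι (Fd C) _ hK q)) (by
      intro p q hpq x
      rw [dco_pull hKι, hψ _ _ hpq]
      have := subι_mem (Fd C) _ hK q x
      show φ p q (Fdπ C q _) = 0
      rw [show Fdπ C q _ = 0 from this, map_zero])
  have hpair := hu'.pair hKι
  have hR := range_closed hpair
  set Pu := quot (prodC W' (Fd C)) _ hR with hPu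
  have hm := quotπ_wh (prodC W' (Fd C)) _ hR
  have hιw := (exC_wh Pu).comp (hm.comp (pinl_wh W' (Fd C)))
  have hιi : ∀ n, Function.Injective ((exC Pu n).comp
      ((quotπ (prodC W' (Fd C)) _ hR n).comp (pinl W' (Fd C) n))) := by
    intro n
    rw [injective_iff_map_eq_zero]
    intro w hw
    have hw1 : quotπ (prodC W' (Fd C)) _ hR n (pinl W' (Fd C) n w) = 0 :=
      exC_inj Pu n (by rw [map_zero]; exact hw)
    obtain ⟨c, hc⟩ := (quotπ_eq_zero _ _ hR n _).1 hw1
    have hc1 : u' n c = w := by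
      have := congrArg (pfst W' (Fd C) n) hc
      simpa [pfst_inl, pfst_inr] using this
    have hc2 : subι (Fd C) _ hK n c = 0 := by
      have := congrArg (psnd W' (Fd C) n) hc
      simpa [psnd_inl, psnd_inr] using this
    have hc3 : c = 0 := subι_inj (Fd C) _ hK n (by rw [hc2, map_zero])
    rw [← hc1, hc3, map_zero]
  have hRι := range_closed hιw
  have hρ := quotπ_wh (expo Pu) _ hRι
  obtain ⟨hcW, e, f1, f2, f3⟩ := les_step j _ hιw hιi _ hρ (quotπ_surj (expo Pu) _ hRι)
    (fun n x => quotπ_eq_zero (expo Pu) _ hRι n x) (expo_acyc Pu) hc' e' h1 h2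
  -- the relation in the pushout
  have rel : ∀ n c, quotπ (prodC W' (Fd C)) _ hR n (pinr W' (Fd C) n (subι (Fd C) _ hK n c)) =
      quotπ (prodC W' (Fd C)) _ hR n (pinl W' (Fd C) n (u' n c)) := by
    intro n c
    apply eq_of_add2
    rw [← map_add, add_comm]
    exact (quotπ_eq_zero _ _ hR n _).2 ⟨c, rfl⟩
  have hg := hρ.comp ((exC_wh Pu).comp (hm.comp (pinr_wh W' (Fd C))))
  obtain ⟨u, hu, huπ⟩ := hπ.desc (Fdπ_surj C) hg (by
    intro n x hx
    obtain ⟨c, hc⟩ : ∃ c, subι (Fd C) _ hK n c = x := ⟨subMk (Fd C) _ hK n x hx, rfl⟩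
    refine (quotπ_eq_zero (expo Pu) _ hRι n _).2 ⟨u' n c, ?_⟩
    have := rel n c
    rw [hc] at this
    exact congrArg (exC Pu n) this.symm)
  refine ⟨_, u, e, hu, hcW, f1, f2, ?_⟩
  intro x hx
  obtain ⟨q, rfl⟩ := Fdπ_surj C _ x
  have hb : Fdπ C j ((Fd C).bd j q) = 0 := by
    have h : C.bd j (Fdπ C (j+1) q) = 0 := hx
    rw [hπ.bd, h]
  rw [huπ]
  obtain ⟨c, hc⟩ : ∃ c, subι (Fd C) _ hK j c = (Fd C).bd j q := ⟨subMk (Fd C) _ hK j _ hb, rfl⟩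
  have hc0 : c ∈ (sub (Fd C) _ hK).cyc j :=
    cyc_of_inj hKι (subι_inj (Fd C) _ hK) _ _ (by rw [hc]; exact bd_cyc _ _ _)
  have e1 := f3 (((exC Pu (j+1)).comp ((quotπ (prodC W' (Fd C)) _ hR (j+1)).comp
    (pinr W' (Fd C) (j+1)))) q) (u' j c) (by
      refine (((exC_wh Pu).comp (hm.comp (pinr_wh W' (Fd C)))).bd j q).symm.trans ?_
      have := rel j c
      rw [hc] at this
      exact congrArg (exC Pu j) this)
  refine e1.trans ?_
  rw [h3 _ hc0]
  show ψ 0 j (subι (Fd C) _ hK j _) = _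
  rw [hc, ← dco_0s, hψ 0 (j+1) (by omega)]
  rfl

section base
variable (C : CycMod) {V : Type} [AddCommGroup V] [Module (ZMod 2) V] (φ : C.X 0 →ₗ[ZMod 2] V)

def baseU : ∀ n, C.X n →ₗ[ZMod 2] V
  | 0 => φ
  | (n+1) => (baseU n).comp (C.d n 0)

theorem baseU_d (h : ∀ x, φ (C.bd 0 x) = 0) (n : ℕ) : ∀ i, i ≤ n + 1 → ∀ x,
    baseU C φ n (C.d n i x) = baseU C φ (n+1) x := by
  induction n with
  | zero =>
    intro i hi x
    have h0 := h x
    rw [C.bd_ap] at h0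
    simp only [Finset.sum_range_succ, Finset.sum_range_zero, zero_add, map_add] at h0
    have h1 := eq_of_add2 h0
    interval_cases i
    · rfl
    · exact h1.symm
  | succ n ih =>
    intro i hi x
    rcases Nat.eq_zero_or_pos i with rfl | hp
    · rfl
    · show baseU C φ n (C.d n 0 (C.d (n+1) i x)) = _
      rw [C.dd_ap n 0 i hp hi, ih _ (by omega)]
      rfl

theorem baseU_wh (h : ∀ x, φ (C.bd 0 x) = 0) : WH C (constC V) (baseU C φ) where
  d n i hi x := baseU_d C φ h n i hi x
  s n i hi x := by
    refine (baseU_d C φ h n i (by omega) _).symm.trans ?_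
    rw [C.ds_eq_ap n i hi]; rfl
  t n x := by
    cases n with
    | zero =>
      have := C.t_ord_ap 0 x
      rw [zero_add, pow_one] at this
      rw [this]; rfl
    | succ n =>
      show baseU C φ n (C.d n 0 (C.t (n+1) x)) = baseU C φ (n+1) x
      rw [C.d0t_ap]
      exact baseU_d C φ h n _ le_rfl x
end base

theorem T_zero : TProp 0 := by
  intro C V _ _ φ hφ
  have h : ∀ x, φ 0 0 (C.bd 0 x) = 0 := fun x => by
    rw [← dco_0s]; exact hφ 0 1 rfl x
  refine ⟨constC V, baseU C (φ 0 0), (LinearMap.id : V →ₗ[ZMod 2] V), baseU_wh C _ h,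
    constC_conc V, ?_, ?_, ?_⟩
  · intro y
    exact (constC_bd V 0 y).trans (if_pos (by decide))
  · intro w _ hw
    have hw : w = 0 := hw
    rw [hw]; exact Submodule.zero_mem _
  · intro x _; rfl

theorem T_all (j : ℕ) : TProp j := by
  induction j with
  | zero => exact T_zero
  | succ j ih => exact T_step j ih

theorem DT_formula (C : CycMod) (p q : ℕ) (x : C.X q) :
    C.DT (DFinsupp.single (p, q) x) =
      (match p with
       | 0 => 0
       | p+1 => (DFinsupp.single (p, q) (C.hh p q x) : C.TT)) +
      (match q, x with
       | 0, _ => 0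
       | q+1, x => (DFinsupp.single (p, q) (C.v p q x) : C.TT)) := by
  have e : C.DT (DFinsupp.single (p, q) x) =
    (DFinsupp.lsum ℕ (fun pq : ℕ × ℕ =>
      match pq with
      | (0, _) => 0
      | (p + 1, q) =>
        (DFinsupp.lsingle (p, q)).comp
          (if Even p then LinearMap.id + C.t q
          else ∑ i ∈ Finset.range (q + 1), (C.t q) ^ i)) : C.TT →ₗ[ZMod 2] C.TT)
        (DFinsupp.single (p, q) x) +
    (DFinsupp.lsum ℕ (fun pq : ℕ × ℕ =>
      match pq with
      | (_, 0) => 0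
      | (p, q + 1) =>
        (DFinsupp.lsingle (p, q)).comp (if Even p then C.bd q else C.bd' q)) :
        C.TT →ₗ[ZMod 2] C.TT)
        (DFinsupp.single (p, q) x) := rfl
  rw [e]
  congr 1
  · rw [DFinsupp.lsum_single]
    cases p <;> rfl
  · rw [DFinsupp.lsum_single]
    cases q <;> rfl

/-- inclusion of a bidegree -/
def sngL (C : CycMod) (p q : ℕ) : C.X q →ₗ[ZMod 2] C.TT where
  toFun x := DFinsupp.single (p, q) x
  map_add' _ _ := DFinsupp.single_add _ _ _
  map_smul' _ _ := DFinsupp.single_smul _ _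

theorem sngL_ap (C : CycMod) (p q : ℕ) (x : C.X q) :
    sngL C p q x = DFinsupp.single (p, q) x := rfl

theorem dco_single (C : CycMod) {V : Type} [AddCommGroup V] [Module (ZMod 2) V]
    (L : C.TT →ₗ[ZMod 2] V) (p q : ℕ) (x : C.X q) :
    dco (fun p q => L.comp (sngL C p q)) p q x =
      L (C.DT (DFinsupp.single (p, q) x)) := by
  rw [DT_formula, map_add]
  rcases p with _|p <;> rcases q with _|q
  · rw [dco_00]; simp
  · rw [dco_0s, ← C.v_zero]; simp [sngL_ap]
  · rw [dco_s0]; simp [sngL_ap]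
  · rw [dco_ss]; simp [add_comm, sngL_ap]

/-- the class of a cycle -/
def clsL (C : CycMod) (j : ℕ) : C.cyc j →ₗ[ZMod 2] C.HHc j :=
  (Submodule.mkQ (Submodule.comap (C.cyc j).subtype (LinearMap.range (C.bd j))))

theorem clsL_zero (C : CycMod) (j : ℕ) (x : C.cyc j) :
    clsL C j x = 0 ↔ (x : C.X j) ∈ LinearMap.range (C.bd j) :=
  Submodule.Quotient.mk_eq_zero _

theorem clsL_surj (C : CycMod) (j : ℕ) : Function.Surjective (clsL C j) :=
  Submodule.mkQ_surjective _

theorem exists_cocycle (C : CycMod) (hI : C.Inj) (j : ℕ) :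
    ∃ φ : ∀ _ q : ℕ, C.X q →ₗ[ZMod 2] C.HHc j,
      (∀ p q x, dco φ p q x = 0) ∧ ∀ x : C.cyc j, φ 0 j x = clsL C j x := by
  let K := LinearMap.range C.DT
  let i0 : C.cyc j →ₗ[ZMod 2] (C.TT ⧸ K) :=
    K.mkQ.comp ((sngL C 0 j).comp (C.cyc j).subtype)
  have hi0 : ∀ x : C.cyc j, i0 x = 0 → (x : C.X j) ∈ LinearMap.range (C.bd j) := by
    intro x hx
    obtain ⟨Y, hY⟩ := (Submodule.Quotient.mk_eq_zero K).1 hx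
    have hY2 : C.DD (C.toCh Y) = C.sg 0 j x := by
      rw [← C.toCh_DT, hY]; exact C.toCh_single 0 j x
    let y : C.Ch := fun p q => if p + q = j + 1 then C.toCh Y p q else 0
    have hy : ∀ p q, p + q = j → C.DD y p q = C.sg 0 j x p q := by
      intro p q hpq
      rw [← hY2, C.DD_ap, C.DD_ap]
      have e1 : y p (q+1) = C.toCh Y p (q+1) := if_pos (by omega)
      have e2 : y (p+1) q = C.toCh Y (p+1) q := if_pos (by omega)
      rw [e1, e2]
    obtain ⟨z, hz⟩ := hI j y (fun p q h => if_neg h) (by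
      intro p q
      by_cases h : p + 1 + q = j
      · rw [hy _ _ h, C.sg_ne _ _ _ _ _ (by omega)]
      · rw [C.DD_ap]
        have e1 : y (p+1) (q+1) = 0 := if_neg (by omega)
        have e2 : y (p+1+1) q = 0 := if_neg (by omega)
        rw [e1, e2]; simp)
    exact ⟨z, by rw [hz, hy 0 j (by omega), C.sg_same]⟩
  have hi1 : ∀ x : C.cyc j, (x : C.X j) ∈ LinearMap.range (C.bd j) → i0 x = 0 := by
    rintro x ⟨z, hz⟩
    refine (Submodule.Quotient.mk_eq_zero K).2 ⟨DFinsupp.single (0, j+1) z, ?_⟩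
    rw [DT_formula]
    simp only [zero_add]
    rw [C.v_zero, hz]
    rfl
  let i1 : C.HHc j →ₗ[ZMod 2] (C.TT ⧸ K) :=
    Submodule.liftQ (Submodule.comap (C.cyc j).subtype (LinearMap.range (C.bd j))) i0
      (fun x hx => hi1 x hx)
  have hii : ∀ x, i1 (clsL C j x) = i0 x := fun x => rfl
  obtain ⟨r, hr⟩ := lin_retract i1 (by
    rw [injective_iff_map_eq_zero]
    intro a ha
    obtain ⟨x, rfl⟩ := clsL_surj C j a
    exact (clsL_zero C j x).2 (hi0 x ((hii x).symm.trans ha)))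
  refine ⟨fun p q => (r.comp K.mkQ).comp (sngL C p q),
    ?_, ?_⟩
  · intro p q x
    rw [dco_single]
    have : K.mkQ (C.DT (DFinsupp.single (p, q) x)) = 0 :=
      (Submodule.Quotient.mk_eq_zero K).2 ⟨_, rfl⟩
    rw [LinearMap.comp_apply, this, map_zero]
  · intro x
    exact hr (clsL C j x)

/-- The factor for degree `j`. -/
theorem exists_factor (C : CycMod) (hI : C.Inj) (j : ℕ) :
    ∃ (U : CycMod) (g : ∀ n, C.X n →ₗ[ZMod 2] U.X n), IsCycHom C U g ∧ Conc U j ∧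
      (∀ x ∈ C.cyc j, g j x ∈ LinearMap.range (U.bd j) → x ∈ LinearMap.range (C.bd j)) ∧
      (∀ y ∈ U.cyc j, ∃ x ∈ C.cyc j, g j x + y ∈ LinearMap.range (U.bd j)) := by
  obtain ⟨φ, hφ, hφ2⟩ := exists_cocycle C hI j
  obtain ⟨W, u, e, hu, hc, h1, h2, h3⟩ := T_all j C (C.HHc j) φ (fun p q _ => hφ p q)
  have hp := hu.pair (exC_wh C)
  set f : ∀ n, C.X n →ₗ[ZMod 2] (prodC W (expo C)).X n :=
    fun n => (pinl W (expo C) n).comp (u n) + (pinr W (expo C) n).comp (exC C n) with hf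
  have hf1 : ∀ n x, pfst W (expo C) n (f n x) = u n x := by
    intro n x; simp [hf, pfst_inl, pfst_inr]
  have hf2 : ∀ n x, psnd W (expo C) n (f n x) = exC C n x := by
    intro n x; simp [hf, psnd_inl, psnd_inr]
  have hfi : ∀ n, Function.Injective (f n) := by
    intro n x y hxy
    apply exC_inj C n
    rw [← hf2, ← hf2, hxy]
  choose r hr using fun n => lin_retract (f n) (hfi n)
  -- product: cycles are boundaries iff both components are
  have hprod : ∀ n (w : (prodC W (expo C)).X n), w ∈ (prodC W (expo C)).cyc n →
      pfst W (expo C) n w ∈ LinearMap.range (W.bd n) →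
      w ∈ LinearMap.range ((prodC W (expo C)).bd n) := by
    rintro n w hw ⟨a, ha⟩
    obtain ⟨b, hb⟩ := expo_acyc C n _ ((psnd_wh W (expo C)).cyc n w hw)
    refine ⟨pinl W (expo C) _ a + pinr W (expo C) _ b, ?_⟩
    rw [map_add, ← (pinl_wh W (expo C)).bd, ← (pinr_wh W (expo C)).bd, ha, hb]
    apply prod_ext
    · rw [map_add, pfst_inl, pfst_inr, add_zero]
    · rw [map_add, psnd_inl, psnd_inr, zero_add]
  have hA := rejι_wh (prodC W (expo C)) C f r
  have hB := rejι'_wh (prodC W (expo C)) C f r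
  have transfer : ∀ n (w : (rejunk (prodC W (expo C)) C f r).X n),
      w ∈ (rejunk (prodC W (expo C)) C f r).cyc n →
      pfst W (expo C) n (rejι (prodC W (expo C)) C f r n w) ∈ LinearMap.range (W.bd n) →
      w ∈ LinearMap.range ((rejunk (prodC W (expo C)) C f r).bd n) := by
    intro n w hw h
    obtain ⟨z, hz⟩ := hprod n _ (hA.cyc n w hw) h
    exact ⟨rejι' (prodC W (expo C)) C f r _ z, by rw [← hB.bd, hz]; rfl⟩
  have hhom := rej_hom (prodC W (expo C)) C f r hp hr
  refine ⟨rejunk (prodC W (expo C)) C f r, _, hhom, ?_, ?_, ?_⟩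
  · intro m hm w hw
    exact transfer m w hw (hc m hm _ ((pfst_wh W (expo C)).cyc m _ (hA.cyc m w hw)))
  · rintro x hx ⟨z, hz⟩
    have e1 : u j x = W.bd j (pfst W (expo C) _ (rejι (prodC W (expo C)) C f r _ z)) := by
      rw [← (pfst_wh W (expo C)).bd, ← hA.bd, hz]
      exact (hf1 j x).symm
    have e2 : clsL C j ⟨x, hx⟩ = 0 := by
      rw [← hφ2, ← h3 x hx, e1, h1]
    exact (clsL_zero C j ⟨x, hx⟩).1 e2
  · intro y hy
    have hy' := (pfst_wh W (expo C)).cyc j _ (hA.cyc j y hy)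
    obtain ⟨⟨x, hx⟩, hxe⟩ := clsL_surj C j (e (pfst W (expo C) j (rejι (prodC W (expo C)) C f r j y)))
    refine ⟨x, hx, transfer j _ ?_ ?_⟩
    · exact Submodule.add_mem _ (hhom.wh.cyc j x hx) hy
    · apply h2
      · exact (pfst_wh W (expo C)).cyc j _ (hA.cyc j _ (Submodule.add_mem _ (hhom.wh.cyc j x hx) hy))
      · rw [map_add, map_add, map_add]
        have e1 : pfst W (expo C) j (rejι (prodC W (expo C)) C f r j
          ((rejι' (prodC W (expo C)) C f r j ∘ₗ f j) x)) = u j x := hf1 j x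
        rw [e1, h3 x hx, ← hxe]
        exact add_eq_zero2 (hφ2 ⟨x, hx⟩)

theorem internal_pr {M : Type} [AddCommGroup M] [Module (ZMod 2) M] {kk : ℕ}
    (U : Fin (kk+1) → Submodule (ZMod 2) M) (h : DirectSum.IsInternal U) :
    ∃ pr : Fin (kk+1) → M →ₗ[ZMod 2] M, (∀ j x, pr j x ∈ U j) ∧ (∀ x, ∑ j, pr j x = x) ∧
      (∀ c : Fin (kk+1) → M, (∀ i, c i ∈ U i) → ∀ j, pr j (∑ i, c i) = c j) := by
  let e := LinearEquiv.ofBijective (DirectSum.coeLinearMap U) h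
  have he : ∀ c : Fin (kk+1) → M, ∀ hc : (∀ i, c i ∈ U i),
      e (∑ i, DirectSum.lof (ZMod 2) _ (fun i => U i) i ⟨c i, hc i⟩) = ∑ i, c i := by
    intro c hc
    rw [map_sum]
    refine Finset.sum_congr rfl fun i _ => ?_
    exact DirectSum.coeLinearMap_lof U i ⟨c i, hc i⟩
  have h3 : ∀ c : Fin (kk+1) → M, (∀ i, c i ∈ U i) → ∀ j,
      ((U j).subtype.comp ((DirectSum.component (ZMod 2) _ (fun i => U i) j).comp
        e.symm.toLinearMap)) (∑ i, c i) = c j := by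
    intro c hc j
    rw [← he c hc]
    simp only [LinearMap.comp_apply, LinearEquiv.coe_coe, LinearEquiv.symm_apply_apply, map_sum]
    rw [Finset.sum_eq_single j]
    · rw [DirectSum.component.lof_self]; rfl
    · intro b _ hb
      rw [DirectSum.component.of, dif_neg hb]; rfl
    · intro h; exact absurd (Finset.mem_univ j) h
  refine ⟨fun j => (U j).subtype.comp ((DirectSum.component (ZMod 2) _ (fun i => U i) j).comp
    e.symm.toLinearMap), ?_, ?_, h3⟩
  · intro j x
    exact Subtype.property _
  · intro x
    obtain ⟨v, rfl⟩ := e.surjective x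
    have : ∀ j, ((U j).subtype.comp ((DirectSum.component (ZMod 2) _ (fun i => U i) j).comp
        e.symm.toLinearMap)) (e v) = (v j : M) := by
      intro j
      simp only [LinearMap.comp_apply, LinearEquiv.coe_coe, LinearEquiv.symm_apply_apply]
      rfl
    simp only [this]
    have h2 := he (fun j => (v j : M)) (fun j => (v j).2)
    rw [← h2]
    congr 1
    refine DFinsupp.ext fun j => ?_
    have h4 : (∑ i, DirectSum.lof (ZMod 2) _ (fun i => U i) i (v i)) = v := by
      apply DirectSum.ext_component (ZMod 2)
      intro j
      rw [map_sum, Finset.sum_eq_single j]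
      · rw [DirectSum.component.lof_self]; rfl
      · intro b _ hb
        rw [DirectSum.component.of, dif_neg hb]
      · intro h; exact absurd (Finset.mem_univ j) h
    exact congrArg (fun w => w j) h4

theorem inj_of_split (S : CycMod) (kk : ℕ) (U : Fin (kk + 1) → ∀ n, Submodule (ZMod 2) (S.X n))
    (hd : ∀ j n i, ∀ x ∈ U j (n + 1), S.d n i x ∈ U j n)
    (hs : ∀ j n i, ∀ x ∈ U j n, S.s n i x ∈ U j (n + 1))
    (ht : ∀ j n, ∀ x ∈ U j n, S.t n x ∈ U j n)
    (hI : ∀ n, DirectSum.IsInternal (fun j => U j n))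
    (hc : ∀ j, ∃ n₀ : ℕ,
          ((0 : ℕ) ≠ n₀ → ∀ x ∈ U j 0, x ∈ Submodule.map (S.bd 0) (U j 1)) ∧
          (∀ m : ℕ, m + 1 ≠ n₀ → ∀ x ∈ U j (m + 1), S.bd m x = 0 →
            x ∈ Submodule.map (S.bd (m + 1)) (U j (m + 2)))) : S.Inj := by
  choose pr hp1 hp2 hp3 using fun n => internal_pr (fun j => U j n) (hI n)
  have hU : ∀ j, Closed S (U j) := fun j =>
    ⟨fun n i _ => hd j n i, fun n i _ => hs j n i, fun n => ht j n⟩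
  have comm : ∀ m n (f : S.X m →ₗ[ZMod 2] S.X n), (∀ j, ∀ x ∈ U j m, f x ∈ U j n) →
      ∀ j x, pr n j (f x) = f (pr m j x) := by
    intro m n f hf j x
    conv_lhs => rw [← hp2 m x, map_sum]
    exact hp3 n (fun i => f (pr m i x)) (fun i => hf i _ (hp1 m i x)) j
  have hsub : ∀ j, (sub S (U j) (hU j)).Inj := by
    intro j
    obtain ⟨n0, h0, h1⟩ := hc j
    have hw := subι_wh S (U j) (hU j)
    refine CycMod.conc_inj (n0 := n0) ?_
    intro m hm w hw'
    have hcyc := hw.cyc m w hw'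
    have hmem := subι_mem S (U j) (hU j) m w
    have : subι S (U j) (hU j) m w ∈ Submodule.map (S.bd m) (U j (m+1)) := by
      cases m with
      | zero => exact h0 hm _ hmem
      | succ m => exact h1 m hm _ hmem hcyc
    obtain ⟨z, hz, hze⟩ := this
    refine ⟨subMk S (U j) (hU j) _ z hz, subι_inj S (U j) (hU j) m ?_⟩
    rw [hw.bd, subι_mk, hze]
  let P : ∀ j n, S.X n →ₗ[ZMod 2] (sub S (U j) (hU j)).X n := fun j n =>
    LinearMap.codRestrict (U j n) (pr n j) (hp1 n j)
  have hP : ∀ j n x, subι S (U j) (hU j) n (P j n x) = pr n j x := fun _ _ _ => rfl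
  have hPw : ∀ j, WH S (sub S (U j) (hU j)) (P j) := by
    intro j
    have hw := subι_wh S (U j) (hU j)
    refine ⟨?_, ?_, ?_⟩
    · intro n i h x
      apply subι_inj
      rw [hw.d _ _ h, hP, hP]
      exact comm _ _ (S.d n i) (fun j => hd j n i) j x
    · intro n i h x
      apply subι_inj
      rw [hw.s _ _ h, hP, hP]
      exact comm _ _ (S.s n i) (fun j => hs j n i) j x
    · intro n x
      apply subι_inj
      rw [hw.t, hP, hP]
      exact comm _ _ (S.t n) (fun j => ht j n) j x
  intro n y hy hD
  choose z hz using fun j => hsub j n (fun p q => P j q (y p q))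
    (fun p q h => by rw [hy p q h, map_zero])
    (fun p q => by rw [← (hPw j).DD, hD, map_zero])
  refine ⟨∑ j, subι S (U j) (hU j) (n+1) (z j), ?_⟩
  rw [map_sum, ← hp2 n (S.DD y 0 n)]
  refine Finset.sum_congr rfl fun j _ => ?_
  rw [← (subι_wh S (U j) (hU j)).bd, hz, ← (hPw j).DD, hP]

theorem sub2 {M : Type} [AddCommGroup M] [Module (ZMod 2) M] (x y : M) : x - y = x + y := by
  rw [sub_eq_add_neg, neg_eq_of_add_eq_zero_left (add_self2 y)]

section split
variable {kk : ℕ} (D : Fin (kk+1) → CycMod)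

def compU (j : Fin (kk+1)) (n : ℕ) : Submodule (ZMod 2) ((piC D).X n) where
  carrier := {x | ∀ a, a ≠ j → piPr D a n x = 0}
  add_mem' := by
    intro x y hx hy a ha
    rw [map_add, hx a ha, hy a ha, add_zero]
  zero_mem' := by intro a _; exact map_zero _
  smul_mem' := by
    intro c x hx a ha
    rw [map_smul, hx a ha, smul_zero]

theorem mem_compU (j : Fin (kk+1)) (n : ℕ) (x : (piC D).X n) :
    x ∈ compU D j n ↔ ∀ a, a ≠ j → piPr D a n x = 0 := Iff.rfl

theorem compU_internal (n : ℕ) : DirectSum.IsInternal (fun j => compU D j n) := by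
  have key : ∀ a (v : DirectSum (Fin (kk+1)) (fun j => compU D j n)),
      piPr D a n (DirectSum.coeLinearMap (fun j => compU D j n) v) = piPr D a n (v a : (piC D).X n) := by
    intro a v
    have : (piPr D a n).comp (DirectSum.coeLinearMap (fun j => compU D j n)) =
        (piPr D a n).comp ((compU D a n).subtype.comp
          (DirectSum.component (ZMod 2) _ (fun j => compU D j n) a)) := by
      apply DirectSum.linearMap_ext
      intro i
      ext x
      simp only [LinearMap.comp_apply]
      rw [DirectSum.coeLinearMap_lof, DirectSum.component.of]
      split_ifs with h
      · subst h; rfl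
      · rw [(mem_compU D i n x).1 x.2 a (Ne.symm h)]; simp
    exact LinearMap.congr_fun this v
  constructor
  · have : Function.Injective (DirectSum.coeLinearMap (fun j => compU D j n)) := by
      rw [injective_iff_map_eq_zero]
      intro v hv
      refine DFinsupp.ext fun a => Subtype.ext (piC_ext D n _ _ fun b => ?_)
      by_cases h : b = a
      · subst h
        rw [← key, hv]; rfl
      · rw [(mem_compU D a n _).1 (v a).2 b h]; exact (map_zero _).symm
    exact this
  · have : Function.Surjective (DirectSum.coeLinearMap (fun j => compU D j n)) := by
      intro x
      refine ⟨DirectSum.mk (fun j => compU D j n) Finset.univ (fun a =>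
        ⟨piMk D n (Function.update 0 a.1 (piPr D a.1 n x)), ?_⟩), ?_⟩
      · intro b hb
        rw [piPr_mk, Function.update_of_ne hb]; rfl
      · refine piC_ext D n _ _ fun b => ?_
        rw [key, DirectSum.mk_apply_of_mem (Finset.mem_univ b), piPr_mk, Function.update_self]
    exact this

theorem compU_conc (j : Fin (kk+1)) (n0 : ℕ) (hc : Conc (D j) n0) (m : ℕ) (hm : m ≠ n0)
    (x : (piC D).X m) (hx : x ∈ compU D j m) (hcy : x ∈ (piC D).cyc m) :
    x ∈ Submodule.map ((piC D).bd m) (compU D j (m+1)) := by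
  obtain ⟨z, hz⟩ := hc m hm _ ((piPr_hom D j).wh.cyc m x hcy)
  refine ⟨piMk D (m+1) (Function.update 0 j z), ?_, ?_⟩
  · intro b hb
    rw [piPr_mk, Function.update_of_ne hb]; rfl
  · refine piC_ext D m _ _ fun b => ?_
    rw [(piPr_hom D b).wh.bd, piPr_mk]
    by_cases h : b = j
    · subst h; rw [Function.update_self, hz]
    · rw [Function.update_of_ne h, hx b h]; exact map_zero _
end split

theorem split_of_inj (C : CycMod) (hbdd : C.Bounded) (hI : C.Inj) :
    ∃ (S P : CycMod) (f : ∀ n, P.X n →ₗ[ZMod 2] C.X n)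
      (g : ∀ n, P.X n →ₗ[ZMod 2] S.X n),
      IsCycQIso P C f ∧ IsCycQIso P S g ∧
      ∃ (kk : ℕ) (U : Fin (kk + 1) → ∀ n, Submodule (ZMod 2) (S.X n)),
        (∀ j n i, ∀ x ∈ U j (n + 1), S.d n i x ∈ U j n) ∧
        (∀ j n i, ∀ x ∈ U j n, S.s n i x ∈ U j (n + 1)) ∧
        (∀ j n, ∀ x ∈ U j n, S.t n x ∈ U j n) ∧
        (∀ n, DirectSum.IsInternal (fun j => U j n)) ∧
        (∀ j, ∃ n₀ : ℕ,
          ((0 : ℕ) ≠ n₀ → ∀ x ∈ U j 0, x ∈ Submodule.map (S.bd 0) (U j 1)) ∧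
          (∀ m : ℕ, m + 1 ≠ n₀ → ∀ x ∈ U j (m + 1), S.bd m x = 0 →
            x ∈ Submodule.map (S.bd (m + 1)) (U j (m + 2)))) := by
  obtain ⟨kk, hkk⟩ := hbdd.bddAbove
  choose E g0 hg0 hc0 hi0 hs0 using fun j => exists_factor C hI j
  have hbig : ∀ n, kk < n → ∀ x ∈ C.cyc n, x ∈ LinearMap.range (C.bd n) := by
    intro n hn x hx
    refine (clsL_zero C n ⟨x, hx⟩).1 ?_
    by_contra hne
    have : n ≤ kk := hkk (show Nontrivial (C.HHc n) from ⟨_, _, hne⟩)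
    omega
  let D : Fin (kk+1) → CycMod := fun j => E j
  let g : ∀ n, C.X n →ₗ[ZMod 2] (piC D).X n := piLift D C (fun j => g0 j)
  have hg : IsCycHom C (piC D) g := by
    refine ⟨fun n i => LinearMap.ext fun x => ?_, fun n i => LinearMap.ext fun x => ?_,
      fun n => LinearMap.ext fun x => ?_⟩
    · exact piC_ext D _ _ _ fun a => LinearMap.congr_fun ((hg0 a).1 n i) x
    · exact piC_ext D _ _ _ fun a => LinearMap.congr_fun ((hg0 a).2.1 n i) x
    · exact piC_ext D _ _ _ fun a => LinearMap.congr_fun ((hg0 a).2.2 n) x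
  have hpg : ∀ a n x, piPr D a n (g n x) = g0 a n x := fun _ _ _ => rfl
  refine ⟨piC D, C, fun n => LinearMap.id, g, ⟨?_, ?_⟩, ⟨hg, ?_⟩, kk, compU D,
    ?_, ?_, ?_, compU_internal D, ?_⟩
  · exact ⟨fun _ _ => rfl, fun _ _ => rfl, fun _ => rfl⟩
  · rw [natQIso_iff]
    exact ⟨fun n x _ h => h, fun n y hy => ⟨y, hy, by simp⟩⟩
  · rw [natQIso_iff]
    constructor
    · rintro n x hx ⟨z, hz⟩
      by_cases hn : kk < n
      · exact hbig n hn x hx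
      · let a : Fin (kk+1) := ⟨n, by omega⟩
        refine hi0 n x hx ⟨piPr D a (n+1) z, ?_⟩
        have := (piPr_hom D a).wh.bd n z
        rw [hz] at this
        exact this.symm
    · intro n y hy
      obtain ⟨x, hx, hxy⟩ : ∃ x ∈ C.cyc n, ∀ h : n < kk + 1,
          g0 n n x + piPr D ⟨n, h⟩ n y ∈ LinearMap.range ((E n).bd n) := by
        by_cases hn : n < kk + 1
        · obtain ⟨x, hx, h⟩ := hs0 n (piPr D ⟨n, hn⟩ n y) ((piPr_hom D ⟨n, hn⟩).wh.cyc n y hy)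
          exact ⟨x, hx, fun _ => h⟩
        · exact ⟨0, Submodule.zero_mem _, fun h => absurd h hn⟩
      refine ⟨x, hx, ?_⟩
      rw [sub2]
      have hcy : g n x + y ∈ (piC D).cyc n := Submodule.add_mem _ (hg.wh.cyc n x hx) hy
      have : ∀ a, ∃ z, (D a).bd n z = piPr D a n (g n x + y) := by
        intro a
        by_cases ha : n = a.1
        · obtain ⟨a, ha'⟩ := a
          subst ha
          exact hxy ha'
        · exact hc0 a n ha _ ((piPr_hom D a).wh.cyc n _ hcy)
      choose z hz using this
      refine ⟨piMk D _ z, piC_ext D _ _ _ fun a => ?_⟩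
      rw [(piPr_hom D a).wh.bd, piPr_mk, hz]
  · intro j n i x hx a ha
    have := LinearMap.congr_fun ((piPr_hom D a).1 n i) x
    refine this.trans ?_
    rw [LinearMap.comp_apply, hx a ha, map_zero]
  · intro j n i x hx a ha
    have := LinearMap.congr_fun ((piPr_hom D a).2.1 n i) x
    refine this.trans ?_
    rw [LinearMap.comp_apply, hx a ha, map_zero]
  · intro j n x hx a ha
    have := LinearMap.congr_fun ((piPr_hom D a).2.2 n) x
    refine this.trans ?_
    rw [LinearMap.comp_apply, hx a ha, map_zero]
  · intro j
    refine ⟨j, ?_, ?_⟩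
    · intro h x hx
      exact compU_conc D j j (hc0 j) 0 h x hx trivial
    · intro m h x hx hb
      exact compU_conc D j j (hc0 j) (m+1) h x hx hb

theorem final_iff
    (C : CycMod) (hbdd : C.Bounded) :
    C.HdRdegenAt 1 ↔
    ∃ (S P : CycMod) (f : ∀ n, P.X n →ₗ[ZMod 2] C.X n)
      (g : ∀ n, P.X n →ₗ[ZMod 2] S.X n),
      IsCycQIso P C f ∧ IsCycQIso P S g ∧
      ∃ (kk : ℕ) (U : Fin (kk + 1) → ∀ n, Submodule (ZMod 2) (S.X n)),
        (∀ j n i, ∀ x ∈ U j (n + 1), S.d n i x ∈ U j n) ∧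
        (∀ j n i, ∀ x ∈ U j n, S.s n i x ∈ U j (n + 1)) ∧
        (∀ j n, ∀ x ∈ U j n, S.t n x ∈ U j n) ∧
        (∀ n, DirectSum.IsInternal (fun j => U j n)) ∧
        (∀ j, ∃ n₀ : ℕ,
          ((0 : ℕ) ≠ n₀ → ∀ x ∈ U j 0, x ∈ Submodule.map (S.bd 0) (U j 1)) ∧
          (∀ m : ℕ, m + 1 ≠ n₀ → ∀ x ∈ U j (m + 1), S.bd m x = 0 →
            x ∈ Submodule.map (S.bd (m + 1)) (U j (m + 2)))) := by
  constructor
  · intro h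
    exact split_of_inj C hbdd (C.inj_of_degen h)
  · rintro ⟨S, P, f, g, ⟨hf, hfq⟩, ⟨hg, hgq⟩, kk, U, hd, hs, ht, hI, hc⟩
    have hS := inj_of_split S kk U hd hs ht hI hc
    obtain ⟨hf1, hf2⟩ := (natQIso_iff _ _ _).1 hfq
    obtain ⟨hg1, hg2⟩ := (natQIso_iff _ _ _).1 hgq
    have hP : P.Inj := CycMod.inj_of_map hg.wh hg1 hS
    exact C.degen_of_inj (CycMod.inj_push hf.wh hf1 hf2 hP)

/-- **Proposition 3.23.** Let `𝓜` be a bounded cyclic module over `𝔽₂`. The Hodge-to-de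
Rham spectral sequence of `𝓜` collapses at `E¹` if and only if `𝓜` is quasi-isomorphic (in
the homotopy category of cyclic modules, via a span of quasi-isomorphisms) to a finite direct
sum `⊕ⱼ 𝒩ⱼ` of cyclic modules each having homology concentrated in a single degree (realized
as an internal direct sum decomposition of a cyclic module `S` into sub-cyclic-modules). -/
theorem hodge_to_de_rham_collapse_iff_split
    (C : CycMod) (hbdd : C.Bounded) :
    C.HdRdegenAt 1 ↔
    ∃ (S P : CycMod) (f : ∀ n, P.X n →ₗ[ZMod 2] C.X n)
      (g : ∀ n, P.X n →ₗ[ZMod 2] S.X n),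
      IsCycQIso P C f ∧ IsCycQIso P S g ∧
      ∃ (kk : ℕ) (U : Fin (kk + 1) → ∀ n, Submodule (ZMod 2) (S.X n)),
        (∀ j n i, ∀ x ∈ U j (n + 1), S.d n i x ∈ U j n) ∧
        (∀ j n i, ∀ x ∈ U j n, S.s n i x ∈ U j (n + 1)) ∧
        (∀ j n, ∀ x ∈ U j n, S.t n x ∈ U j n) ∧
        (∀ n, DirectSum.IsInternal (fun j => U j n)) ∧
        (∀ j, ∃ n₀ : ℕ,
          ((0 : ℕ) ≠ n₀ → ∀ x ∈ U j 0, x ∈ Submodule.map (S.bd 0) (U j 1)) ∧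
          (∀ m : ℕ, m + 1 ≠ n₀ → ∀ x ∈ U j (m + 1), S.bd m x = 0 →
            x ∈ Submodule.map (S.bd (m + 1)) (U j (m + 2)))) := by
  exact final_iff C hbdd
end LT
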